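/- arXiv:1809.05648 — 6 statements merged into one kernel-verified Lean document; each statement's English description precedes it below -/
import Mathlib

section
/- Let N ≥ 1, let 1 ≤ α ≤ 2, and let u₀ : ℝ^N → ℝ be a bounded measurable function with 0 ≤ u₀ ≤ 1 on ℝ^N such that the function x ↦ L_α(u₀(x)), with values in ℝ ∪ {-∞}, is concave on ℝ^N (i.e., L_α(u₀((1-μ)x+μy)) ≥ (1-μ)L_α(u₀(x)) + μ L_α(u₀(y)) for all x,y ∈ ℝ^N and μ ∈ [0,1]). Let u(x,t) = ∫_{ℝ^N} G(x-y,t) u₀(y) dy be the solution of the heat equation with initial datum u₀. Then for every t > 0 the function x ↦ L_α(u(x,t)) is concave on ℝ^N. -/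
open MeasureTheory Real

/-- `L_α(s) = -(-log s)^{1/α}` for `s > 0`, and `-∞` for `s ≤ 0`, as an `EReal`-valued
function. -/
noncomputable def Lfun (α : ℝ) (s : ℝ) : EReal :=
  if 0 < s then (((-((-Real.log s) ^ (1 / α))) : ℝ) : EReal) else ⊥

/-- Concavity of an `(ℝ ∪ {-∞})`-valued function on the whole space, with the conventions
`-∞ + a = -∞` and `-∞ ≥ -∞`. -/
def ERealConcaveOn {E : Type*} [AddCommGroup E] [Module ℝ E] (f : E → EReal) : Prop :=
  ∀ x y : E, ∀ μ : ℝ, 0 ≤ μ → μ ≤ 1 →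
    ((1 - μ : ℝ) : EReal) * f x + (μ : EReal) * f y ≤ f ((1 - μ) • x + μ • y)

/-- The Gauss kernel `G(x,t) = (4πt)^{-N/2} exp(-|x|²/(4t))`. -/
noncomputable def gauss (N : ℕ) (x : EuclideanSpace ℝ (Fin N)) (t : ℝ) : ℝ :=
  (4 * Real.pi * t) ^ (-(N : ℝ) / 2) * Real.exp (-‖x‖ ^ 2 / (4 * t))

/-- The heat semigroup `[e^{tΔ}u₀](x) = ∫ G(x-y,t) u₀(y) dy` on `ℝ^N`. -/
noncomputable def heatSol (N : ℕ) (u₀ : EuclideanSpace ℝ (Fin N) → ℝ) (t : ℝ)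
    (x : EuclideanSpace ℝ (Fin N)) : ℝ :=
  ∫ y, gauss N (x - y) t * u₀ y

/-- `u` is `α`-logconcave in `ℝ^N`: for all sufficiently small `κ > 0`, the function
`x ↦ L_α(κ u(x))` is concave as an `(ℝ ∪ {-∞})`-valued function. -/
def AlphaLogConcave {N : ℕ} (α : ℝ) (u : EuclideanSpace ℝ (Fin N) → ℝ) : Prop :=
  ∃ κ₀ : ℝ, 0 < κ₀ ∧ ∀ κ : ℝ, 0 < κ → κ ≤ κ₀ →
    ERealConcaveOn (fun x => Lfun α (κ * u x))

/-- `F : [0,1] → ℝ ∪ {-∞}` is admissible: strictly increasing and continuous on `(0,1]`,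
`F(0) = -∞`, and `F(s) ≠ -∞` for `s ∈ (0,1]`. -/
def Admissible (F : ℝ → EReal) : Prop :=
  StrictMonoOn F (Set.Ioc (0 : ℝ) 1) ∧ ContinuousOn F (Set.Ioc (0 : ℝ) 1) ∧
    F 0 = ⊥ ∧ ∀ s : ℝ, 0 < s → s ≤ 1 → F s ≠ ⊥

/-- `u` is `F`-concave in `ℝ^N`: for all sufficiently small `κ > 0`, one has
`0 ≤ κ u ≤ 1` and `x ↦ F(κ u(x))` is concave as an `(ℝ ∪ {-∞})`-valued function. -/
def FConcave {N : ℕ} (F : ℝ → EReal) (u : EuclideanSpace ℝ (Fin N) → ℝ) : Prop :=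
  ∃ κ₀ : ℝ, 0 < κ₀ ∧ ∀ κ : ℝ, 0 < κ → κ ≤ κ₀ →
    (∀ x, 0 ≤ κ * u x ∧ κ * u x ≤ 1) ∧
    ∀ x y : EuclideanSpace ℝ (Fin N), ∀ μ : ℝ, 0 ≤ μ → μ ≤ 1 →
      ((1 - μ : ℝ) : EReal) * F (κ * u x) + (μ : EReal) * F (κ * u y) ≤
        F (κ * u ((1 - μ) • x + μ • y))

/-- The zero extension of a function `u` on `Ω` to all of `ℝ^N`. -/
noncomputable def zeroExt {N : ℕ} (Ω : Set (EuclideanSpace ℝ (Fin N)))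
    (u : EuclideanSpace ℝ (Fin N) → ℝ) : EuclideanSpace ℝ (Fin N) → ℝ :=
  Ω.indicator u

/-- Concavity of an `(ℝ ∪ {-∞})`-valued function on a convex set `Ω`. -/
def ERealConcaveOnSet {E : Type*} [AddCommGroup E] [Module ℝ E]
    (Ω : Set E) (f : E → EReal) : Prop :=
  ∀ x ∈ Ω, ∀ y ∈ Ω, ∀ μ : ℝ, 0 ≤ μ → μ ≤ 1 →
    ((1 - μ : ℝ) : EReal) * f x + (μ : EReal) * f y ≤ f ((1 - μ) • x + μ • y)


abbrev EN (N : ℕ) := EuclideanSpace ℝ (Fin N)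

lemma integrable_gexp {N : ℕ} {b : ℝ} (hb : 0 < b) :
    Integrable (fun v : EN N => Real.exp (-b * ‖v‖ ^ 2)) := by
  by_contra h
  have h1 := integral_undef h
  have h2 := GaussianFourier.integral_rexp_neg_mul_sq_norm (V := EN N) hb
  rw [h1] at h2
  have : 0 < (π / b) ^ (Module.finrank ℝ (EN N) / 2 : ℝ) := by positivity
  linarith

noncomputable def KK (N : ℕ) (ξ : EN N) : ℝ := π ^ (-(N:ℝ)/2) * Real.exp (-‖ξ‖^2)

lemma KK_pos {N : ℕ} (ξ : EN N) : 0 < KK N ξ := by unfold KK; positivity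

lemma KK_int (N : ℕ) : Integrable (KK N) := by
  have := (integrable_gexp (N := N) one_pos).const_mul (π ^ (-(N:ℝ)/2))
  simp only [neg_mul, one_mul] at this
  exact this

lemma KK_cont (N : ℕ) : Continuous (KK N) := by unfold KK; fun_prop

lemma KK_one (N : ℕ) : ∫ ξ, KK N ξ = 1 := by
  have h2 := GaussianFourier.integral_rexp_neg_mul_sq_norm (V := EN N) one_pos
  simp only [KK, integral_const_mul]
  simp only [neg_mul, one_mul, div_one] at h2
  rw [h2, ← Real.rpow_add Real.pi_pos]
  simp [neg_div]

noncomputable def UU (N : ℕ) (v : EN N → ℝ) (t : ℝ) (x : EN N) : ℝ :=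
  ∫ ξ, KK N ξ * v (x - (2 * √t) • ξ)

lemma heat_eq_UU {N : ℕ} (v : EN N → ℝ) {t : ℝ} (ht : 0 < t) (x : EN N) :
    heatSol N v t x = UU N v t x := by
  unfold heatSol UU
  rw [← integral_sub_left_eq_self (fun y => gauss N (x - y) t * v y) volume x]
  have hR : 0 < 2 * √t := by positivity
  have := Measure.integral_comp_smul (volume : Measure (EN N))
    (fun z => gauss N z t * v (x - z)) (2 * √t)
  simp only [sub_sub_cancel]
  have h3 : ∫ z, gauss N z t * v (x - z) = (2 * √t)^N * ∫ ξ, gauss N ((2 * √t) • ξ) t * v (x - (2 * √t) • ξ) := by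
    rw [this]
    simp only [finrank_euclideanSpace, Fintype.card_fin, smul_eq_mul]
    rw [abs_of_pos (by positivity), ← mul_assoc, mul_inv_cancel₀ (by positivity), one_mul]
  rw [h3, ← integral_const_mul]
  congr 1
  ext ξ
  rw [← mul_assoc]
  congr 1
  unfold gauss KK
  rw [norm_smul, mul_pow ‖(2 * √t)‖, ← mul_assoc]
  congr 1
  · have h4 : (4 * π * t) = π * (2 * √t)^2 := by
      rw [mul_pow, Real.sq_sqrt ht.le]; ring
    rw [h4, Real.mul_rpow pi_pos.le (by positivity), mul_comm, mul_assoc]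
    rw [← Real.rpow_natCast _ 2, ← Real.rpow_natCast _ N, ← Real.rpow_mul hR.le, ← Real.rpow_add hR]
    have : (((2:ℕ):ℝ) * (-(N:ℝ)/2) + N) = 0 := by push_cast; ring
    rw [this]; simp
  · congr 1
    rw [Real.norm_of_nonneg hR.le, mul_pow 2, Real.sq_sqrt ht.le]
    field_simp
    ring

lemma UU_integrable {N : ℕ} {v : EN N → ℝ} (hm : Measurable v) (hb : ∀ x, |v x| ≤ 1) (t : ℝ)
    (x : EN N) : Integrable (fun ξ => KK N ξ * v (x - (2 * √t) • ξ)) := by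
  refine (KK_int N).mono' ?_ ?_
  · exact ((KK_cont N).measurable.mul (hm.comp (by fun_prop))).aestronglyMeasurable
  · refine Filter.Eventually.of_forall fun ξ => ?_
    rw [norm_mul, Real.norm_of_nonneg (KK_pos ξ).le]
    exact mul_le_of_le_one_right (KK_pos ξ).le (hb _)

lemma UU_le_one {N : ℕ} {v : EN N → ℝ} (hm : Measurable v) (h0 : ∀ x, 0 ≤ v x)
    (h1 : ∀ x, v x ≤ 1) (t : ℝ) (x : EN N) : UU N v t x ≤ 1 := by
  rw [← KK_one N]
  refine integral_mono (UU_integrable hm (fun x => by rw [abs_of_nonneg (h0 x)]; exact h1 x) t x) (KK_int N) fun ξ => ?_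
  exact mul_le_of_le_one_right (KK_pos ξ).le (h1 _)

lemma UU_nonneg {N : ℕ} {v : EN N → ℝ} (h0 : ∀ x, 0 ≤ v x)
    (t : ℝ) (x : EN N) : 0 ≤ UU N v t x :=
  integral_nonneg fun ξ => mul_nonneg (KK_pos ξ).le (h0 _)

lemma UU_pos {N : ℕ} {v : EN N → ℝ} (hm : Measurable v) (h0 : ∀ x, 0 < v x)
    (h1 : ∀ x, v x ≤ 1) (t : ℝ) (x : EN N) : 0 < UU N v t x := by
  unfold UU
  rw [integral_pos_iff_support_of_nonneg (fun ξ => (mul_pos (KK_pos ξ) (h0 _)).le)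
    (UU_integrable hm (fun x => by rw [abs_of_pos (h0 x)]; exact h1 x) t x)]
  have : (Function.support fun ξ => KK N ξ * v (x - (2 * √t) • ξ)) = Set.univ := by
    ext ξ; simpa using (mul_pos (KK_pos ξ) (h0 _)).ne'
  rw [this]
  exact isOpen_univ.measure_pos _ Set.univ_nonempty

lemma UU_zero {N : ℕ} (v : EN N → ℝ) (x : EN N) : UU N v 0 x = v x := by
  simp [UU, integral_mul_const, KK_one]

lemma UU_tendsto {N : ℕ} {ι : Type*} {l : Filter ι} [l.IsCountablyGenerated] {v : ι → EN N → ℝ}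
    (hm : ∀ i, Measurable (v i)) (hb : ∀ i x, |v i x| ≤ 1) (t : ι → ℝ) (x : ι → EN N) {F : EN N → ℝ}
    (h : ∀ᵐ ξ, Filter.Tendsto (fun i => v i (x i - (2 * √(t i)) • ξ)) l (nhds (F ξ))) :
    Filter.Tendsto (fun i => UU N (v i) (t i) (x i)) l (nhds (∫ ξ, KK N ξ * F ξ)) := by
  refine tendsto_integral_filter_of_dominated_convergence (KK N) ?_ ?_ (KK_int N) ?_
  · exact Filter.Eventually.of_forall fun i =>
      (UU_integrable (hm i) (hb i) (t i) (x i)).aestronglyMeasurable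
  · refine Filter.Eventually.of_forall fun i => Filter.Eventually.of_forall fun ξ => ?_
    rw [norm_mul, Real.norm_of_nonneg (KK_pos ξ).le]
    exact mul_le_of_le_one_right (KK_pos ξ).le (hb _ _)
  · filter_upwards [h] with ξ hξ using hξ.const_mul _

lemma UU_cont {N : ℕ} {v : EN N → ℝ} (hc : Continuous v) (hb : ∀ x, |v x| ≤ 1) :
    Continuous (fun p : ℝ × EN N => UU N v p.1 p.2) := by
  rw [continuous_iff_continuousAt]
  intro p
  refine UU_tendsto (l := nhds p) (fun _ => hc.measurable) (fun _ => hb) (fun q => q.1) (fun q => q.2)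
    (Filter.Eventually.of_forall fun ξ => ?_)
  have : Continuous (fun q : ℝ × EN N => v (q.2 - (2 * √q.1) • ξ)) := by fun_prop
  exact this.continuousAt

lemma UU_decay {N : ℕ} {v : EN N → ℝ} (hm : Measurable v) (hb : ∀ x, |v x| ≤ 1)
    (hd : Filter.Tendsto v (Filter.comap norm Filter.atTop) (nhds 0)) (T : ℝ) {ε : ℝ} (hε : 0 < ε) :
    ∃ R : ℝ, ∀ t ∈ Set.Icc 0 T, ∀ x : EN N, R ≤ ‖x‖ → UU N v t x < ε := by
  have := UU_tendsto (l := Filter.principal (Set.Icc 0 T) ×ˢ Filter.comap (norm : EN N → ℝ) Filter.atTop)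
    (v := fun _ => v) (fun _ => hm) (fun _ => hb) (fun q => q.1) (fun q => q.2) (F := fun _ => 0)
    (Filter.Eventually.of_forall fun ξ => ?_)
  · simp only [mul_zero, integral_zero] at this
    have h2 := this.eventually (gt_mem_nhds hε)
    rw [Filter.eventually_prod_iff] at h2
    obtain ⟨pa, hpa, pb, hpb, h⟩ := h2
    rw [Filter.eventually_principal] at hpa
    rw [Filter.eventually_comap, Filter.eventually_atTop] at hpb
    obtain ⟨R, hR⟩ := hpb
    exact ⟨R, fun t ht x hx => h (hpa t ht) (hR _ hx x rfl)⟩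
  · refine hd.comp ?_
    rw [Filter.tendsto_comap_iff]
    have h1 : Filter.Tendsto (fun q : ℝ × EN N => ‖q.2‖ - 2 * √T * ‖ξ‖)
      (Filter.principal (Set.Icc 0 T) ×ˢ Filter.comap (norm : EN N → ℝ) Filter.atTop) Filter.atTop := by
      apply Filter.tendsto_atTop_add_const_right
      exact Filter.tendsto_comap.comp Filter.tendsto_snd
    refine Filter.tendsto_atTop_mono' _ ?_ h1
    have h2 : ∀ᶠ q : ℝ × EN N in (Filter.principal (Set.Icc 0 T) ×ˢ Filter.comap (norm : EN N → ℝ) Filter.atTop), q.1 ∈ Set.Icc 0 T :=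
      Filter.tendsto_fst.eventually (Filter.mem_principal_self _)
    filter_upwards [h2] with q hq
    have h3 := norm_sub_norm_le q.2 ((2 * √q.1) • ξ)
    rw [norm_smul, Real.norm_of_nonneg (by positivity)] at h3
    have h4 : √q.1 ≤ √T := Real.sqrt_le_sqrt hq.2
    have h5 : 2 * √q.1 * ‖ξ‖ ≤ 2 * √T * ‖ξ‖ := by gcongr
    simp only [Function.comp]
    linarith

noncomputable def ee {N : ℕ} (i : Fin N) : EN N := EuclideanSpace.single i 1

lemma norm_add_ee {N : ℕ} (i : Fin N) (z : EN N) (s : ℝ) :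
    ‖z + s • ee i‖ ^ 2 = ‖z‖ ^ 2 + 2 * s * z i + s ^ 2 := by
  rw [norm_add_sq_real, norm_smul, inner_smul_right]
  simp [ee, EuclideanSpace.inner_single_right]
  ring

lemma coord_add_ee {N : ℕ} (i : Fin N) (z : EN N) (s : ℝ) : (z + s • ee i) i = z i + s := by
  simp [ee]

lemma coord_sq_le {N : ℕ} (i : Fin N) (z : EN N) : (z i) ^ 2 ≤ ‖z‖ ^ 2 := by
  have := EuclideanSpace.norm_sq_eq z
  rw [this]
  have h := Finset.single_le_sum (f := fun j => ‖z j‖ ^ 2) (fun j _ => by positivity) (Finset.mem_univ i)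
  simpa using h

lemma lin_exp_bound {A B b r : ℝ} (hA : 0 ≤ A) (hB : 0 ≤ B) (hb : 0 < b) (hr : 0 ≤ r) :
    (A * r + B) * Real.exp (-(2 * b) * r) ≤ (A / b + B) * Real.exp (-b * r) := by
  have h1 : b * r ≤ Real.exp (b * r) := by linarith [Real.add_one_le_exp (b * r)]
  have h1' : 1 ≤ Real.exp (b * r) := by rw [Real.one_le_exp_iff]; positivity
  have h2 : Real.exp (-b * r) = Real.exp (b * r) * Real.exp (-(2 * b) * r) := by
    rw [← Real.exp_add]; congr 1; ring
  rw [h2, ← mul_assoc]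
  refine mul_le_mul_of_nonneg_right ?_ (Real.exp_pos _).le
  have h3 : A * r ≤ A / b * Real.exp (b * r) := by
    calc A * r = A / b * (b * r) := by field_simp
      _ ≤ _ := by gcongr
  nlinarith

lemma spat {N : ℕ} {v : EN N → ℝ} (hm : Measurable v) (hb : ∀ x, |v x| ≤ 1) (i : Fin N)
    {q q' : EN N → ℝ} (hq : Continuous q) (hq' : Continuous q') {C b : ℝ} (hb0 : 0 < b)
    (hC : ∀ z, |q z| ≤ C * Real.exp (-b * ‖z‖ ^ 2))
    (hC' : ∀ z, |q' z| ≤ C * Real.exp (-b * ‖z‖ ^ 2))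
    (hd : ∀ z s, HasDerivAt (fun s : ℝ => q (z + s • ee i)) (q' (z + s • ee i)) s) (x : EN N) :
    Integrable (fun y => q' (x - y) * v y) ∧ 
    HasDerivAt (fun s : ℝ => ∫ y, q ((x + s • ee i) - y) * v y) (∫ y, q' (x - y) * v y) 0 := by
  have hC0 : 0 ≤ C := by
    have := (abs_nonneg _).trans (hC 0)
    exact nonneg_of_mul_nonneg_left this (Real.exp_pos _)
  have hs : Metric.ball (0:ℝ) 1 ∈ nhds (0:ℝ) := Metric.ball_mem_nhds _ one_pos
  have key := hasDerivAt_integral_of_dominated_loc_of_deriv_le (μ := (volume : Measure (EN N))) (𝕜 := ℝ)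
    (F := fun s y => q ((x + s • ee i) - y) * v y)
    (F' := fun s y => q' ((x + s • ee i) - y) * v y) (x₀ := 0) (s := Metric.ball 0 1)
    (bound := fun y => C * Real.exp b * Real.exp (-(b/2) * ‖x - y‖ ^ 2)) hs ?_ ?_ ?_ ?_ ?_ ?_
  · simpa using key
  · refine Filter.Eventually.of_forall fun s => ?_
    exact ((by fun_prop : Measurable fun y => q ((x + s • ee i) - y)).mul hm).aestronglyMeasurable
  · refine Integrable.mono' ((((integrable_gexp (N := N) hb0).comp_sub_left x)).const_mul C) ?_ ?_
    · exact ((by fun_prop : Measurable fun y => q ((x + (0:ℝ) • ee i) - y)).mul hm).aestronglyMeasurable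
    · refine Filter.Eventually.of_forall fun y => ?_
      simp only [zero_smul, add_zero, norm_mul, Real.norm_eq_abs]
      exact (mul_le_of_le_one_right (abs_nonneg _) (hb y)).trans (hC _)
  · exact ((by fun_prop : Measurable fun y => q' ((x + (0:ℝ) • ee i) - y)).mul hm).aestronglyMeasurable
  · refine Filter.Eventually.of_forall fun y s hs => ?_
    simp only [norm_mul, Real.norm_eq_abs]
    refine (mul_le_of_le_one_right (abs_nonneg _) (hb y)).trans ((hC' _).trans ?_)
    rw [mul_assoc, ← Real.exp_add]
    refine mul_le_mul_of_nonneg_left (Real.exp_le_exp.2 ?_) hC0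
    have e1 : x + s • ee i - y = (x - y) + s • ee i := by abel
    rw [e1, norm_add_ee]
    have h3 := coord_sq_le i (x - y)
    have h4 : s ^ 2 ≤ 1 := by
      rw [mem_ball_zero_iff, Real.norm_eq_abs] at hs
      exact (sq_le_one_iff_abs_le_one s).2 hs.le
    have h5 : ‖x - y‖ ^ 2 / 2 - 1 ≤ ‖x - y‖ ^ 2 + 2 * s * (x - y) i + s ^ 2 := by
      nlinarith [sq_nonneg ((x - y) i + 2 * s)]
    nlinarith
  · exact ((integrable_gexp (N := N) (half_pos hb0)).comp_sub_left x).const_mul _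
  · refine Filter.Eventually.of_forall fun y s hs => ?_
    have := (hd (x - y) s).mul_const (v y)
    have e1 : ∀ s : ℝ, x + s • ee i - y = (x - y) + s • ee i := fun s => by abel
    simpa only [e1] using this

noncomputable def g1 (N : ℕ) (t : ℝ) (i : Fin N) (z : EN N) : ℝ := -(z i) / (2 * t) * gauss N z t
noncomputable def g2 (N : ℕ) (t : ℝ) (i : Fin N) (z : EN N) : ℝ :=
  ((z i) ^ 2 / (4 * t ^ 2) - 1 / (2 * t)) * gauss N z t

noncomputable def D1 (N : ℕ) (v : EN N → ℝ) (t : ℝ) (i : Fin N) (x : EN N) : ℝ :=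
  ∫ y, g1 N t i (x - y) * v y
noncomputable def D2 (N : ℕ) (v : EN N → ℝ) (t : ℝ) (i : Fin N) (x : EN N) : ℝ :=
  ∫ y, g2 N t i (x - y) * v y

lemma gauss_deriv {N : ℕ} {t : ℝ} (ht : 0 < t) (i : Fin N) (z : EN N) (s : ℝ) :
    HasDerivAt (fun s : ℝ => gauss N (z + s • ee i) t) (g1 N t i (z + s • ee i)) s := by
  unfold g1 gauss
  simp only [norm_add_ee, coord_add_ee]
  have h1 : HasDerivAt (fun s : ℝ => -(‖z‖ ^ 2 + 2 * s * z i + s ^ 2) / (4 * t))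
      (-(2 * z i + 2 * s) / (4 * t)) s := by
    have a1 : HasDerivAt (fun s : ℝ => 2 * s * z i) (2 * z i) s := by
      simpa using ((hasDerivAt_id s).const_mul 2).mul_const (z i)
    have a2 : HasDerivAt (fun s : ℝ => s ^ 2) (2 * s) s := by simpa using hasDerivAt_pow 2 s
    exact (((a1.const_add _).add a2).neg).div_const _
  refine ((h1.exp).const_mul ((4 * π * t) ^ (-(N : ℝ) / 2))).congr_deriv ?_
  field_simp
  ring

lemma g1_deriv {N : ℕ} {t : ℝ} (ht : 0 < t) (i : Fin N) (z : EN N) (s : ℝ) :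
    HasDerivAt (fun s : ℝ => g1 N t i (z + s • ee i)) (g2 N t i (z + s • ee i)) s := by
  have h := gauss_deriv ht i z s
  have h2 : HasDerivAt (fun s : ℝ => -((z + s • ee i) i) / (2 * t)) (-1 / (2 * t)) s := by
    simp only [coord_add_ee]
    exact (((hasDerivAt_id s).const_add (z i)).neg).div_const _
  refine (h2.mul h).congr_deriv ?_
  unfold g2 g1
  field_simp
  ring

lemma gauss_bound {N : ℕ} {t : ℝ} (ht : 0 < t) (i : Fin N) : ∃ C : ℝ, ∀ z : EN N,
    |gauss N z t| ≤ C * Real.exp (-(1 / (8 * t)) * ‖z‖ ^ 2) ∧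
    |g1 N t i z| ≤ C * Real.exp (-(1 / (8 * t)) * ‖z‖ ^ 2) ∧
    |g2 N t i z| ≤ C * Real.exp (-(1 / (8 * t)) * ‖z‖ ^ 2) := by
  set A : ℝ := 1 / (4 * t ^ 2) + 1 / (2 * t) with hA
  set B : ℝ := 1 + 1 / (2 * t) with hB
  have hA0 : 0 ≤ A := by positivity
  have hB0 : 0 ≤ B := by positivity
  set c : ℝ := (4 * π * t) ^ (-(N : ℝ) / 2) with hc
  have hc0 : 0 ≤ c := by positivity
  refine ⟨c * (A / (1 / (8 * t)) + B), fun z => ?_⟩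
  have key := lin_exp_bound hA0 hB0 (b := 1 / (8 * t)) (by positivity) (sq_nonneg ‖z‖)
  have hg : gauss N z t = c * Real.exp (-(2 * (1 / (8 * t))) * ‖z‖ ^ 2) := by
    unfold gauss; congr 2; field_simp; ring
  have hgen : ∀ w : ℝ, |w| ≤ A * ‖z‖ ^ 2 + B →
      |w * gauss N z t| ≤ c * (A / (1 / (8 * t)) + B) * Real.exp (-(1 / (8 * t)) * ‖z‖ ^ 2) := by
    intro w hw
    rw [hg, abs_mul, abs_of_nonneg (mul_nonneg hc0 (Real.exp_pos _).le), mul_assoc c]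
    calc _ ≤ (A * ‖z‖ ^ 2 + B) * (c * Real.exp (-(2 * (1 / (8 * t))) * ‖z‖ ^ 2)) := by gcongr
      _ = c * ((A * ‖z‖ ^ 2 + B) * Real.exp (-(2 * (1 / (8 * t))) * ‖z‖ ^ 2)) := by ring
      _ ≤ _ := by gcongr
  have hz := coord_sq_le i z
  have p1 : 0 < 1 / (4 * t ^ 2) := by positivity
  have p2 : 0 < 1 / (2 * t) := by positivity
  have hzz := sq_nonneg ‖z‖
  have hzi := sq_nonneg (z i)
  refine ⟨?_, ?_, ?_⟩
  · have := hgen 1 (by rw [abs_one]; nlinarith)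
    simpa using this
  · refine hgen _ ?_
    have : -(z i) / (2 * t) = -(z i) * (1 / (2 * t)) := by ring
    rw [this, abs_mul, abs_of_pos p2, abs_neg]
    have : |z i| ≤ 1 + ‖z‖ ^ 2 := by
      rw [← sq_abs] at hz
      nlinarith [sq_nonneg (|z i| - 1), abs_nonneg (z i)]
    nlinarith
  · refine hgen _ ?_
    have : (z i) ^ 2 / (4 * t ^ 2) = (z i) ^ 2 * (1 / (4 * t ^ 2)) := by ring
    rw [this, abs_le]
    constructor <;> nlinarith

lemma gauss_cont {N : ℕ} (t : ℝ) : Continuous (fun z : EN N => gauss N z t) := by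
  unfold gauss; fun_prop
lemma g1_cont {N : ℕ} (t : ℝ) (i : Fin N) : Continuous (g1 N t i) := by
  have := gauss_cont (N := N) t
  unfold g1; fun_prop
lemma g2_cont {N : ℕ} (t : ℝ) (i : Fin N) : Continuous (g2 N t i) := by
  have := gauss_cont (N := N) t
  unfold g2; fun_prop

lemma shift_deriv {N : ℕ} {f f' : EN N → ℝ} {i : Fin N}
    (h : ∀ x, HasDerivAt (fun s : ℝ => f (x + s • ee i)) (f' x) 0) (x : EN N) (s : ℝ) :
    HasDerivAt (fun s : ℝ => f (x + s • ee i)) (f' (x + s • ee i)) s := by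
  have h1 := h (x + s • ee i)
  have h2 : HasDerivAt (fun r : ℝ => r - s) 1 s := (hasDerivAt_id s).sub_const s
  have h3 := HasDerivAt.scomp_of_eq (h := fun r : ℝ => r - s) s h1 h2 (by simp)
  simp only [one_smul, Function.comp_def] at h3
  convert! h3 using 3 with r
  rw [add_assoc, ← add_smul]; congr 2; ring

lemma heat_D1 {N : ℕ} {v : EN N → ℝ} (hm : Measurable v) (hb : ∀ x, |v x| ≤ 1) {t : ℝ} (ht : 0 < t)
    (i : Fin N) (x : EN N) (s : ℝ) :
    HasDerivAt (fun s : ℝ => heatSol N v t (x + s • ee i)) (D1 N v t i (x + s • ee i)) s := by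
  obtain ⟨C, hC⟩ := gauss_bound ht i
  exact shift_deriv (fun x => (spat hm hb i (gauss_cont t) (g1_cont t i) (by positivity)
    (fun z => (hC z).1) (fun z => (hC z).2.1) (gauss_deriv ht i) x).2) x s

lemma heat_D2 {N : ℕ} {v : EN N → ℝ} (hm : Measurable v) (hb : ∀ x, |v x| ≤ 1) {t : ℝ} (ht : 0 < t)
    (i : Fin N) (x : EN N) :
    Integrable (fun y => g2 N t i (x - y) * v y) ∧ ∀ s : ℝ, 
    HasDerivAt (fun s : ℝ => D1 N v t i (x + s • ee i)) (D2 N v t i (x + s • ee i)) s := by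
  obtain ⟨C, hC⟩ := gauss_bound ht i
  have := fun x => (spat hm hb i (g1_cont t i) (g2_cont t i) (by positivity)
    (fun z => (hC z).2.1) (fun z => (hC z).2.2) (g1_deriv ht i) x)
  exact ⟨(this x).1, shift_deriv (fun x => (this x).2) x⟩

lemma gauss_dt {N : ℕ} (z : EN N) {t : ℝ} (ht : 0 < t) :
    HasDerivAt (fun t => gauss N z t) ((‖z‖ ^ 2 / (4 * t ^ 2) - N / (2 * t)) * gauss N z t) t := by
  unfold gauss
  have h1 : HasDerivAt (fun t : ℝ => 4 * π * t) (4 * π) t := by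
    simpa using (hasDerivAt_id t).const_mul (4 * π)
  have h2 := h1.rpow_const (p := -(N : ℝ) / 2) (Or.inl (by positivity))
  have h3 : HasDerivAt (fun t : ℝ => -‖z‖ ^ 2 / (4 * t)) (‖z‖ ^ 2 / (4 * t ^ 2)) t := by
    have := ((hasDerivAt_id t).const_mul 4).inv (by simpa using ht.ne')
    have := this.const_mul (-‖z‖ ^ 2)
    convert! this using 1
    simp
    field_simp
  refine (h2.mul h3.exp).congr_deriv ?_
  rw [Real.rpow_sub (by positivity), Real.rpow_one]
  field_simp
  ring

lemma heat_dt {N : ℕ} {v : EN N → ℝ} (hm : Measurable v) (hb : ∀ x, |v x| ≤ 1) {t : ℝ} (ht : 0 < t)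
    (x : EN N) :
    HasDerivAt (fun t : ℝ => heatSol N v t x) (∑ i, D2 N v t i x) t := by
  have hsum : ∑ i, D2 N v t i x =
      ∫ y, (‖x - y‖ ^ 2 / (4 * t ^ 2) - N / (2 * t)) * gauss N (x - y) t * v y := by
    unfold D2
    rw [← integral_finsetSum _ (fun i _ => (heat_D2 hm hb ht i x).1)]
    congr 1
    ext y
    simp only [g2]
    rw [← Finset.sum_mul, ← Finset.sum_mul, EuclideanSpace.norm_sq_eq, Finset.sum_sub_distrib, ← Finset.sum_div]
    simp
    left; left; ring
  rw [hsum]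
  set A : ℝ := 1 / t ^ 2
  set B : ℝ := N / t
  set c : ℝ := (4 * π * (t / 2)) ^ (-(N : ℝ) / 2) with hc
  have hA0 : 0 ≤ A := by positivity
  have hB0 : 0 ≤ B := by positivity
  have hc0 : 0 ≤ c := by positivity
  have key := hasDerivAt_integral_of_dominated_loc_of_deriv_le (μ := (volume : Measure (EN N))) (𝕜 := ℝ)
    (F := fun t y => gauss N (x - y) t * v y)
    (F' := fun t y => (‖x - y‖ ^ 2 / (4 * t ^ 2) - N / (2 * t)) * gauss N (x - y) t * v y)
    (x₀ := t) (s := Set.Ioo (t/2) (2*t))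
    (bound := fun y => c * (A / (1 / (16 * t)) + B) * Real.exp (-(1 / (16 * t)) * ‖x - y‖ ^ 2))
    (Ioo_mem_nhds (by linarith) (by linarith)) ?_ ?_ ?_ ?_ ?_ ?_
  · exact key.2
  · refine Filter.Eventually.of_forall fun s => ?_
    have := gauss_cont (N := N) s
    exact ((by fun_prop : Measurable fun y => gauss N (x - y) s).mul hm).aestronglyMeasurable
  · have := gauss_cont (N := N) t
    refine Integrable.mono' (((((integrable_gexp (N := N) (b := 1 / (4 * t)) (by positivity)).comp_sub_left x)).const_mul ((4 * π * t) ^ (-(N : ℝ) / 2)))) ?_ ?_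
    · exact ((by fun_prop : Measurable fun y => gauss N (x - y) t).mul hm).aestronglyMeasurable
    · refine Filter.Eventually.of_forall fun y => ?_
      simp only [norm_mul, Real.norm_eq_abs]
      refine (mul_le_of_le_one_right (abs_nonneg _) (hb y)).trans ?_
      unfold gauss
      rw [abs_of_nonneg (by positivity)]
      refine le_of_eq ?_
      congr 2
      ring
  · have := gauss_cont (N := N) t
    exact ((by fun_prop : Measurable fun y => (‖x - y‖ ^ 2 / (4 * t ^ 2) - N / (2 * t)) * gauss N (x - y) t).mul hm).aestronglyMeasurable
  · refine Filter.Eventually.of_forall fun y s hs => ?_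
    have hs0 : 0 < s := by linarith [hs.1]
    rw [norm_mul, norm_mul]
    simp only [Real.norm_eq_abs]
    refine (mul_le_of_le_one_right (by positivity) (hb y)).trans ?_
    have key := lin_exp_bound hA0 hB0 (b := 1 / (16 * t)) (by positivity) (sq_nonneg ‖x - y‖)
    have hg0 : 0 ≤ gauss N (x - y) s := by unfold gauss; positivity
    have hg : gauss N (x - y) s ≤ c * Real.exp (-(2 * (1 / (16 * t))) * ‖x - y‖ ^ 2) := by
      unfold gauss
      refine mul_le_mul ?_ (Real.exp_le_exp.2 ?_) (Real.exp_pos _).le hc0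
      · refine Real.rpow_le_rpow_of_nonpos (by positivity) ?_ ?_
        · have := hs.1; gcongr
        · have : (0:ℝ) ≤ N := Nat.cast_nonneg N
          linarith
      · have : 1 / (8 * t) ≤ 1 / (4 * s) := by
          apply one_div_le_one_div_of_le <;> linarith [hs.2]
        have e : (2 * (1 / (16 * t))) = 1 / (8 * t) := by field_simp; norm_num
        have e2 : -‖x - y‖ ^ 2 / (4 * s) = -(1 / (4 * s)) * ‖x - y‖ ^ 2 := by ring
        rw [e, e2]
        nlinarith [sq_nonneg ‖x - y‖]
    have hw : |‖x - y‖ ^ 2 / (4 * s ^ 2) - N / (2 * s)| ≤ A * ‖x - y‖ ^ 2 + B := by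
      have q1 : ‖x - y‖ ^ 2 / (4 * s ^ 2) ≤ A * ‖x - y‖ ^ 2 := by
        have : 1 / (4 * s ^ 2) ≤ A := by
          apply one_div_le_one_div_of_le (by positivity)
          nlinarith [hs.1]
        calc _ = 1 / (4 * s ^ 2) * ‖x - y‖ ^ 2 := by ring
          _ ≤ _ := by gcongr
      have q2 : N / (2 * s) ≤ B := by
        apply div_le_div_of_nonneg_left (Nat.cast_nonneg N) ht
        linarith [hs.1]
      have q3 : 0 ≤ ‖x - y‖ ^ 2 / (4 * s ^ 2) := by positivity
      have q4 : 0 ≤ N / (2 * s) := by positivity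
      rw [abs_le]; constructor <;> linarith
    rw [abs_of_nonneg hg0]
    calc _ ≤ (A * ‖x - y‖ ^ 2 + B) * (c * Real.exp (-(2 * (1 / (16 * t))) * ‖x - y‖ ^ 2)) := by gcongr
      _ = c * ((A * ‖x - y‖ ^ 2 + B) * Real.exp (-(2 * (1 / (16 * t))) * ‖x - y‖ ^ 2)) := by ring
      _ ≤ c * ((A / (1 / (16 * t)) + B) * Real.exp (-(1 / (16 * t)) * ‖x - y‖ ^ 2)) := by gcongr
      _ = _ := by ring
  · exact ((integrable_gexp (N := N) (by positivity)).comp_sub_left x).const_mul _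
  · refine Filter.Eventually.of_forall fun y s hs => ?_
    exact (gauss_dt (x - y) (by linarith [hs.1])).mul_const (v y)

lemma second_test {f f' : ℝ → ℝ} {d : ℝ} (h : ∀ s, HasDerivAt f (f' s) s) (h' : HasDerivAt f' d 0)
    (hmin : ∀ s, f 0 ≤ f s) : 0 ≤ d := by
  by_contra hd
  push Not at hd
  have e : deriv f = f' := funext fun s => (h s).deriv
  have hm : IsLocalMin f 0 := Filter.Eventually.of_forall hmin
  have hM : IsLocalMax f 0 := by
    apply isLocalMax_of_deriv_deriv_neg
    · rw [e, h'.deriv]; exact hd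
    · exact hm.deriv_eq_zero
    · exact (h 0).continuousAt
  have hc : f =ᶠ[nhds 0] fun _ => f 0 := by
    filter_upwards [hM] with s hs
    exact le_antisymm hs (hmin s)
  have h2 : f' =ᶠ[nhds 0] fun _ => 0 := by
    rw [← e]
    simpa using hc.deriv
  have := h2.deriv_eq
  rw [h'.deriv] at this
  simp at this
  linarith

lemma log_second {A A1 : ℝ → ℝ} {A2 : ℝ} (hA : 0 < A 0) (h : HasDerivAt A (A1 0) 0)
    (h' : HasDerivAt A1 A2 0) : HasDerivAt (fun s => A1 s / A s) (A2 / A 0 - (A1 0 / A 0) ^ 2) 0 := by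
  refine (h'.div h hA.ne').congr_deriv ?_
  field_simp

lemma maxprin {N : ℕ} {v : EN N → ℝ} (hc : Continuous v) (h0 : ∀ x, 0 < v x) (h1 : ∀ x, v x ≤ 1)
    (hd : Filter.Tendsto v (Filter.comap norm Filter.atTop) (nhds 0))
    {a b p q : ℝ} (hab : a + b = 1) (hp : 0 < p) (hq : 0 < q)
    (hpq : a ^ 2 / p + b ^ 2 / q ≤ 1)
    (hyp : ∀ x y, p * Real.log (v x) + q * Real.log (v y) ≤ Real.log (v (a • x + b • y)))
    {T δ : ℝ} (hT : 0 < T) (hδ : 0 < δ) (x y : EN N) :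
    p * Real.log (UU N v T x) + q * Real.log (UU N v T y) ≤ Real.log (UU N v T (a • x + b • y) + δ) := by
  by_contra hcon
  push Not at hcon
  have hm := hc.measurable
  have hb : ∀ x, |v x| ≤ 1 := fun x => by rw [abs_of_pos (h0 x)]; exact h1 x
  have hUc := UU_cont hc hb
  have hUpos := UU_pos hm h0 h1
  have hUle := UU_le_one hm (fun x => (h0 x).le) h1
  obtain ⟨κ, hκ⟩ : ∃ κ, κ = p * Real.log (UU N v T x) + q * Real.log (UU N v T y) - Real.log (UU N v T (a • x + b • y) + δ) := ⟨_, rfl⟩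
  have hκ0 : 0 < κ := by linarith
  set ε := κ / (2 * T) with hε
  have hε0 : 0 < ε := by positivity
  let Φ : ℝ × EN N × EN N → ℝ := fun w =>
    Real.log (UU N v w.1 (a • w.2.1 + b • w.2.2) + δ) - p * Real.log (UU N v w.1 w.2.1)
      - q * Real.log (UU N v w.1 w.2.2) + ε * w.1
  have hΦc : Continuous Φ := by
    have c1 : Continuous fun w : ℝ × EN N × EN N => UU N v w.1 (a • w.2.1 + b • w.2.2) :=
      hUc.comp (f := fun w : ℝ × EN N × EN N => (w.1, a • w.2.1 + b • w.2.2)) (by fun_prop)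
    have c2 : Continuous fun w : ℝ × EN N × EN N => UU N v w.1 w.2.1 :=
      hUc.comp (f := fun w : ℝ × EN N × EN N => (w.1, w.2.1)) (by fun_prop)
    have c3 : Continuous fun w : ℝ × EN N × EN N => UU N v w.1 w.2.2 :=
      hUc.comp (f := fun w : ℝ × EN N × EN N => (w.1, w.2.2)) (by fun_prop)
    have l1 := (c1.add_const δ).log (fun w => (add_pos (hUpos _ _) hδ).ne')
    have l2 := c2.log (fun w => (hUpos _ _).ne')
    have l3 := c3.log (fun w => (hUpos _ _).ne')
    exact ((l1.sub (l2.const_mul p)).sub (l3.const_mul q)).add (continuous_const.mul continuous_fst)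
  have hlogδ : ∀ t z, Real.log δ ≤ Real.log (UU N v t z + δ) := fun t z =>
    Real.log_le_log hδ (by linarith [hUpos t z])
  have hlognp : ∀ t z, Real.log (UU N v t z) ≤ 0 := fun t z =>
    Real.log_nonpos (hUpos t z).le (hUle t z)
  obtain ⟨R1, hR1⟩ := UU_decay hm hb hd T (Real.exp_pos (Real.log δ / p))
  obtain ⟨R2, hR2⟩ := UU_decay hm hb hd T (Real.exp_pos (Real.log δ / q))
  have hlarge : ∀ (r : ℝ) (t : ℝ) (z : EN N), 0 < r → UU N v t z < Real.exp (Real.log δ / r) →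
      r * Real.log (UU N v t z) ≤ Real.log δ := by
    intro r t z hr h
    have := (Real.log_lt_log (hUpos t z) h).le
    rw [Real.log_exp, le_div_iff₀ hr] at this
    linarith
  set R := max R1 R2
  have hout : ∀ t ∈ Set.Icc 0 T, ∀ x y : EN N, (R ≤ ‖x‖ ∨ R ≤ ‖y‖) → 0 ≤ Φ (t, x, y) := by
    intro t ht x y hxy
    have e1 := hlogδ t (a • x + b • y)
    have e2 := hlognp t x
    have e3 := hlognp t y
    have e4 : 0 ≤ ε * t := mul_nonneg hε0.le ht.1
    have e5 : p * Real.log (UU N v t x) ≤ 0 := mul_nonpos_of_nonneg_of_nonpos hp.le e2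
    have e6 : q * Real.log (UU N v t y) ≤ 0 := mul_nonpos_of_nonneg_of_nonpos hq.le e3
    simp only [Φ]
    rcases hxy with h | h
    · have := hlarge p t x hp (hR1 t ht x ((le_max_left _ _).trans h))
      linarith
    · have := hlarge q t y hq (hR2 t ht y ((le_max_right _ _).trans h))
      linarith
  have hneg : Φ (T, x, y) < 0 := by
    have : ε * T = κ / 2 := by rw [hε]; field_simp
    simp only [Φ]
    linarith
  have hxyR : ‖x‖ < R ∧ ‖y‖ < R := by
    constructor <;> by_contra h <;> push Not at h
    · linarith [hout T ⟨hT.le, le_rfl⟩ x y (Or.inl h)]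
    · linarith [hout T ⟨hT.le, le_rfl⟩ x y (Or.inr h)]
  let S : Set (ℝ × EN N × EN N) := Set.Icc 0 T ×ˢ Metric.closedBall 0 R ×ˢ Metric.closedBall 0 R
  have hS : IsCompact S := isCompact_Icc.prod ((isCompact_closedBall _ _).prod (isCompact_closedBall _ _))
  have hmem : (T, x, y) ∈ S := by
    refine ⟨⟨hT.le, le_rfl⟩, ?_, ?_⟩
    · simpa using hxyR.1.le
    · simpa using hxyR.2.le
  obtain ⟨⟨t0, x0, y0⟩, hw, hmin⟩ := hS.exists_isMinOn ⟨_, hmem⟩ hΦc.continuousOn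
  have hneg0 : Φ (t0, x0, y0) < 0 := lt_of_le_of_lt (hmin hmem) hneg
  have hglob : ∀ t ∈ Set.Icc 0 T, ∀ x y : EN N, Φ (t0, x0, y0) ≤ Φ (t, x, y) := by
    intro t ht x y
    by_cases h : R ≤ ‖x‖ ∨ R ≤ ‖y‖
    · exact hneg0.le.trans (hout t ht x y h)
    · push Not at h
      refine hmin ⟨ht, ?_, ?_⟩
      · simpa using h.1.le
      · simpa using h.2.le
  have ht0 : t0 ∈ Set.Icc 0 T := hw.1
  have ht0pos : 0 < t0 := by
    rcases ht0.1.eq_or_lt with h | h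
    · exfalso
      rw [← h] at hneg0
      simp only [Φ, UU_zero] at hneg0
      have := hyp x0 y0
      have h3 : Real.log (v (a • x0 + b • y0)) ≤ Real.log (v (a • x0 + b • y0) + δ) :=
        Real.log_le_log (h0 _) (by linarith)
      linarith
    · exact h
  set z0 := a • x0 + b • y0 with hz0
  have hU : ∀ w, heatSol N v t0 w = UU N v t0 w := heat_eq_UU v ht0pos
  have hHp : ∀ w, 0 < heatSol N v t0 w := fun w => by rw [hU]; exact hUpos _ _
  set H := heatSol N v t0 z0 + δ with hH
  set F := heatSol N v t0 x0 with hF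
  set G := heatSol N v t0 y0 with hG
  have hH0 : 0 < H := add_pos (hHp _) hδ
  have hF0 : 0 < F := hHp _
  have hG0 : 0 < G := hHp _
  have d1 := fun i w s => heat_D1 hm hb ht0pos i w s
  have d2 := fun i w s => (heat_D2 hm hb ht0pos i w).2 s
  -- first order in x
  have fx : ∀ i, a * (D1 N v t0 i z0 / H) = p * (D1 N v t0 i x0 / F) := by
    intro i
    have k1 : HasDerivAt (fun s : ℝ => heatSol N v t0 (z0 + (a * s) • ee i) + δ) (D1 N v t0 i z0 * a) 0 := by
      have e1 := d1 i z0 0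
      have e2 : HasDerivAt (fun s : ℝ => a * s) a 0 := by simpa using (hasDerivAt_id (0:ℝ)).const_mul a
      have := (HasDerivAt.comp_of_eq (h := fun s : ℝ => a * s) 0 e1 e2 (by simp)).add_const δ
      simpa [Function.comp_def] using this
    have k2 := d1 i x0 0
    have k3 := ((k1.log (by simpa using hH0.ne')).sub ((k2.log (by simpa using hF0.ne')).const_mul p))
    have hloc : IsLocalMin (fun s : ℝ => Real.log (heatSol N v t0 (z0 + (a * s) • ee i) + δ) - p * Real.log (heatSol N v t0 (x0 + s • ee i))) 0 := by
      refine Filter.Eventually.of_forall fun s => ?_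
      have := hglob t0 ht0 (x0 + s • ee i) y0
      simp only [Φ, ← hU] at this
      have e : a • (x0 + s • ee i) + b • y0 = z0 + (a * s) • ee i := by
        rw [hz0, smul_add, smul_smul]; abel
      rw [e] at this
      simp only [mul_zero, zero_smul, add_zero]
      linarith
    have k4 := hloc.hasDerivAt_eq_zero k3
    simp only [mul_zero, zero_smul, add_zero] at k4
    have k5 : D1 N v t0 i z0 * a / H - p * (D1 N v t0 i x0 / F) = 0 := k4
    rw [← sub_eq_zero, ← k5]; ring
  have fy : ∀ i, b * (D1 N v t0 i z0 / H) = q * (D1 N v t0 i y0 / G) := by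
    intro i
    have k1 : HasDerivAt (fun s : ℝ => heatSol N v t0 (z0 + (b * s) • ee i) + δ) (D1 N v t0 i z0 * b) 0 := by
      have e1 := d1 i z0 0
      have e2 : HasDerivAt (fun s : ℝ => b * s) b 0 := by simpa using (hasDerivAt_id (0:ℝ)).const_mul b
      have := (HasDerivAt.comp_of_eq (h := fun s : ℝ => b * s) 0 e1 e2 (by simp)).add_const δ
      simpa [Function.comp_def] using this
    have k2 := d1 i y0 0
    have k3 := ((k1.log (by simpa using hH0.ne')).sub ((k2.log (by simpa using hG0.ne')).const_mul q))
    have hloc : IsLocalMin (fun s : ℝ => Real.log (heatSol N v t0 (z0 + (b * s) • ee i) + δ) - q * Real.log (heatSol N v t0 (y0 + s • ee i))) 0 := by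
      refine Filter.Eventually.of_forall fun s => ?_
      have := hglob t0 ht0 x0 (y0 + s • ee i)
      simp only [Φ, ← hU] at this
      have e : a • x0 + b • (y0 + s • ee i) = z0 + (b * s) • ee i := by
        rw [hz0, smul_add, smul_smul]; abel
      rw [e] at this
      simp only [mul_zero, zero_smul, add_zero]
      linarith
    have k4 := hloc.hasDerivAt_eq_zero k3
    simp only [mul_zero, zero_smul, add_zero] at k4
    have k5 : D1 N v t0 i z0 * b / H - q * (D1 N v t0 i y0 / G) = 0 := k4
    rw [← sub_eq_zero, ← k5]; ring
  -- second order
  have sec : ∀ i, 0 ≤ (D2 N v t0 i z0 / H - (D1 N v t0 i z0 / H) ^ 2)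
      - p * (D2 N v t0 i x0 / F - (D1 N v t0 i x0 / F) ^ 2)
      - q * (D2 N v t0 i y0 / G - (D1 N v t0 i y0 / G) ^ 2) := by
    intro i
    have kz := fun s => ((d1 i z0 s).add_const δ).log (add_pos (hHp _) hδ).ne'
    have kx := fun s => (d1 i x0 s).log (hHp _).ne'
    have ky := fun s => (d1 i y0 s).log (hHp _).ne'
    have lz := log_second (A := fun s : ℝ => heatSol N v t0 (z0 + s • ee i) + δ)
      (A1 := fun s : ℝ => D1 N v t0 i (z0 + s • ee i)) (add_pos (hHp _) hδ) ((d1 i z0 0).add_const δ) (d2 i z0 0)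
    have lx := log_second (A := fun s : ℝ => heatSol N v t0 (x0 + s • ee i))
      (A1 := fun s : ℝ => D1 N v t0 i (x0 + s • ee i)) (hHp _) (d1 i x0 0) (d2 i x0 0)
    have ly := log_second (A := fun s : ℝ => heatSol N v t0 (y0 + s • ee i))
      (A1 := fun s : ℝ => D1 N v t0 i (y0 + s • ee i)) (hHp _) (d1 i y0 0) (d2 i y0 0)
    have := second_test (fun s => ((kz s).sub ((kx s).const_mul p)).sub ((ky s).const_mul q))
      ((lz.sub (lx.const_mul p)).sub (ly.const_mul q)) ?_
    · simpa only [zero_smul, add_zero] using this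
    · intro s
      have := hglob t0 ht0 (x0 + s • ee i) (y0 + s • ee i)
      simp only [Φ, ← hU] at this
      have e : a • (x0 + s • ee i) + b • (y0 + s • ee i) = z0 + s • ee i := by
        rw [hz0, smul_add, smul_add, add_add_add_comm, ← add_smul, hab, one_smul]
      rw [e] at this
      simp only [Pi.sub_apply, zero_smul, add_zero]
      linarith
  -- time
  have tm : (∑ i, D2 N v t0 i z0) / H - p * ((∑ i, D2 N v t0 i x0) / F)
      - q * ((∑ i, D2 N v t0 i y0) / G) + ε ≤ 0 := by
    have kz := ((heat_dt hm hb ht0pos z0).add_const δ).log hH0.ne'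
    have kx := (heat_dt hm hb ht0pos x0).log hF0.ne'
    have ky := (heat_dt hm hb ht0pos y0).log hG0.ne'
    have ke : HasDerivAt (fun t : ℝ => ε * t) ε t0 := by simpa using (hasDerivAt_id t0).const_mul ε
    have k := ((kz.sub (kx.const_mul p)).sub (ky.const_mul q)).add ke
    have k2 := k.hasDerivWithinAt (s := Set.Iio t0)
    rw [hasDerivWithinAt_iff_tendsto_slope' (by simp)] at k2
    refine le_of_tendsto k2 ?_
    have : ∀ᶠ t in nhdsWithin t0 (Set.Iio t0), t ∈ Set.Ioo 0 t0 := Ioo_mem_nhdsLT ht0pos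
    filter_upwards [this] with t ht
    rw [slope_def_field]
    refine div_nonpos_of_nonneg_of_nonpos ?_ (by linarith [ht.2])
    have := hglob t ⟨ht.1.le, ht.2.le.trans ht0.2⟩ x0 y0
    simp only [Φ] at this
    simp only [← heat_eq_UU v ht.1, ← heat_eq_UU v ht0pos, ← hz0] at this
    simp only [Pi.sub_apply, Pi.add_apply]
    linarith
  have hsum := Finset.sum_nonneg (s := Finset.univ) (fun i _ => sec i)
  have hsq : ∀ i, 0 ≤ (D1 N v t0 i z0 / H) ^ 2 - p * (D1 N v t0 i x0 / F) ^ 2 - q * (D1 N v t0 i y0 / G) ^ 2 := by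
    intro i
    have ex : D1 N v t0 i x0 / F = a * (D1 N v t0 i z0 / H) / p := by rw [fx i]; field_simp
    have ey : D1 N v t0 i y0 / G = b * (D1 N v t0 i z0 / H) / q := by rw [fy i]; field_simp
    rw [ex, ey]
    have : (D1 N v t0 i z0 / H) ^ 2 - p * (a * (D1 N v t0 i z0 / H) / p) ^ 2 - q * (b * (D1 N v t0 i z0 / H) / q) ^ 2
      = (D1 N v t0 i z0 / H) ^ 2 * (1 - (a ^ 2 / p + b ^ 2 / q)) := by
      field_simp
      ring
    rw [this]
    exact mul_nonneg (sq_nonneg _) (by linarith)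
  have hsum2 := Finset.sum_nonneg (s := Finset.univ) (fun i _ => add_nonneg (sec i) (hsq i))
  have : ∑ i, ((D2 N v t0 i z0 / H - (D1 N v t0 i z0 / H) ^ 2)
      - p * (D2 N v t0 i x0 / F - (D1 N v t0 i x0 / F) ^ 2)
      - q * (D2 N v t0 i y0 / G - (D1 N v t0 i y0 / G) ^ 2) + ((D1 N v t0 i z0 / H) ^ 2 - p * (D1 N v t0 i x0 / F) ^ 2 - q * (D1 N v t0 i y0 / G) ^ 2)) = (∑ i, D2 N v t0 i z0) / H - p * ((∑ i, D2 N v t0 i x0) / F)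
      - q * ((∑ i, D2 N v t0 i y0) / G) := by
    simp only [Finset.sum_div, Finset.mul_sum, ← Finset.sum_sub_distrib]
    refine Finset.sum_congr rfl fun i _ => ?_
    ring
  linarith

lemma maxprin' {N : ℕ} {v : EN N → ℝ} (hc : Continuous v) (h0 : ∀ x, 0 < v x) (h1 : ∀ x, v x ≤ 1)
    (hd : Filter.Tendsto v (Filter.comap norm Filter.atTop) (nhds 0))
    {a b p q : ℝ} (hab : a + b = 1) (hp : 0 < p) (hq : 0 < q)
    (hpq : a ^ 2 / p + b ^ 2 / q ≤ 1)
    (hyp : ∀ x y, p * Real.log (v x) + q * Real.log (v y) ≤ Real.log (v (a • x + b • y)))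
    {T : ℝ} (hT : 0 < T) (x y : EN N) :
    (UU N v T x) ^ p * (UU N v T y) ^ q ≤ UU N v T (a • x + b • y) := by
  have hpos := UU_pos hc.measurable h0 h1
  refine le_of_forall_pos_le_add fun δ hδ => ?_
  have := maxprin hc h0 h1 hd hab hp hq hpq hyp hT hδ x y
  rw [← Real.log_rpow (hpos _ _), ← Real.log_rpow (hpos _ _),
    ← Real.log_mul (Real.rpow_pos_of_pos (hpos _ _) _).ne' (Real.rpow_pos_of_pos (hpos _ _) _).ne'] at this
  exact (Real.log_le_log_iff (mul_pos (Real.rpow_pos_of_pos (hpos _ _) _) (Real.rpow_pos_of_pos (hpos _ _) _))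
    (add_pos (hpos _ _) hδ)).1 this

lemma S1 {α a b A B X Y : ℝ} (hα : 1 ≤ α) (ha : 0 < a) (hb : 0 < b) (hA : 0 < A)
    (hB : 0 < B) (hX : 0 ≤ X) (hY : 0 ≤ Y) :
    (a * X + b * Y) ^ α ≤ a * (A / (a * A + b * B)) ^ (1 - α) * X ^ α
      + b * (B / (a * A + b * B)) ^ (1 - α) * Y ^ α := by
  set m := a * A + b * B with hm
  have hm0 : 0 < m := by positivity
  have key := (convexOn_rpow hα).2
    (show m * X / A ∈ Set.Ici (0:ℝ) from (by positivity : (0:ℝ) ≤ m * X / A))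
    (show m * Y / B ∈ Set.Ici (0:ℝ) from (by positivity : (0:ℝ) ≤ m * Y / B))
    (show 0 ≤ a * A / m by positivity) (show 0 ≤ b * B / m by positivity) (by rw [← add_div, ← hm, div_self hm0.ne'])
  simp only [smul_eq_mul] at key
  have e0 : a * A / m * (m * X / A) + b * B / m * (m * Y / B) = a * X + b * Y := by field_simp
  have e1 : ∀ c C Z : ℝ, 0 < C → 0 ≤ Z → c * C / m * (m * Z / C) ^ α = c * (C / m) ^ (1 - α) * Z ^ α := by
    intro c C Z hC hZ
    have : m * Z / C = (C / m)⁻¹ * Z := by field_simp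
    rw [this, Real.mul_rpow (by positivity) hZ, Real.inv_rpow (by positivity), Real.rpow_sub (by positivity), Real.rpow_one]
    ring
  rw [e0, e1 a A X hA hX, e1 b B Y hB hY] at key
  exact key

lemma S2 {α a b A B : ℝ} (hα : 1 ≤ α) (hα2 : α ≤ 2) (ha : 0 < a) (hb : 0 < b) (hab : a + b = 1)
    (hA : 0 < A) (hB : 0 < B) :
    a ^ 2 / (a * (A / (a * A + b * B)) ^ (1 - α)) + b ^ 2 / (b * (B / (a * A + b * B)) ^ (1 - α)) ≤ 1 := by
  set m := a * A + b * B with hm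
  have hm0 : 0 < m := by positivity
  have key := (Real.concaveOn_rpow (p := α - 1) (by linarith) (by linarith)).2
    (show A / m ∈ Set.Ici (0:ℝ) from (by positivity : (0:ℝ) ≤ A / m))
    (show B / m ∈ Set.Ici (0:ℝ) from (by positivity : (0:ℝ) ≤ B / m))
    ha.le hb.le hab
  simp only [smul_eq_mul] at key
  have e0 : a * (A / m) + b * (B / m) = 1 := by
    rw [← mul_div_assoc, ← mul_div_assoc, ← add_div, ← hm, div_self hm0.ne']
  have e1 : ∀ c C : ℝ, 0 < c → 0 < C → c ^ 2 / (c * (C / m) ^ (1 - α)) = c * (C / m) ^ (α - 1) := by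
    intro c C hc hC
    have : α - 1 = - (1 - α) := by ring
    rw [this, Real.rpow_neg (by positivity)]
    field_simp
  rw [e1 a A ha hA, e1 b B hb hB]
  rw [e0, Real.one_rpow] at key
  exact key

lemma S3 {α a b A B : ℝ} (ha : 0 < a) (hb : 0 < b) (hA : 0 < A) (hB : 0 < B) :
    a * (A / (a * A + b * B)) ^ (1 - α) * A ^ α + b * (B / (a * A + b * B)) ^ (1 - α) * B ^ α
      = (a * A + b * B) ^ α := by
  set m := a * A + b * B with hm
  have hm0 : 0 < m := by positivity
  have e1 : ∀ c C : ℝ, 0 < C → c * (C / m) ^ (1 - α) * C ^ α = c * C * (m ^ α / m) := by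
    intro c C hC
    rw [Real.div_rpow hC.le hm0.le, Real.rpow_sub hC, Real.rpow_sub hm0, Real.rpow_one, Real.rpow_one]
    field_simp
  rw [e1 a A hA, e1 b B hB, ← add_mul, ← hm]
  field_simp

noncomputable def mm {N : ℕ} (D : Set (EN N)) (w : EN N → ℝ) (k : ℝ) (x : EN N) : ℝ :=
  ⨅ y : D, (w y + k * ‖x - y‖)

section
variable {N : ℕ} {D : Set (EN N)} {w : EN N → ℝ} {k : ℝ}

lemma mm_bdd (hw : ∀ x, 0 ≤ w x) (hk : 0 < k) (x : EN N) :
    BddBelow (Set.range fun y : D => w y + k * ‖x - y‖) :=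
  ⟨0, by rintro _ ⟨y, rfl⟩; have := hw y; positivity⟩

lemma mm_le (hw : ∀ x, 0 ≤ w x) (hk : 0 < k) (x : EN N) {y : EN N} (hy : y ∈ D) :
    mm D w k x ≤ w y + k * ‖x - y‖ := ciInf_le (mm_bdd hw hk x) ⟨y, hy⟩

lemma mm_nonneg (hw : ∀ x, 0 ≤ w x) (hk : 0 < k) (x : EN N) : 0 ≤ mm D w k x :=
  Real.iInf_nonneg fun y => by have := hw y; positivity

lemma mm_approx (hD : D.Nonempty) (x : EN N) {ε : ℝ} (hε : 0 < ε) :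
    ∃ y ∈ D, w y + k * ‖x - y‖ < mm D w k x + ε := by
  haveI : Nonempty D := hD.to_subtype
  obtain ⟨y, hy⟩ := exists_lt_of_ciInf_lt (show (⨅ y : D, (w y + k * ‖x - y‖)) < mm D w k x + ε by
    unfold mm; linarith)
  exact ⟨y, y.2, hy⟩

lemma mm_cont (hD : D.Nonempty) (hw : ∀ x, 0 ≤ w x) (hk : 0 < k) : Continuous (mm D w k) := by
  have : LipschitzWith k.toNNReal (mm D w k) := by
    apply LipschitzWith.of_le_add_mul
    intro x x'
    refine le_of_forall_pos_le_add fun ε hε => ?_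
    obtain ⟨y, hy, h⟩ := mm_approx (w := w) (k := k) hD x' hε
    have h2 := mm_le hw hk x hy
    have h3 : ‖x - y‖ ≤ dist x x' + ‖x' - y‖ := by
      rw [dist_eq_norm]; exact norm_sub_le_norm_sub_add_norm_sub _ _ _
    have h4 := mul_le_mul_of_nonneg_left h3 hk.le
    rw [Real.coe_toNNReal k hk.le]
    linarith
  exact this.continuous

lemma mm_convex (hD : D.Nonempty) (hw : ∀ x, 0 ≤ w x) (hc : ConvexOn ℝ D w) (hk : 0 < k) {a b : ℝ}
    (ha : 0 < a) (hb : 0 < b) (hab : a + b = 1) (x y : EN N) :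
    mm D w k (a • x + b • y) ≤ a * mm D w k x + b * mm D w k y := by
  refine le_of_forall_pos_le_add fun ε hε => ?_
  obtain ⟨x', hx', h1⟩ := mm_approx (w := w) (k := k) hD x hε
  obtain ⟨y', hy', h2⟩ := mm_approx (w := w) (k := k) hD y hε
  have h3 := mm_le hw hk (a • x + b • y) (hc.1 hx' hy' ha.le hb.le hab)
  have h4 := hc.2 hx' hy' ha.le hb.le hab
  simp only [smul_eq_mul] at h4
  have h5 : ‖a • x + b • y - (a • x' + b • y')‖ ≤ a * ‖x - x'‖ + b * ‖y - y'‖ := by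
    have : a • x + b • y - (a • x' + b • y') = a • (x - x') + b • (y - y') := by
      simp only [smul_sub]; abel
    rw [this]
    refine (norm_add_le _ _).trans ?_
    rw [norm_smul, norm_smul, Real.norm_of_nonneg ha.le, Real.norm_of_nonneg hb.le]
  have h6 := mul_le_mul_of_nonneg_left h5 hk.le
  have h7 := mul_le_mul_of_nonneg_left h1.le ha.le
  have h8 := mul_le_mul_of_nonneg_left h2.le hb.le
  have h9 : a * (mm D w k x + ε) + b * (mm D w k y + ε) = a * mm D w k x + b * mm D w k y + ε := by
    linear_combination ε * hab
  linarith

noncomputable def kk (n : ℕ) : ℝ := n + 1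
lemma kk_pos (n : ℕ) : 0 < kk n := by unfold kk; positivity
lemma kk_tend : Filter.Tendsto kk Filter.atTop Filter.atTop :=
  Filter.tendsto_atTop_add_const_right _ _ tendsto_natCast_atTop_atTop

noncomputable def ww (D : Set (EN N)) (w : EN N → ℝ) (n : ℕ) (x : EN N) : ℝ :=
  mm D w (kk n) x + ‖x‖ / kk n

lemma ww_nonneg (hw : ∀ x, 0 ≤ w x) (n : ℕ) (x : EN N) : 0 ≤ ww D w n x :=
  add_nonneg (mm_nonneg hw (kk_pos n) x) (div_nonneg (norm_nonneg _) (kk_pos n).le)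

lemma ww_in (hD : D.Nonempty) (hw : ∀ x, 0 ≤ w x) (hc : ConvexOn ℝ D w) {x : EN N}
    (hx : x ∈ interior D) : Filter.Tendsto (fun n => ww D w n x) Filter.atTop (nhds (w x)) := by
  have h0 : Filter.Tendsto (fun n => ‖x‖ / kk n) Filter.atTop (nhds 0) := kk_tend.const_div_atTop _
  have h1 : Filter.Tendsto (fun n => mm D w (kk n) x) Filter.atTop (nhds (w x)) := by
    have hca : ContinuousAt w x := hc.continuousOn_interior.continuousAt (isOpen_interior.mem_nhds hx)
    rw [tendsto_order]
    refine ⟨fun c hcw => ?_, fun c hcw => ?_⟩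
    · obtain ⟨c', hc1, hc2⟩ := exists_between hcw
      have hev := hca.eventually (lt_mem_nhds hc2)
      obtain ⟨r, hr, hball⟩ := Metric.eventually_nhds_iff.1 hev
      have hk := kk_tend.eventually_ge_atTop (w x / r)
      filter_upwards [hk] with n hn
      haveI : Nonempty D := hD.to_subtype
      refine lt_of_lt_of_le hc1 (le_ciInf fun y => ?_)
      by_cases hy : dist (y : EN N) x < r
      · have := hball hy
        have := mul_nonneg (kk_pos n).le (norm_nonneg (x - y))
        linarith
      · push Not at hy
        rw [dist_comm, dist_eq_norm] at hy
        have := hw y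
        rw [div_le_iff₀ hr] at hn
        have := mul_le_mul_of_nonneg_left hy (kk_pos n).le
        linarith
    · refine Filter.Eventually.of_forall fun n => ?_
      have := mm_le hw (kk_pos n) x (interior_subset hx)
      simp at this
      linarith
  simpa [ww] using h1.add h0

lemma ww_out (hD : D.Nonempty) (hw : ∀ x, 0 ≤ w x) {x : EN N}
    (hx : x ∉ closure D) : Filter.Tendsto (fun n => ww D w n x) Filter.atTop Filter.atTop := by
  have hr : 0 < Metric.infDist x D := by
    have := (Metric.infDist_pos_iff_notMem_closure hD).1 hx
    exact this
  refine Filter.tendsto_atTop_mono (fun n => ?_) (kk_tend.atTop_mul_const hr)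
  have h1 : kk n * Metric.infDist x D ≤ mm D w (kk n) x := by
    haveI : Nonempty D := hD.to_subtype
    refine le_ciInf fun y => ?_
    have h2 := Metric.infDist_le_dist_of_mem (x := x) y.2
    rw [dist_eq_norm] at h2
    have := mul_le_mul_of_nonneg_left h2 (kk_pos n).le
    have := hw y
    linarith
  have := div_nonneg (norm_nonneg x) (kk_pos n).le
  unfold ww
  linarith

noncomputable def vv (α : ℝ) (D : Set (EN N)) (w : EN N → ℝ) (n : ℕ) (x : EN N) : ℝ :=
  Real.exp (-(ww D w n x) ^ α)

lemma vv_le_one (hw : ∀ x, 0 ≤ w x) (α : ℝ) (n : ℕ) (x : EN N) : vv α D w n x ≤ 1 := by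
  unfold vv
  rw [Real.exp_le_one_iff]
  have := Real.rpow_nonneg (ww_nonneg (D := D) hw n x) α
  linarith

lemma vv_cont (hD : D.Nonempty) (hw : ∀ x, 0 ≤ w x) {α : ℝ} (hα : 1 ≤ α) (n : ℕ) :
    Continuous (vv α D w n) := by
  have h1 := mm_cont hD hw (kk_pos n)
  have h2 : Continuous (ww D w n) := by unfold ww; fun_prop
  unfold vv
  exact (Real.continuous_exp.comp ((h2.rpow_const fun x => Or.inr (by linarith)).neg))

lemma exp_rpow_tend {ι : Type*} {l : Filter ι} {α : ℝ} (hα : 1 ≤ α) {f : ι → ℝ}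
    (hf : Filter.Tendsto f l Filter.atTop) :
    Filter.Tendsto (fun i => Real.exp (-(f i) ^ α)) l (nhds 0) :=
  Real.tendsto_exp_atBot.comp (Filter.tendsto_neg_atTop_atBot.comp
    ((tendsto_rpow_atTop (by linarith)).comp hf))

lemma vv_decay (hw : ∀ x, 0 ≤ w x) {α : ℝ} (hα : 1 ≤ α) (n : ℕ) :
    Filter.Tendsto (vv α D w n) (Filter.comap norm Filter.atTop) (nhds 0) := by
  refine exp_rpow_tend hα ?_
  have h1 : Filter.Tendsto (fun x : EN N => ‖x‖ / kk n) (Filter.comap norm Filter.atTop) Filter.atTop :=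
    Filter.tendsto_comap.atTop_div_const (kk_pos n)
  refine Filter.tendsto_atTop_mono (fun x => ?_) h1
  have := mm_nonneg (D := D) hw (kk_pos n) x
  unfold ww; linarith

lemma vv_hyp (hD : D.Nonempty) (hw : ∀ x, 0 ≤ w x) (hc : ConvexOn ℝ D w) {α : ℝ} (hα : 1 ≤ α) (n : ℕ)
    {a b A B : ℝ} (ha : 0 < a) (hb : 0 < b) (hab : a + b = 1) (hA : 0 < A) (hB : 0 < B) (x y : EN N) :
    a * (A / (a * A + b * B)) ^ (1 - α) * Real.log (vv α D w n x)
      + b * (B / (a * A + b * B)) ^ (1 - α) * Real.log (vv α D w n y)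
      ≤ Real.log (vv α D w n (a • x + b • y)) := by
  simp only [vv, Real.log_exp]
  have hx := ww_nonneg (D := D) hw n x
  have hy := ww_nonneg (D := D) hw n y
  have h1 := S1 hα ha hb hA hB hx hy
  have h2 : ww D w n (a • x + b • y) ≤ a * ww D w n x + b * ww D w n y := by
    have h3 := mm_convex hD hw hc (kk_pos n) ha hb hab x y
    have h4 : ‖a • x + b • y‖ / kk n ≤ (a * ‖x‖ + b * ‖y‖) / kk n := by
      refine div_le_div_of_nonneg_right ?_ (kk_pos n).le
      refine (norm_add_le _ _).trans ?_
      rw [norm_smul, norm_smul, Real.norm_of_nonneg ha.le, Real.norm_of_nonneg hb.le]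
    unfold ww
    rw [add_div, mul_div_assoc, mul_div_assoc] at h4
    linarith
  have h5 := Real.rpow_le_rpow (ww_nonneg (D := D) hw n _) h2 (by linarith : 0 ≤ α)
  linarith

end

lemma gauss_int {N : ℕ} {t : ℝ} (ht : 0 < t) (x : EN N) : Integrable (fun y => gauss N (x - y) t) := by
  have := (((integrable_gexp (N := N) (b := 1 / (4 * t)) (by positivity)).comp_sub_left x)).const_mul ((4 * π * t) ^ (-(N : ℝ) / 2))
  refine this.congr (Filter.Eventually.of_forall fun y => ?_)
  unfold gauss
  simp only
  congr 2
  ring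

lemma heat_limit {N : ℕ} {v : ℕ → EN N → ℝ} {u : EN N → ℝ} (hm : ∀ n, Measurable (v n))
    (hb : ∀ n x, |v n x| ≤ 1) (h : ∀ᵐ y, Filter.Tendsto (fun n => v n y) Filter.atTop (nhds (u y)))
    {t : ℝ} (ht : 0 < t) (x : EN N) :
    Filter.Tendsto (fun n => heatSol N (v n) t x) Filter.atTop (nhds (heatSol N u t x)) := by
  have hg := gauss_cont (N := N) t
  refine tendsto_integral_of_dominated_convergence (fun y => gauss N (x - y) t) ?_ (gauss_int ht x) ?_ ?_
  · intro n
    exact ((by fun_prop : Measurable fun y => gauss N (x - y) t).mul (hm n)).aestronglyMeasurable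
  · intro n
    refine Filter.Eventually.of_forall fun y => ?_
    have hg0 : 0 ≤ gauss N (x - y) t := by unfold gauss; positivity
    rw [norm_mul, Real.norm_of_nonneg hg0]
    exact mul_le_of_le_one_right hg0 (hb n y)
  · filter_upwards [h] with y hy using hy.const_mul _

lemma core {N : ℕ} {α : ℝ} (hα : 1 ≤ α) (hα2 : α ≤ 2) {D : Set (EN N)} {w u : EN N → ℝ}
    (hD : D.Nonempty) (hw : ∀ x, 0 ≤ w x) (hc : ConvexOn ℝ D w)
    (hin : ∀ x ∈ D, u x = Real.exp (-(w x) ^ α)) (hout : ∀ x ∉ D, u x = 0)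
    {a b A B : ℝ} (ha : 0 < a) (hb : 0 < b) (hab : a + b = 1) (hA : 0 < A) (hB : 0 < B)
    {t : ℝ} (ht : 0 < t) (x y : EN N) :
    (heatSol N u t x) ^ (a * (A / (a * A + b * B)) ^ (1 - α)) *
      (heatSol N u t y) ^ (b * (B / (a * A + b * B)) ^ (1 - α)) ≤ heatSol N u t (a • x + b • y) := by
  have hp : 0 < a * (A / (a * A + b * B)) ^ (1 - α) := by positivity
  have hq : 0 < b * (B / (a * A + b * B)) ^ (1 - α) := by positivity
  have hvb : ∀ n x, |vv α D w n x| ≤ 1 := fun n x => by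
    have h0 : 0 < vv α D w n x := Real.exp_pos _
    rw [abs_of_pos h0]; exact vv_le_one hw α n x
  have hlim : ∀ᵐ y, Filter.Tendsto (fun n => vv α D w n y) Filter.atTop (nhds (u y)) := by
    have hfr : ∀ᵐ y, y ∉ frontier D := by
      have := hc.1.addHaar_frontier (volume : Measure (EN N))
      exact measure_eq_zero_iff_ae_notMem.1 this
    filter_upwards [hfr] with y hy
    by_cases hcl : y ∈ closure D
    · have hyi : y ∈ interior D := by
        by_contra h; exact hy ⟨hcl, h⟩
      rw [hin y (interior_subset hyi)]
      have := (ww_in hD hw hc hyi).rpow_const (p := α) (Or.inr (by linarith))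
      exact (Real.continuous_exp.tendsto _).comp this.neg
    · rw [hout y (fun h => hcl (subset_closure h))]
      exact exp_rpow_tend hα (ww_out hD hw hcl)
  have L := fun z => heat_limit (fun n => (vv_cont hD hw hα n).measurable) hvb hlim ht z
  refine le_of_tendsto_of_tendsto' (((L x).rpow_const (Or.inr hp.le)).mul ((L y).rpow_const (Or.inr hq.le)))
    (L (a • x + b • y)) fun n => ?_
  simp only [heat_eq_UU _ ht]
  exact maxprin' (vv_cont hD hw hα n) (fun x => Real.exp_pos _) (vv_le_one hw α n) (vv_decay hw hα n) hab
    hp hq (S2 hα hα2 ha hb hab hA hB) (vv_hyp hD hw hc hα n ha hb hab hA hB) ht x y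
/-- The heat flow on `ℝ^N` preserves concavity of `L_α ∘ u` for `1 ≤ α ≤ 2`. -/
theorem heat_preserves_Lalpha_concavity
    (N : ℕ) (hN : 1 ≤ N) (α : ℝ) (hα₁ : 1 ≤ α) (hα₂ : α ≤ 2)
    (u₀ : EuclideanSpace ℝ (Fin N) → ℝ) (hmeas : Measurable u₀)
    (h0 : ∀ x, 0 ≤ u₀ x) (h1 : ∀ x, u₀ x ≤ 1)
    (hconc : ERealConcaveOn (fun x => Lfun α (u₀ x))) :
    ∀ t : ℝ, 0 < t → ERealConcaveOn (fun x => Lfun α (heatSol N u₀ t x)) := by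

  intro t ht x y μ hμ0 hμ1
  have hα0 : 0 < α := by linarith
  rcases hμ0.eq_or_lt with rfl | hμ0
  · simp
  rcases hμ1.eq_or_lt with rfl | hμ1
  · simp
  have ha : 0 < 1 - μ := by linarith
  have hab : (1 - μ) + μ = 1 := by ring
  have hU0 : ∀ z, 0 ≤ heatSol N u₀ t z := fun z => by
    rw [heat_eq_UU _ ht]; exact UU_nonneg h0 t z
  have hU1 : ∀ z, heatSol N u₀ t z ≤ 1 := fun z => by
    rw [heat_eq_UU _ ht]; exact UU_le_one hmeas h0 h1 t z
  rcases (hU0 x).eq_or_lt with hx | hx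
  · simp only [Lfun, ← hx, lt_irrefl, if_false]
    rw [EReal.coe_mul_bot_of_pos ha]
    simp
  rcases (hU0 y).eq_or_lt with hy | hy
  · simp only [Lfun, ← hy, lt_irrefl, if_false]
    rw [EReal.coe_mul_bot_of_pos hμ0]
    simp
  set D : Set (EN N) := {z | 0 < u₀ z} with hDdef
  set w : EN N → ℝ := fun z => if 0 < u₀ z then (-Real.log (u₀ z)) ^ (1 / α) else 0 with hwdef
  have hlog : ∀ z, 0 ≤ -Real.log (u₀ z) := fun z => by
    linarith [Real.log_nonpos (h0 z) (h1 z)]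
  have hw : ∀ z, 0 ≤ w z := fun z => by
    simp only [hwdef]; split_ifs
    · exact Real.rpow_nonneg (hlog z) _
    · exact le_rfl
  have hD : D.Nonempty := by
    by_contra hne
    rw [Set.not_nonempty_iff_eq_empty] at hne
    have : ∀ z, u₀ z = 0 := fun z => by
      by_contra h
      have : z ∈ D := lt_of_le_of_ne (h0 z) (Ne.symm h)
      rw [hne] at this; exact this
    simp [heatSol, this] at hx
  have hstep : ∀ z ∈ D, ∀ z' ∈ D, ∀ a b : ℝ, 0 ≤ a → 0 ≤ b → a + b = 1 →
      a • z + b • z' ∈ D ∧ w (a • z + b • z') ≤ a * w z + b * w z' := by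
    intro z hz z' hz' a b ha hb hab
    obtain rfl : a = 1 - b := by linarith
    have h := hconc z z' b hb (by linarith)
    have hz1 : 0 < u₀ z := hz
    have hz2 : 0 < u₀ z' := hz'
    simp only [Lfun, if_pos hz1, if_pos hz2] at h
    rw [← EReal.coe_mul, ← EReal.coe_mul, ← EReal.coe_add] at h
    by_cases h3 : 0 < u₀ ((1 - b) • z + b • z')
    · rw [if_pos h3, EReal.coe_le_coe_iff] at h
      refine ⟨h3, ?_⟩
      simp only [hwdef, if_pos hz1, if_pos hz2, if_pos h3]
      linarith
    · rw [if_neg h3] at h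
      exact absurd (le_bot_iff.1 h) (EReal.coe_ne_bot _)
  have hc : ConvexOn ℝ D w := by
    refine ⟨fun z hz z' hz' a b ha hb hab => (hstep z hz z' hz' a b ha hb hab).1,
      fun z hz z' hz' a b ha hb hab => ?_⟩
    simpa using (hstep z hz z' hz' a b ha hb hab).2
  have hin : ∀ z ∈ D, u₀ z = Real.exp (-(w z) ^ α) := by
    intro z hz
    have hz1 : 0 < u₀ z := hz
    simp only [hwdef, if_pos hz1]
    rw [← Real.rpow_mul (hlog z), one_div, inv_mul_cancel₀ hα0.ne', Real.rpow_one, neg_neg, Real.exp_log hz1]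
  have hout : ∀ z ∉ D, u₀ z = 0 := fun z hz => le_antisymm (not_lt.1 hz) (h0 z)
  have hUlog : ∀ z, 0 ≤ -Real.log (heatSol N u₀ t z) := fun z => by
    linarith [Real.log_nonpos (hU0 z) (hU1 z)]
  set X := (-Real.log (heatSol N u₀ t x)) ^ (1 / α) with hX
  set Y := (-Real.log (heatSol N u₀ t y)) ^ (1 / α) with hY
  have hX0 : 0 ≤ X := Real.rpow_nonneg (hUlog x) _
  have hY0 : 0 ≤ Y := Real.rpow_nonneg (hUlog y) _
  have hback : ∀ z, ((-Real.log (heatSol N u₀ t z)) ^ (1 / α)) ^ α = -Real.log (heatSol N u₀ t z) := by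
    intro z
    rw [← Real.rpow_mul (hUlog z), one_div, inv_mul_cancel₀ hα0.ne', Real.rpow_one]
  have main := fun (A B : ℝ) (hA : 0 < A) (hB : 0 < B) =>
    core hα₁ hα₂ hD hw hc hin hout ha hμ0 hab hA hB ht x y
  have hz : 0 < heatSol N u₀ t ((1 - μ) • x + μ • y) :=
    lt_of_lt_of_le (mul_pos (Real.rpow_pos_of_pos hx _) (Real.rpow_pos_of_pos hy _)) (main 1 1 one_pos one_pos)
  simp only [Lfun, if_pos hx, if_pos hy, if_pos hz]
  rw [← EReal.coe_mul, ← EReal.coe_mul, ← EReal.coe_add, EReal.coe_le_coe_iff]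
  have fin : (-Real.log (heatSol N u₀ t ((1 - μ) • x + μ • y))) ^ (1 / α) ≤ (1 - μ) * X + μ * Y := by
    refine le_of_forall_pos_le_add fun ε hε => ?_
    have hA : 0 < X + ε := by linarith
    have hB : 0 < Y + ε := by linarith
    have hm := main _ _ hA hB
    have hl := Real.log_le_log (mul_pos (Real.rpow_pos_of_pos hx _) (Real.rpow_pos_of_pos hy _)) hm
    rw [Real.log_mul (Real.rpow_pos_of_pos hx _).ne' (Real.rpow_pos_of_pos hy _).ne',
      Real.log_rpow hx, Real.log_rpow hy] at hl
    have s3 := S3 (α := α) ha hμ0 hA hB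
    have bx : -Real.log (heatSol N u₀ t x) ≤ (X + ε) ^ α := by
      rw [← hback x]; exact Real.rpow_le_rpow hX0 (by linarith) hα0.le
    have bY : -Real.log (heatSol N u₀ t y) ≤ (Y + ε) ^ α := by
      rw [← hback y]; exact Real.rpow_le_rpow hY0 (by linarith) hα0.le
    set M := (1 - μ) * (X + ε) + μ * (Y + ε) with hM
    have hM0 : 0 < M := by positivity
    have c1 := mul_le_mul_of_nonneg_left bx (by positivity : 0 ≤ (1 - μ) * ((X + ε) / M) ^ (1 - α))
    have c2 := mul_le_mul_of_nonneg_left bY (by positivity : 0 ≤ μ * ((Y + ε) / M) ^ (1 - α))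
    have c3 : -Real.log (heatSol N u₀ t ((1 - μ) • x + μ • y)) ≤ M ^ α := by linarith
    have c4 := Real.rpow_le_rpow (hUlog _) c3 (by positivity : 0 ≤ 1 / α)
    rw [← Real.rpow_mul hM0.le, mul_one_div_cancel hα0.ne', Real.rpow_one] at c4
    have : M = (1 - μ) * X + μ * Y + ε := by rw [hM]; ring
    linarith
  linarith
end

section
/- Let N ≥ 1, 1 ≤ α ≤ 2, and let u₀ : ℝ^N → ℝ be a bounded nonnegative measurable function that is α-logconcave in ℝ^N. Then for every t > 0, the function e^{tΔ}u₀ (given by convolution with the Gauss kernel) is α-logconcave in ℝ^N. -/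
open MeasureTheory Real

noncomputable def phi (z : ℝ) : ℝ := (√(2 * π))⁻¹ * Real.exp (-z ^ 2 / 2)

lemma phi_pos (z : ℝ) : 0 < phi z := by unfold phi; positivity

lemma phi_cont : Continuous phi := by unfold phi; fun_prop

lemma phi_eq (z : ℝ) : phi z = ProbabilityTheory.gaussianPDFReal 0 1 z := by
  simp [phi, ProbabilityTheory.gaussianPDFReal]

lemma phi_int : Integrable phi := by
  have := ProbabilityTheory.integrable_gaussianPDFReal 0 1
  exact this.congr (Filter.Eventually.of_forall fun z => (phi_eq z).symm)

lemma phi_one : ∫ z, phi z = 1 := by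
  simp_rw [phi_eq]
  exact ProbabilityTheory.integral_gaussianPDFReal_eq_one 0 one_ne_zero

lemma phi_deriv (z : ℝ) : HasDerivAt phi (-(z * phi z)) z := by
  unfold phi
  have h : HasDerivAt (fun z : ℝ => -z ^ 2 / 2) (-z) z := by
    have := ((hasDerivAt_pow 2 z).neg).div_const 2
    refine HasDerivAt.congr_deriv this ?_
    norm_num; ring
  refine HasDerivAt.congr_deriv ((h.exp).const_mul ((√(2 * π))⁻¹)) ?_
  ring

lemma phi_int2 : Integrable (fun z => (1 + z ^ 2) * phi z) := by
  have h := integrable_rpow_mul_exp_neg_mul_sq (b := 1/2) (by norm_num) (s := 2) (by norm_num)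
  have h2 := phi_int.add (h.const_mul ((√(2 * π))⁻¹))
  refine h2.congr (Filter.Eventually.of_forall fun z => ?_)
  simp only [phi, Pi.add_apply, Real.rpow_two]
  have : -(1/2) * z ^ 2 = -z^2/2 := by ring
  rw [this]; ring

lemma phi_mul_phi (y z : ℝ) : phi y * phi z = (√(2 * π))⁻¹ ^ 2 * Real.exp (-(y ^ 2 + z ^ 2) / 2) := by
  unfold phi
  have : -(y ^ 2 + z ^ 2) / 2 = -y^2/2 + -z^2/2 := by ring
  rw [this, Real.exp_add]; ring

lemma phi_mul_le {a b c d : ℝ} (h : c ^ 2 + d ^ 2 ≤ a ^ 2 + b ^ 2) : phi a * phi b ≤ phi c * phi d := by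
  rw [phi_mul_phi, phi_mul_phi]
  gcongr

noncomputable def Phi (z : ℝ) : ℝ := ∫ r in Set.Iic z, phi r
noncomputable def Psi (z : ℝ) : ℝ := ∫ r in Set.Ioi z, phi r

lemma shift_Iic (g : ℝ → ℝ) (a s : ℝ) : ∫ r in Set.Iic a, g (r + s) = ∫ r in Set.Iic (a + s), g r := by
  rw [← integral_indicator measurableSet_Iic, ← integral_indicator measurableSet_Iic,
    ← integral_add_right_eq_self (fun r => (Set.Iic (a + s)).indicator g r) s]
  congr 1; ext r
  simp [Set.indicator]

lemma shift_Ioi (g : ℝ → ℝ) (a s : ℝ) : ∫ r in Set.Ioi a, g (r + s) = ∫ r in Set.Ioi (a + s), g r := by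
  rw [← integral_indicator measurableSet_Ioi, ← integral_indicator measurableSet_Ioi,
    ← integral_add_right_eq_self (fun r => (Set.Ioi (a + s)).indicator g r) s]
  congr 1; ext r
  simp [Set.indicator]

lemma Phi_add_Psi (z : ℝ) : Phi z + Psi z = 1 := by
  rw [← phi_one]
  exact intervalIntegral.integral_Iic_add_Ioi phi_int.integrableOn phi_int.integrableOn

lemma Phi_pos (z : ℝ) : 0 < Phi z := by
  unfold Phi
  rw [setIntegral_pos_iff_support_of_nonneg_ae (Filter.Eventually.of_forall fun z => (phi_pos z).le) phi_int.integrableOn]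
  have : Function.support phi = Set.univ := by
    ext z; simp [(phi_pos z).ne']
  simp [this]

lemma Psi_pos (z : ℝ) : 0 < Psi z := by
  unfold Psi
  rw [setIntegral_pos_iff_support_of_nonneg_ae (Filter.Eventually.of_forall fun z => (phi_pos z).le) phi_int.integrableOn]
  have : Function.support phi = Set.univ := by
    ext z; simp [(phi_pos z).ne']
  simp [this]

lemma mills1 {y z : ℝ} (h : y ≤ z) : phi z * Phi y ≤ phi y * Phi z := by
  have e1 : Phi y = ∫ r in Set.Iic 0, phi (r + y) := by rw [shift_Iic]; simp [Phi]
  have e2 : Phi z = ∫ r in Set.Iic 0, phi (r + z) := by rw [shift_Iic]; simp [Phi]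
  rw [e1, e2, ← integral_const_mul, ← integral_const_mul]
  refine setIntegral_mono_on ((phi_int.comp_add_right y).const_mul _).integrableOn
    ((phi_int.comp_add_right z).const_mul _).integrableOn measurableSet_Iic fun r hr => ?_
  apply phi_mul_le
  simp only [Set.mem_Iic] at hr
  nlinarith

lemma mills2 {y z : ℝ} (h : z ≤ y) : phi z * Psi y ≤ phi y * Psi z := by
  have e1 : Psi y = ∫ r in Set.Ioi 0, phi (r + y) := by rw [shift_Ioi]; simp [Psi]
  have e2 : Psi z = ∫ r in Set.Ioi 0, phi (r + z) := by rw [shift_Ioi]; simp [Psi]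
  rw [e1, e2, ← integral_const_mul, ← integral_const_mul]
  refine setIntegral_mono_on ((phi_int.comp_add_right y).const_mul _).integrableOn
    ((phi_int.comp_add_right z).const_mul _).integrableOn measurableSet_Ioi fun r hr => ?_
  apply phi_mul_le
  simp only [Set.mem_Ioi] at hr
  nlinarith

lemma fphi_int {f : ℝ → ℝ} (hm : Measurable f) (h0 : ∀ x, 0 ≤ f x) (h1 : ∀ x, f x ≤ 1) :
    Integrable (fun x => f x * phi x) := by
  refine phi_int.bdd_mul (c := 1) hm.aestronglyMeasurable (Filter.Eventually.of_forall fun x => ?_)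
  rw [Real.norm_eq_abs, abs_of_nonneg (h0 x)]; exact h1 x

/-- density comparison -/
lemma core_s1 {f : ℝ → ℝ} (hm : Measurable f) (h0 : ∀ x, 0 ≤ f x) (h1 : ∀ x, f x ≤ 1)
    {x0 s z : ℝ} (hs : ∀ x, f x ≤ f x0 * Real.exp (-s * (x - x0)))
    (hz : ∫ x in Set.Iic x0, f x * phi x = (∫ x, f x * phi x) * Phi z) :
    (∫ x, f x * phi x) * phi z ≤ f x0 * phi x0 := by
  set A := ∫ x, f x * phi x with hA
  have hi := fphi_int hm h0 h1
  set k := f x0 * Real.exp (s * x0 + s ^ 2 / 2) with hk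
  have key : ∀ x, f x0 * Real.exp (-s * (x - x0)) * phi x = k * phi (x + s) := by
    intro x
    have : Real.exp (-s * (x - x0)) * Real.exp (-x ^ 2 / 2) =
      Real.exp (s * x0 + s ^ 2 / 2) * Real.exp (-(x + s) ^ 2 / 2) := by
      rw [← Real.exp_add, ← Real.exp_add]; congr 1; ring
    rw [hk]; unfold phi
    linear_combination (f x0 * (√(2 * π))⁻¹) * this
  have le : ∀ x, f x * phi x ≤ k * phi (x + s) := fun x => by
    rw [← key]; exact mul_le_mul_of_nonneg_right (hs x) (phi_pos x).le
  have hk0 : 0 ≤ k := mul_nonneg (h0 _) (Real.exp_pos _).le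
  have hL : A * Phi z ≤ k * Phi (x0 + s) := by
    rw [← hz, Phi, ← shift_Iic, ← integral_const_mul]
    exact setIntegral_mono hi.integrableOn ((phi_int.comp_add_right s).const_mul _).integrableOn le
  have hR : A * Psi z ≤ k * Psi (x0 + s) := by
    have : A * Psi z = ∫ x in Set.Ioi x0, f x * phi x := by
      have e := intervalIntegral.integral_Iic_add_Ioi (b := x0) hi.integrableOn hi.integrableOn
      have := Phi_add_Psi z
      rw [hz] at e
      have e' : Psi z = 1 - Phi z := by linarith
      rw [e']; linarith
    rw [this, Psi, ← shift_Ioi, ← integral_const_mul]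
    exact setIntegral_mono hi.integrableOn ((phi_int.comp_add_right s).const_mul _).integrableOn le
  have hA0 : 0 ≤ A := integral_nonneg fun x => mul_nonneg (h0 x) (phi_pos x).le
  have hx0 : f x0 * phi x0 = k * phi (x0 + s) := by rw [← key]; simp
  rw [hx0]
  rcases le_total (x0 + s) z with h | h
  · have := mills1 h
    have hp := Phi_pos (x0 + s)
    refine le_of_mul_le_mul_right ?_ hp
    calc A * phi z * Phi (x0 + s) = A * (phi z * Phi (x0 + s)) := by ring
      _ ≤ A * (phi (x0 + s) * Phi z) := by gcongr
      _ = phi (x0 + s) * (A * Phi z) := by ring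
      _ ≤ phi (x0 + s) * (k * Phi (x0 + s)) := by
        have := (phi_pos (x0 + s)).le
        gcongr
      _ = _ := by ring
  · have := mills2 h
    have hp := Psi_pos (x0 + s)
    refine le_of_mul_le_mul_right ?_ hp
    calc A * phi z * Psi (x0 + s) = A * (phi z * Psi (x0 + s)) := by ring
      _ ≤ A * (phi (x0 + s) * Psi z) := by gcongr
      _ = phi (x0 + s) * (A * Psi z) := by ring
      _ ≤ phi (x0 + s) * (k * Psi (x0 + s)) := by
        have := (phi_pos (x0 + s)).le
        gcongr
      _ = _ := by ring

noncomputable def psi (p : ℝ) : ℝ := -Real.log (1 - p) - p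

lemma psi_ge {p : ℝ} (h0 : 0 ≤ p) (h1 : p < 1) : p ^ 2 / 2 ≤ psi p := by
  have hs := Real.hasSum_pow_div_log_of_abs_lt_one (x := p) (by rw [abs_lt]; constructor <;> linarith)
  have := sum_le_hasSum (Finset.range 2) (fun i _ => by positivity) hs
  simp [Finset.sum_range_succ] at this
  unfold psi
  norm_num at this
  linarith

lemma psi_deriv {p : ℝ} (h1 : p < 1) : HasDerivAt psi (p / (1 - p)) p := by
  unfold psi
  have h : (1 : ℝ) - p ≠ 0 := by linarith
  have := ((((hasDerivAt_id' p).const_sub 1).log h).neg).sub (hasDerivAt_id' p)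
  refine HasDerivAt.congr_deriv this ?_
  field_simp
  ring

lemma sqrt_psi_convex : ConvexOn ℝ (Set.Ico (0:ℝ) 1) (fun p => √(psi p)) := by
  have hpos : ∀ p ∈ Set.Ioo (0:ℝ) 1, 0 < psi p := fun p hp => by
    have := psi_ge hp.1.le hp.2
    have := pow_pos hp.1 2
    linarith
  have hd : ∀ p ∈ Set.Ioo (0:ℝ) 1, HasDerivAt (fun p => √(psi p)) (p / (1 - p) / (2 * √(psi p))) p :=
    fun p hp => (psi_deriv hp.2).sqrt (hpos p hp).ne'
  have hdd : ∀ p ∈ Set.Ioo (0:ℝ) 1, HasDerivAt (fun p => p / (1 - p) / (2 * √(psi p)))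
      ((1 / (1 - p) ^ 2 * (2 * √(psi p)) - p / (1 - p) * (2 * (p / (1 - p) / (2 * √(psi p))))) / (2 * √(psi p)) ^ 2) p := by
    intro p hp
    have h1 : (1 : ℝ) - p ≠ 0 := by linarith [hp.2]
    have h2 : HasDerivAt (fun p : ℝ => p / (1 - p)) (1 / (1 - p) ^ 2) p := by
      refine HasDerivAt.congr_deriv ((hasDerivAt_id' p).div ((hasDerivAt_id' p).const_sub 1) h1) ?_
      congr 1
      ring
    exact h2.div ((hd p hp).const_mul 2) (by have := Real.sqrt_pos.2 (hpos p hp); positivity)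
  have hder : ∀ p ∈ Set.Ioo (0:ℝ) 1, deriv (fun p => √(psi p)) p = p / (1 - p) / (2 * √(psi p)) :=
    fun p hp => (hd p hp).deriv
  have hev : ∀ p ∈ Set.Ioo (0:ℝ) 1, deriv (fun p => √(psi p)) =ᶠ[nhds p] fun p => p / (1 - p) / (2 * √(psi p)) :=
    fun p hp => Filter.eventuallyEq_of_mem (isOpen_Ioo.mem_nhds hp) hder
  apply convexOn_of_deriv2_nonneg (convex_Ico 0 1)
  · intro p hp
    exact ((psi_deriv hp.2).continuousAt.sqrt).continuousWithinAt
  · rw [interior_Ico]; intro p hp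
    exact (hd p hp).differentiableAt.differentiableWithinAt
  · rw [interior_Ico]; intro p hp
    exact ((hev p hp).differentiableAt_iff.2 (hdd p hp).differentiableAt).differentiableWithinAt
  · rw [interior_Ico]; intro p hp
    have : deriv^[2] (fun p => √(psi p)) p = deriv (deriv (fun p => √(psi p))) p := rfl
    rw [this, (hev p hp).deriv_eq, (hdd p hp).deriv]
    have hs := Real.sqrt_pos.2 (hpos p hp)
    have hq : √(psi p) ^ 2 = psi p := Real.sq_sqrt (hpos p hp).le
    have hg := psi_ge hp.1.le hp.2
    apply div_nonneg _ (sq_nonneg _)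
    have h1 : (0:ℝ) < 1 - p := by linarith [hp.2]
    have : (1 / (1 - p) ^ 2 * (2 * √(psi p)) - p / (1 - p) * (2 * (p / (1 - p) / (2 * √(psi p)))))
      = (2 * √(psi p) ^ 2 - p ^ 2) / ((1 - p) ^ 2 * √(psi p)) := by
      field_simp
    rw [this, hq]
    apply div_nonneg (by linarith) (by positivity)

/-- scalar inequality; `P`, `Q` coefficients -/
lemma scal {α : ℝ} (h1 : 1 ≤ α) (h2 : α ≤ 2) {μ a b : ℝ} (hμ : 0 < μ) (hμ' : μ < 1) (ha : 0 < a) (hb : 0 < b) :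
    ∃ P Q : ℝ, 0 ≤ P ∧ 0 ≤ Q ∧ P * a ^ α + Q * b ^ α = ((1 - μ) * a + μ * b) ^ α ∧
      (∀ k x y : ℝ, 0 ≤ k → 0 ≤ x → 0 ≤ y → k ≤ (1 - μ) * x + μ * y → k ^ α ≤ P * x ^ α + Q * y ^ α) ∧
      (∀ k x y : ℝ, 0 ≤ k → 0 ≤ x → 0 ≤ y → k ≤ (1 - μ) * x + μ * y → k ^ 2 ≤ P * x ^ 2 + Q * y ^ 2) := by
  have hm : 0 < 1 - μ := by linarith
  set C := (1 - μ) * a + μ * b with hC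
  have hC0 : 0 < C := by positivity
  have haα : 0 < a ^ α := Real.rpow_pos_of_pos ha _
  have hbα : 0 < b ^ α := Real.rpow_pos_of_pos hb _
  have hCα : 0 < C ^ α := Real.rpow_pos_of_pos hC0 _
  have first : ∀ k x y : ℝ, 0 ≤ k → 0 ≤ x → 0 ≤ y → k ≤ (1 - μ) * x + μ * y →
      k ^ α ≤ ((1 - μ) * a / C * C ^ α / a ^ α) * x ^ α + (μ * b / C * C ^ α / b ^ α) * y ^ α := by
    intro k x y hk hx hy h
    have hcv := (convexOn_rpow h1).2 (show x / a ∈ Set.Ici (0:ℝ) from by simp only [Set.mem_Ici]; positivity)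
      (show y / b ∈ Set.Ici (0:ℝ) from by simp only [Set.mem_Ici]; positivity)
      (show 0 ≤ (1 - μ) * a / C by positivity) (show 0 ≤ μ * b / C by positivity) (by rw [← add_div]; exact div_self hC0.ne')
    simp only [smul_eq_mul] at hcv
    have e : (1 - μ) * x + μ * y = C * ((1 - μ) * a / C * (x / a) + μ * b / C * (y / b)) := by
      field_simp
    calc k ^ α ≤ ((1 - μ) * x + μ * y) ^ α := Real.rpow_le_rpow hk h (by linarith)
      _ = C ^ α * ((1 - μ) * a / C * (x / a) + μ * b / C * (y / b)) ^ α := by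
        rw [e, Real.mul_rpow hC0.le (by positivity)]
      _ ≤ C ^ α * ((1 - μ) * a / C * (x / a) ^ α + μ * b / C * (y / b) ^ α) := by gcongr
      _ = _ := by
        rw [Real.div_rpow hx ha.le, Real.div_rpow hy hb.le]; ring
  refine ⟨(1 - μ) * a / C * C ^ α / a ^ α, μ * b / C * C ^ α / b ^ α, by positivity, by positivity, ?_, first, ?_⟩
  · have : (1 - μ) * a / C + μ * b / C = 1 := by rw [← add_div]; exact div_self hC0.ne'
    rw [div_mul_cancel₀ _ haα.ne', div_mul_cancel₀ _ hbα.ne', ← add_mul, this, one_mul]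
  · intro k x y hk hx hy h
    have hα0 : 0 < α := by linarith
    have hr : 1 ≤ 2 / α := by rw [le_div_iff₀ hα0]; linarith
    have conv : ∀ x : ℝ, 0 ≤ x → (x ^ (2 / α)) ^ α = x ^ 2 := fun x hx => by
      rw [← Real.rpow_mul hx, div_mul_cancel₀ _ hα0.ne', Real.rpow_two]
    have := first (k ^ (2 / α)) (x ^ (2 / α)) (y ^ (2 / α)) (by positivity) (by positivity) (by positivity) (by
      refine (Real.rpow_le_rpow hk h (by positivity)).trans ?_
      have := (convexOn_rpow hr).2 (show x ∈ Set.Ici (0:ℝ) from hx) (show y ∈ Set.Ici (0:ℝ) from hy) hm.le hμ.le (by ring)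
      simpa using this)
    rwa [conv k hk, conv x hx, conv y hy] at this

lemma prim_deriv {g : ℝ → ℝ} (hm : Measurable g) (hi : Integrable g) {x : ℝ} (hc : ContinuousAt g x) :
    HasDerivAt (fun x => ∫ r in Set.Iic x, g r) (g x) x := by
  have h := intervalIntegral.integral_hasDerivAt_right (hi.intervalIntegrable (a := 0) (b := x))
    (hm.stronglyMeasurable.stronglyMeasurableAtFilter) hc
  refine (h.add_const (∫ r in Set.Iic 0, g r)).congr_of_eventuallyEq (Filter.Eventually.of_forall fun y => ?_)
  simp only
  rw [← intervalIntegral.integral_Iic_sub_Iic hi.integrableOn hi.integrableOn]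
  ring

lemma prim_cont {g : ℝ → ℝ} (hi : Integrable g) : Continuous (fun x => ∫ r in Set.Iic x, g r) := by
  have h := intervalIntegral.continuous_primitive (fun a b => hi.intervalIntegrable (a := a) (b := b)) 0
  have : (fun x => ∫ r in Set.Iic x, g r) = fun x => (∫ r in (0:ℝ)..x, g r) + ∫ r in Set.Iic 0, g r := by
    ext y
    rw [← intervalIntegral.integral_Iic_sub_Iic hi.integrableOn hi.integrableOn]
    ring
  rw [this]
  exact h.add continuous_const

lemma prim_top {g : ℝ → ℝ} (hi : Integrable g) :
    Filter.Tendsto (fun x => ∫ r in Set.Iic x, g r) Filter.atTop (nhds (∫ r, g r)) :=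
  (aecover_Iic Filter.tendsto_id).integral_tendsto_of_countably_generated hi

lemma prim_bot {g : ℝ → ℝ} (hi : Integrable g) :
    Filter.Tendsto (fun x => ∫ r in Set.Iic x, g r) Filter.atBot (nhds 0) := by
  have h := (aecover_Ioi (μ := volume) (a := fun x : ℝ => x) Filter.tendsto_id).integral_tendsto_of_countably_generated hi
  have h2 := (tendsto_const_nhds (x := ∫ r, g r)).sub h
  rw [sub_self] at h2
  refine h2.congr fun x => ?_
  rw [← intervalIntegral.integral_Iic_add_Ioi (b := x) hi.integrableOn hi.integrableOn]
  ring

lemma support_line {V : ℝ → ℝ} {P : Set ℝ} (hc : ConvexOn ℝ P V) {x0 : ℝ} (hx : x0 ∈ interior P) :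
    ∃ s : ℝ, ∀ x ∈ P, V x0 + s * (x - x0) ≤ V x := by
  refine ⟨derivWithin V (Set.Ioi x0) x0, fun x hxP => ?_⟩
  rcases lt_trichotomy x x0 with h | h | h
  · have h1 := hc.slope_le_leftDeriv_of_mem_interior hxP hx h
    have h2 := hc.leftDeriv_le_rightDeriv_of_mem_interior hx
    have h3 := h1.trans h2
    rw [slope_def_field, div_le_iff₀ (by linarith)] at h3
    linarith
  · subst h; simp
  · have h1 := hc.rightDeriv_le_slope_of_mem_interior hx hxP h
    rw [slope_def_field, le_div_iff₀ (by linarith)] at h1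
    linarith

lemma transport {f : ℝ → ℝ} (hm : Measurable f) (h0 : ∀ x, 0 ≤ f x) (h1 : ∀ x, f x ≤ 1)
    (hc : ConvexOn ℝ {x | 0 < f x} (fun x => -Real.log (f x)))
    (hA : 0 < ∫ x, f x * phi x) :
    ∃ T T' : ℝ → ℝ, (∀ z, HasDerivAt T (T' z) z) ∧ (∀ z, 0 < T' z ∧ T' z ≤ 1) ∧ (∀ z, 0 < f (T z)) ∧
      ∀ z, f (T z) * phi (T z) * T' z = (∫ x, f x * phi x) * phi z := by
  have hi := fphi_int hm h0 h1
  set A := ∫ x, f x * phi x with hAdef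
  set G : ℝ → ℝ := fun x => ∫ r in Set.Iic x, f r * phi r with hG
  set P := {x | 0 < f x} with hP
  have hmeas : Measurable (fun x => f x * phi x) := hm.mul phi_cont.measurable
  have hnn : ∀ x, 0 ≤ f x * phi x := fun x => mul_nonneg (h0 x) (phi_pos x).le
  have hGmono : Monotone G := fun a b hab =>
    setIntegral_mono_set hi.integrableOn (Filter.Eventually.of_forall hnn)
      (Filter.Eventually.of_forall (Set.Iic_subset_Iic.2 hab))
  have hG0 : ∀ x, 0 ≤ G x := fun x => setIntegral_nonneg measurableSet_Iic fun r _ => hnn r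
  have hGA : ∀ x, G x ≤ A := fun x => setIntegral_le_integral hi (Filter.Eventually.of_forall hnn)
  have hex : ∀ y ∈ Set.Ioo 0 A, ∃ x, G x = y := fun y hy => by
    have a1 := ((prim_bot hi).eventually (gt_mem_nhds hy.1)).exists
    have a2 := ((prim_top hi).eventually (lt_mem_nhds hy.2)).exists
    obtain ⟨a, ha⟩ := a1
    obtain ⟨b, hb⟩ := a2
    exact mem_range_of_exists_le_of_exists_ge (prim_cont hi) ⟨a, ha.le⟩ ⟨b, hb.le⟩
  have hint : ∀ x, G x ∈ Set.Ioo 0 A → x ∈ interior P := fun x hx => by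
    have l : ∃ x1 < x, 0 < f x1 := by
      by_contra! hcon
      have : G x = 0 := by
        simp only [hG]
        rw [integral_Iic_eq_integral_Iio]
        apply setIntegral_eq_zero_of_forall_eq_zero
        intro r hr
        rw [le_antisymm (hcon r hr) (h0 r), zero_mul]
      exact hx.1.ne' this
    have r : ∃ x2 > x, 0 < f x2 := by
      by_contra! hcon
      have : ∫ r in Set.Ioi x, f r * phi r = 0 := by
        apply setIntegral_eq_zero_of_forall_eq_zero
        intro r hr
        rw [le_antisymm (hcon r hr) (h0 r), zero_mul]
      have e := intervalIntegral.integral_Iic_add_Ioi (b := x) hi.integrableOn hi.integrableOn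
      rw [this, add_zero] at e
      exact hx.2.ne e
    obtain ⟨x1, hx1, p1⟩ := l
    obtain ⟨x2, hx2, p2⟩ := r
    refine mem_interior.2 ⟨Set.Ioo x1 x2, fun w hw => ?_, isOpen_Ioo, ⟨hx1, hx2⟩⟩
    exact hc.1.ordConnected.out p1 p2 ⟨hw.1.le, hw.2.le⟩
  have hfc : ∀ x ∈ interior P, ContinuousAt (fun x => f x * phi x) x := fun x hx => by
    have c1 : ContinuousAt (fun x => -Real.log (f x)) x :=
      hc.continuousOn_interior.continuousAt (isOpen_interior.mem_nhds hx)
    have c2 : ContinuousAt (fun x => Real.exp (-(-Real.log (f x)))) x := c1.neg.rexp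
    have c3 : ContinuousAt f x := by
      refine c2.congr ?_
      filter_upwards [isOpen_interior.mem_nhds hx] with w hw
      rw [neg_neg, Real.exp_log (interior_subset hw : w ∈ P)]
    exact c3.mul phi_cont.continuousAt
  have hGd : ∀ x ∈ interior P, HasDerivAt G (f x * phi x) x := fun x hx => prim_deriv hmeas hi (hfc x hx)
  have hpos : ∀ x ∈ interior P, 0 < f x * phi x := fun x hx =>
    mul_pos (interior_subset hx : x ∈ P) (phi_pos x)
  have hGs : StrictMonoOn G (interior P) := by
    refine strictMonoOn_of_deriv_pos hc.1.interior (prim_cont hi).continuousOn fun x hx => ?_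
    rw [interior_interior] at hx
    rw [(hGd x hx).deriv]; exact hpos x hx
  have hGI : ∀ x ∈ interior P, G x ∈ Set.Ioo 0 A := fun x hx => by
    obtain ⟨ε, hε, hb⟩ := Metric.isOpen_iff.1 isOpen_interior x hx
    rw [Real.ball_eq_Ioo] at hb
    have m1 : x - ε / 2 ∈ interior P := hb ⟨by linarith, by linarith⟩
    have m2 : x + ε / 2 ∈ interior P := hb ⟨by linarith, by linarith⟩
    exact ⟨(hG0 _).trans_lt (hGs m1 hx (by linarith)), (hGs hx m2 (by linarith)).trans_le (hGA _)⟩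
  choose! Q hQ using hex
  have hQI : ∀ y ∈ Set.Ioo 0 A, Q y ∈ interior P := fun y hy => hint _ (by rw [hQ y hy]; exact hy)
  have hQs : StrictMonoOn Q (Set.Ioo 0 A) := fun a ha b hb hab => by
    by_contra! hcon
    have := hGmono hcon
    rw [hQ a ha, hQ b hb] at this
    linarith
  have hQim : Q '' Set.Ioo 0 A = interior P := by
    ext x; constructor
    · rintro ⟨y, hy, rfl⟩; exact hQI y hy
    · intro hx
      refine ⟨G x, hGI x hx, ?_⟩
      exact hGs.injOn (hQI _ (hGI x hx)) hx (hQ _ (hGI x hx))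
  have hQd : ∀ y ∈ Set.Ioo 0 A, HasDerivAt Q (f (Q y) * phi (Q y))⁻¹ y := fun y hy => by
    have hn : Set.Ioo 0 A ∈ nhds y := isOpen_Ioo.mem_nhds hy
    have hcQ : ContinuousAt Q y := hQs.continuousAt_of_image_mem_nhds hn
      (by rw [hQim]; exact isOpen_interior.mem_nhds (hQI y hy))
    refine HasDerivAt.of_local_left_inverse hcQ (hGd _ (hQI y hy)) (hpos _ (hQI y hy)).ne' ?_
    filter_upwards [hn] with w hw using hQ w hw
  have hPhi : ∀ z, A * Phi z ∈ Set.Ioo 0 A := fun z => by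
    have := Phi_pos z; have := Psi_pos z; have := Phi_add_Psi z
    exact ⟨by positivity, by nlinarith⟩
  have hPd : ∀ z, HasDerivAt Phi (phi z) z := fun z => prim_deriv phi_cont.measurable phi_int phi_cont.continuousAt
  refine ⟨fun z => Q (A * Phi z), fun z => (f (Q (A * Phi z)) * phi (Q (A * Phi z)))⁻¹ * (A * phi z), ?_, ?_, ?_, ?_⟩
  · intro z
    exact (hQd _ (hPhi z)).comp z ((hPd z).const_mul A)
  · intro z
    have hx := hQI _ (hPhi z)
    have hp := hpos _ hx
    have := phi_pos z
    refine ⟨by positivity, ?_⟩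
    rw [inv_mul_le_iff₀ hp, mul_one]
    obtain ⟨s, hs⟩ := support_line hc hx
    refine core_s1 hm h0 h1 (s := s) (fun x => ?_) (hQ _ (hPhi z))
    have hx0 : 0 < f (Q (A * Phi z)) := (interior_subset hx : _ ∈ P)
    rcases (h0 x).eq_or_lt with h | h
    · rw [← h]; positivity
    · have := hs x h
      rw [← Real.log_le_log_iff h (by positivity), Real.log_mul hx0.ne' (Real.exp_pos _).ne', Real.log_exp]
      linarith
  · intro z
    exact (interior_subset (hQI _ (hPhi z)) : _ ∈ P)
  · intro z
    have hp := hpos _ (hQI _ (hPhi z))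
    simp only
    rw [← mul_assoc, mul_inv_cancel₀ hp.ne', one_mul]

lemma d_integral {w w' : ℝ → ℝ} (hd : ∀ z, HasDerivAt w (w' z) z) (h : ∀ z, 0 ≤ w' z ∧ w' z ≤ 1) :
    Integrable (fun z => (z * w z - w' z) * phi z) ∧ ∫ z, (z * w z - w' z) * phi z = 0 := by
  have hwc : Continuous w := continuous_iff_continuousAt.2 fun z => (hd z).continuousAt
  have hlip : ∀ z, |w z| ≤ |w 0| + |z| := fun z => by
    have hL : LipschitzWith 1 w := by
      refine lipschitzWith_of_nnnorm_deriv_le (fun z => (hd z).differentiableAt) fun z => ?_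
      rw [(hd z).deriv, ← NNReal.coe_le_coe]
      simp [abs_of_nonneg (h z).1, (h z).2]
    have := hL.dist_le_mul z 0
    simp only [Real.dist_eq, NNReal.coe_one, one_mul, sub_zero] at this
    have := abs_sub_abs_le_abs_sub (w z) (w 0)
    linarith
  have hw'm : Measurable w' := by
    have : w' = deriv w := by ext z; exact ((hd z).deriv).symm
    rw [this]; exact measurable_deriv w
  set K := |w 0| with hK
  have hK0 : 0 ≤ K := abs_nonneg _
  have hI1 : Integrable (fun z => w z * phi z) := by
    refine (phi_int2.const_mul (K + 1)).mono' ((hwc.mul phi_cont).aestronglyMeasurable)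
      (Filter.Eventually.of_forall fun z => ?_)
    rw [Real.norm_eq_abs, abs_mul, abs_of_pos (phi_pos z), ← mul_assoc]
    refine mul_le_mul_of_nonneg_right ((hlip z).trans ?_) (phi_pos z).le
    have := abs_nonneg z
    rw [← sq_abs z]
    nlinarith [sq_nonneg (|z| - 1/2), mul_nonneg hK0 (sq_nonneg |z|)]
  have hI2 : Integrable (fun z => (z * w z - w' z) * phi z) := by
    refine (phi_int2.const_mul (K + 2)).mono' ?_ (Filter.Eventually.of_forall fun z => ?_)
    · exact (((measurable_id.mul hwc.measurable).sub hw'm).mul phi_cont.measurable).aestronglyMeasurable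
    rw [Real.norm_eq_abs, abs_mul, abs_of_pos (phi_pos z), ← mul_assoc]
    refine mul_le_mul_of_nonneg_right ?_ (phi_pos z).le
    have e1 : |z * w z - w' z| ≤ |z| * |w z| + 1 := by
      refine (abs_sub _ _).trans ?_
      rw [abs_mul, abs_of_nonneg (h z).1]
      linarith [(h z).2]
    have := abs_nonneg z
    have e2 := mul_le_mul_of_nonneg_left (hlip z) this
    rw [← sq_abs z]
    nlinarith [sq_nonneg (|z| - 1), mul_nonneg hK0 (sq_nonneg (|z| - 1/2)), sq_nonneg |z|]
  refine ⟨hI2, ?_⟩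
  have hz := integral_eq_zero_of_hasDerivAt_of_integrable (f := fun z => w z * phi z)
    (f' := fun z => -((z * w z - w' z) * phi z)) (fun z => by
      refine HasDerivAt.congr_deriv ((hd z).mul (phi_deriv z)) ?_
      ring) hI2.neg hI1
  rw [integral_neg] at hz
  linarith

lemma log_phi (z : ℝ) : Real.log (phi z) = Real.log ((√(2 * π))⁻¹) - z ^ 2 / 2 := by
  unfold phi
  rw [Real.log_mul (by positivity) (Real.exp_pos _).ne', Real.log_exp]; ring

lemma oneD {α : ℝ} (hα1 : 1 ≤ α) (hα2 : α ≤ 2) {μ a b : ℝ} (hμ : 0 < μ) (hμ' : μ < 1) (ha : 0 < a) (hb : 0 < b)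
    {f g h : ℝ → ℝ}
    (fm : Measurable f) (f0 : ∀ x, 0 ≤ f x) (f1 : ∀ x, f x ≤ 1)
    (fc : ConvexOn ℝ {x | 0 < f x} (fun x => -Real.log (f x)))
    (gm : Measurable g) (g0 : ∀ x, 0 ≤ g x) (g1 : ∀ x, g x ≤ 1)
    (gc : ConvexOn ℝ {x | 0 < g x} (fun x => -Real.log (g x)))
    (hm : Measurable h) (h0 : ∀ x, 0 ≤ h x) (h1 : ∀ x, h x ≤ 1)
    (hrel : ∀ x y, 0 < f x → 0 < g y → 0 < h ((1 - μ) * x + μ * y) ∧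
      (-Real.log (h ((1 - μ) * x + μ * y))) ^ (1 / α) ≤
        (1 - μ) * (-Real.log (f x)) ^ (1 / α) + μ * (-Real.log (g y)) ^ (1 / α))
    (hA : Real.exp (-a ^ α) ≤ ∫ x, f x * phi x) (hB : Real.exp (-b ^ α) ≤ ∫ x, g x * phi x) :
    Real.exp (-((1 - μ) * a + μ * b) ^ α) ≤ ∫ x, h x * phi x := by
  have hA0 := (Real.exp_pos _).trans_le hA
  have hB0 := (Real.exp_pos _).trans_le hB
  obtain ⟨S, S', hSd, hS', hSp, hSe⟩ := transport fm f0 f1 fc hA0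
  obtain ⟨T, T', hTd, hT', hTp, hTe⟩ := transport gm g0 g1 gc hB0
  set A := ∫ x, f x * phi x
  set B := ∫ x, g x * phi x
  have hlA : -Real.log A ≤ a ^ α := by
    have := (Real.le_log_iff_exp_le hA0).2 hA; linarith
  have hlB : -Real.log B ≤ b ^ α := by
    have := (Real.le_log_iff_exp_le hB0).2 hB; linarith
  obtain ⟨P, Q, hP, hQ, hPQ, hs1, hs2⟩ := scal hα1 hα2 hμ hμ' ha hb
  set c := ((1 - μ) * a + μ * b) ^ α with hc
  have hm0 : 0 < 1 - μ := by linarith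
  have hα0 : 0 < α := by linarith
  -- displacement
  obtain ⟨iS, zS⟩ := d_integral (w := fun z => z - S z) (w' := fun z => 1 - S' z)
    (fun z => (hasDerivAt_id' z).sub (hSd z)) (fun z => ⟨by linarith [(hS' z).2], by linarith [(hS' z).1]⟩)
  obtain ⟨iT, zT⟩ := d_integral (w := fun z => z - T z) (w' := fun z => 1 - T' z)
    (fun z => (hasDerivAt_id' z).sub (hTd z)) (fun z => ⟨by linarith [(hT' z).2], by linarith [(hT' z).1]⟩)
  set dS : ℝ → ℝ := fun z => z * (z - S z) - (1 - S' z) with hdS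
  set dT : ℝ → ℝ := fun z => z * (z - T z) - (1 - T' z) with hdT
  set R : ℝ → ℝ := fun z => (1 - μ) * S z + μ * T z with hR
  set R' : ℝ → ℝ := fun z => (1 - μ) * S' z + μ * T' z with hR'
  have hRd : ∀ z, HasDerivAt R (R' z) z := fun z => ((hSd z).const_mul _).add ((hTd z).const_mul _)
  have hRp : ∀ z, 0 < R' z := fun z =>
    add_pos (mul_pos hm0 (hS' z).1) (mul_pos hμ (hT' z).1)
  have hRs : StrictMono R := strictMono_of_deriv_pos fun z => by rw [(hRd z).deriv]; exact hRp z
  have ptw : ∀ z, Real.exp (-c) * (phi z - (P - (1 - μ)) * (dS z * phi z) - (Q - μ) * (dT z * phi z)) ≤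
      |R' z| • (h (R z) * phi (R z)) := by
    intro z
    obtain ⟨hh0, hh⟩ := hrel (S z) (T z) (hSp z) (hTp z)
    have nlf : 0 ≤ -Real.log (f (S z)) := by
      have := Real.log_nonpos (f0 (S z)) (f1 _); linarith
    have nlg : 0 ≤ -Real.log (g (T z)) := by
      have := Real.log_nonpos (g0 (T z)) (g1 _); linarith
    have nlh : 0 ≤ -Real.log (h (R z)) := by
      have := Real.log_nonpos (h0 (R z)) (h1 _); linarith
    have cv : ∀ x : ℝ, 0 ≤ x → (x ^ (1 / α)) ^ α = x := fun x hx => by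
      rw [← Real.rpow_mul hx, div_mul_cancel₀ _ hα0.ne', Real.rpow_one]
    have i1 := hs1 _ _ _ (Real.rpow_nonneg nlh _) (Real.rpow_nonneg nlf _) (Real.rpow_nonneg nlg _) hh
    rw [cv _ nlh, cv _ nlf, cv _ nlg] at i1
    have i2 := hs2 |z - R z| |z - S z| |z - T z| (abs_nonneg _) (abs_nonneg _) (abs_nonneg _) (by
      have : z - R z = (1 - μ) * (z - S z) + μ * (z - T z) := by simp only [hR]; ring
      rw [this]
      refine (abs_add_le _ _).trans ?_
      rw [abs_mul, abs_mul, abs_of_pos hm0, abs_of_pos hμ])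
    rw [sq_abs, sq_abs, sq_abs] at i2
    have mS : (1 - S' z) ∈ Set.Ico (0:ℝ) 1 := ⟨by linarith [(hS' z).2], by linarith [(hS' z).1]⟩
    have mT : (1 - T' z) ∈ Set.Ico (0:ℝ) 1 := ⟨by linarith [(hT' z).2], by linarith [(hT' z).1]⟩
    have eR : (1 - μ) * (1 - S' z) + μ * (1 - T' z) = 1 - R' z := by simp only [hR']; ring
    have mR : (1 - R' z) ∈ Set.Ico (0:ℝ) 1 := by
      rw [← eR]
      exact (convex_Ico 0 1) mS mT hm0.le hμ.le (by ring)
    have i3 := hs2 _ _ _ (Real.sqrt_nonneg (psi (1 - R' z))) (Real.sqrt_nonneg (psi (1 - S' z)))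
      (Real.sqrt_nonneg (psi (1 - T' z))) (by
        have := sqrt_psi_convex.2 mS mT hm0.le hμ.le (by ring)
        simp only [smul_eq_mul] at this
        rwa [eR] at this)
    have pn : ∀ p ∈ Set.Ico (0:ℝ) 1, 0 ≤ psi p := fun p hp => by
      have := psi_ge hp.1 hp.2; have := sq_nonneg p; linarith
    rw [Real.sq_sqrt (pn _ mR), Real.sq_sqrt (pn _ mS), Real.sq_sqrt (pn _ mT)] at i3
    simp only [psi, sub_sub_cancel] at i3
    have lS := congrArg Real.log (hSe z)
    rw [Real.log_mul (mul_pos (hSp z) (phi_pos _)).ne' (hS' z).1.ne', Real.log_mul (hSp z).ne' (phi_pos _).ne',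
      Real.log_mul hA0.ne' (phi_pos _).ne', log_phi, log_phi] at lS
    have lT := congrArg Real.log (hTe z)
    rw [Real.log_mul (mul_pos (hTp z) (phi_pos _)).ne' (hT' z).1.ne', Real.log_mul (hTp z).ne' (phi_pos _).ne',
      Real.log_mul hB0.ne' (phi_pos _).ne', log_phi, log_phi] at lT
    set D := (P - (1 - μ)) * dS z + (Q - μ) * dT z with hD
    have key : -c - D + Real.log (phi z) ≤ Real.log (h (R z)) + Real.log (phi (R z)) + Real.log (R' z) := by
      rw [log_phi, log_phi]
      have eS : -Real.log (f (S z)) = -Real.log A + dS z - (z - S z) ^ 2 / 2 - (-Real.log (S' z) - (1 - S' z)) := by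
        simp only [hdS]; linear_combination -lS
      have eT : -Real.log (g (T z)) = -Real.log B + dT z - (z - T z) ^ 2 / 2 - (-Real.log (T' z) - (1 - T' z)) := by
        simp only [hdT]; linear_combination -lT
      rw [eS, eT] at i1
      have j1 := mul_le_mul_of_nonneg_left hlA hP
      have j2 := mul_le_mul_of_nonneg_left hlB hQ
      have dR : (1 - μ) * dS z + μ * dT z = z * (z - R z) - (1 - R' z) := by
        simp only [hdS, hdT, hR, hR']; ring
      have eD : D = P * dS z + Q * dT z - (z * (z - R z) - (1 - R' z)) := by rw [← dR, hD]; ring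
      rw [eD]
      linarith
    have hpos : 0 < h (R z) * phi (R z) * R' z := mul_pos (mul_pos hh0 (phi_pos _)) (hRp z)
    rw [← Real.log_mul hh0.ne' (phi_pos _).ne', ← Real.log_mul (mul_pos hh0 (phi_pos _)).ne' (hRp z).ne',
      Real.le_log_iff_exp_le hpos, Real.exp_add, Real.exp_log (phi_pos z), sub_eq_add_neg, Real.exp_add] at key
    rw [abs_of_pos (hRp z), smul_eq_mul, mul_comm (R' z)]
    refine le_trans ?_ key
    have e1 := Real.add_one_le_exp (-D)
    have e2 := phi_pos z
    calc _ = Real.exp (-c) * (-D + 1) * phi z := by rw [hD]; ring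
      _ ≤ _ := by gcongr
  have hih := fphi_int hm h0 h1
  have cov := integral_image_eq_integral_abs_deriv_smul (s := Set.univ) (f := R) (f' := R') MeasurableSet.univ
    (fun z _ => (hRd z).hasDerivWithinAt) hRs.injective.injOn (fun x => h x * phi x)
  have covi := (integrableOn_image_iff_integrableOn_abs_deriv_smul (s := Set.univ) (f := R) (f' := R') MeasurableSet.univ
    (fun z _ => (hRd z).hasDerivWithinAt) hRs.injective.injOn (fun x => h x * phi x)).1 hih.integrableOn
  rw [setIntegral_univ] at cov
  rw [integrableOn_univ] at covi
  have I0 : Integrable (fun z => phi z - (P - (1 - μ)) * (dS z * phi z) - (Q - μ) * (dT z * phi z)) :=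
    (phi_int.sub (iS.const_mul _)).sub (iT.const_mul _)
  have iS1 : Integrable (fun z => (P - (1 - μ)) * (dS z * phi z)) := iS.const_mul _
  have iT1 : Integrable (fun z => (Q - μ) * (dT z * phi z)) := iT.const_mul _
  have iS2 : Integrable (fun z => phi z - (P - (1 - μ)) * (dS z * phi z)) := phi_int.sub iS1
  have v : ∫ z, (phi z - (P - (1 - μ)) * (dS z * phi z) - (Q - μ) * (dT z * phi z)) = 1 := by
    rw [integral_sub iS2 iT1, integral_sub phi_int iS1,
      integral_const_mul, integral_const_mul, zS, zT, phi_one]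
    ring
  calc Real.exp (-c) = ∫ z, Real.exp (-c) * (phi z - (P - (1 - μ)) * (dS z * phi z) - (Q - μ) * (dT z * phi z)) := by
        rw [integral_const_mul, v, mul_one]
    _ ≤ ∫ z, |R' z| • (h (R z) * phi (R z)) := integral_mono (I0.const_mul _) covi ptw
    _ = ∫ x in R '' Set.univ, h x * phi x := cov.symm
    _ ≤ ∫ x, h x * phi x := setIntegral_le_integral hih
        (Filter.Eventually.of_forall fun x => mul_nonneg (h0 x) (phi_pos x).le)

def Good {E : Type*} [AddCommGroup E] [Module ℝ E] (α : ℝ) (u : E → ℝ) : Prop :=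
  ∀ x y : E, ∀ μ : ℝ, 0 < μ → μ < 1 → 0 < u x → 0 < u y → 0 < u ((1 - μ) • x + μ • y) ∧
    (-Real.log (u ((1 - μ) • x + μ • y))) ^ (1 / α) ≤
      (1 - μ) * (-Real.log (u x)) ^ (1 / α) + μ * (-Real.log (u y)) ^ (1 / α)

lemma good_convex {α : ℝ} (hα1 : 1 ≤ α) {f : ℝ → ℝ} (f0 : ∀ x, 0 ≤ f x) (f1 : ∀ x, f x ≤ 1) (hf : Good α f) :
    ConvexOn ℝ {x | 0 < f x} (fun x => -Real.log (f x)) := by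
  have hα0 : 0 < α := by linarith
  rw [convexOn_iff_forall_pos]
  have nl : ∀ x, 0 ≤ -Real.log (f x) := fun x => by
    have := Real.log_nonpos (f0 x) (f1 x); linarith
  have cv : ∀ x : ℝ, 0 ≤ x → (x ^ (1 / α)) ^ α = x := fun x hx => by
    rw [← Real.rpow_mul hx, div_mul_cancel₀ _ hα0.ne', Real.rpow_one]
  constructor
  · rw [convex_iff_forall_pos]
    intro x hx y hy a b ha hb hab
    obtain rfl : a = 1 - b := by linarith
    exact (hf x y b hb (by linarith) hx hy).1
  · intro x hx y hy a b ha hb hab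
    obtain rfl : a = 1 - b := by linarith
    obtain ⟨-, h⟩ := hf x y b hb (by linarith) hx hy
    have h2 := Real.rpow_le_rpow (Real.rpow_nonneg (nl _) _) h hα0.le
    rw [cv _ (nl _)] at h2
    have h3 := (convexOn_rpow hα1).2 (Real.rpow_nonneg (nl x) (1 / α) : _ ∈ Set.Ici (0:ℝ))
      (Real.rpow_nonneg (nl y) (1 / α) : _ ∈ Set.Ici (0:ℝ)) ha.le hb.le hab
    simp only [smul_eq_mul] at h3
    rw [cv _ (nl _), cv _ (nl _)] at h3
    exact h2.trans h3

lemma good_step {N : ℕ} {α : ℝ} (hα1 : 1 ≤ α) (hα2 : α ≤ 2) {u : EuclideanSpace ℝ (Fin N) → ℝ}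
    (um : Measurable u) (u0 : ∀ x, 0 ≤ u x) (u1 : ∀ x, u x ≤ 1) (hu : Good α u) (e : EuclideanSpace ℝ (Fin N)) :
    Measurable (fun x => ∫ z : ℝ, u (x + z • e) * phi z) ∧ (∀ x, 0 ≤ ∫ z : ℝ, u (x + z • e) * phi z) ∧
    (∀ x, ∫ z : ℝ, u (x + z • e) * phi z ≤ 1) ∧ Good α (fun x => ∫ z : ℝ, u (x + z • e) * phi z) := by
  have hα0 : 0 < α := by linarith
  have fm : ∀ x, Measurable (fun z : ℝ => u (x + z • e)) := fun x => um.comp (by fun_prop)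
  have hU0 : ∀ x, 0 ≤ ∫ z : ℝ, u (x + z • e) * phi z :=
    fun x => integral_nonneg fun z => mul_nonneg (u0 _) (phi_pos z).le
  have hU1 : ∀ x, ∫ z : ℝ, u (x + z • e) * phi z ≤ 1 := fun x => by
    rw [← phi_one]
    refine integral_mono (fphi_int (fm x) (fun _ => u0 _) (fun _ => u1 _)) phi_int fun z => ?_
    exact mul_le_of_le_one_left (phi_pos z).le (u1 _)
  refine ⟨?_, hU0, hU1, ?_⟩
  · have : StronglyMeasurable (Function.uncurry fun (x : EuclideanSpace ℝ (Fin N)) (z : ℝ) => u (x + z • e) * phi z) := by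
      apply Measurable.stronglyMeasurable
      exact (um.comp (by fun_prop)).mul (phi_cont.measurable.comp measurable_snd)
    exact this.integral_prod_right.measurable
  · have fg : ∀ x, Good α (fun z : ℝ => u (x + z • e)) := by
      intro x a b μ h0 h1 ha hb
      have := hu _ _ μ h0 h1 ha hb
      have e : (1 - μ) • (x + a • e) + μ • (x + b • e) = x + ((1 - μ) • a + μ • b) • e := by
        simp only [smul_eq_mul]; module
      rwa [e] at this
    intro x y μ hμ hμ' hx hy
    set A := ∫ z : ℝ, u (x + z • e) * phi z with hA
    set B := ∫ z : ℝ, u (y + z • e) * phi z with hB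
    set H := ∫ z : ℝ, u (((1 - μ) • x + μ • y) + z • e) * phi z with hH
    have nA : 0 ≤ -Real.log A := by have := Real.log_nonpos (hU0 x) (hU1 x); linarith
    have nB : 0 ≤ -Real.log B := by have := Real.log_nonpos (hU0 y) (hU1 y); linarith
    have nH : 0 ≤ -Real.log H := by have := Real.log_nonpos (hU0 ((1 - μ) • x + μ • y)) (hU1 _); linarith
    have cv : ∀ x : ℝ, 0 ≤ x → (x ^ (1 / α)) ^ α = x := fun x hx => by
      rw [← Real.rpow_mul hx, div_mul_cancel₀ _ hα0.ne', Real.rpow_one]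
    have lower : ∀ A : ℝ, 0 < A → 0 ≤ -Real.log A → ∀ ε > 0, Real.exp (-((-Real.log A) ^ (1 / α) + ε) ^ α) ≤ A := by
      intro A hA nA ε hε
      rw [← Real.le_log_iff_exp_le hA]
      have := Real.rpow_le_rpow (Real.rpow_nonneg nA (1 / α)) (by linarith : (-Real.log A) ^ (1 / α) ≤ (-Real.log A) ^ (1 / α) + ε) hα0.le
      rw [cv _ nA] at this
      linarith
    have main : ∀ ε > 0, Real.exp (-((1 - μ) * ((-Real.log A) ^ (1 / α) + ε) + μ * ((-Real.log B) ^ (1 / α) + ε)) ^ α) ≤ H := by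
      intro ε hε
      refine oneD hα1 hα2 hμ hμ' (by have := Real.rpow_nonneg nA (1 / α); linarith) (by have := Real.rpow_nonneg nB (1 / α); linarith)
        (fm x) (fun _ => u0 _) (fun _ => u1 _) (good_convex hα1 (fun _ => u0 _) (fun _ => u1 _) (fg x))
        (fm y) (fun _ => u0 _) (fun _ => u1 _) (good_convex hα1 (fun _ => u0 _) (fun _ => u1 _) (fg y))
        (fm _) (fun _ => u0 _) (fun _ => u1 _) ?_ (lower A hx nA ε hε) (lower B hy nB ε hε)
      intro a b ha hb
      have := hu _ _ μ hμ hμ' ha hb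
      have e : (1 - μ) • (x + a • e) + μ • (y + b • e) = ((1 - μ) • x + μ • y) + ((1 - μ) * a + μ * b) • e := by
        module
      rwa [e] at this
    have hHpos : 0 < H := (Real.exp_pos _).trans_le (main 1 one_pos)
    refine ⟨hHpos, ?_⟩
    refine le_of_forall_pos_le_add fun ε hε => ?_
    have h1 := main ε hε
    rw [← Real.le_log_iff_exp_le hHpos] at h1
    have p1 := Real.rpow_nonneg nA (1 / α)
    have p2 := Real.rpow_nonneg nB (1 / α)
    have hm0 : 0 < 1 - μ := by linarith
    have e1 : (1 - μ) * ((-Real.log A) ^ (1 / α) + ε) + μ * ((-Real.log B) ^ (1 / α) + ε) =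
      (1 - μ) * (-Real.log A) ^ (1 / α) + μ * (-Real.log B) ^ (1 / α) + ε := by ring
    rw [e1] at h1
    set C := (1 - μ) * (-Real.log A) ^ (1 / α) + μ * (-Real.log B) ^ (1 / α) + ε with hC
    have hC0 : 0 ≤ C := by positivity
    have h2 : -Real.log H ≤ C ^ α := by linarith
    have h3 := Real.rpow_le_rpow nH h2 (by positivity : 0 ≤ 1 / α)
    rwa [← Real.rpow_mul hC0, mul_one_div_cancel hα0.ne', Real.rpow_one] at h3

lemma good_iter {N : ℕ} {α : ℝ} (hα1 : 1 ≤ α) (hα2 : α ≤ 2) (n : ℕ) :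
    ∀ (u : EuclideanSpace ℝ (Fin N) → ℝ), Measurable u → (∀ x, 0 ≤ u x) → (∀ x, u x ≤ 1) → Good α u →
    ∀ v : Fin n → EuclideanSpace ℝ (Fin N),
    Measurable (fun x => ∫ z : Fin n → ℝ, u (x + ∑ i, z i • v i) * ∏ i, phi (z i)) ∧
    (∀ x, 0 ≤ ∫ z : Fin n → ℝ, u (x + ∑ i, z i • v i) * ∏ i, phi (z i)) ∧
    (∀ x, ∫ z : Fin n → ℝ, u (x + ∑ i, z i • v i) * ∏ i, phi (z i) ≤ 1) ∧
    Good α (fun x => ∫ z : Fin n → ℝ, u (x + ∑ i, z i • v i) * ∏ i, phi (z i)) := by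
  induction n with
  | zero =>
    intro u um u0 u1 hu v
    have : (fun x => ∫ z : Fin 0 → ℝ, u (x + ∑ i, z i • v i) * ∏ i, phi (z i)) = u := by
      ext x
      have hv : (volume : Measure (Fin 0 → ℝ)).real Set.univ = 1 := by
        rw [Measure.real, volume_pi, Measure.pi_univ]; simp
      simp [hv]
    refine ⟨by rw [this]; exact um, fun x => ?_, fun x => ?_, by rw [this]; exact hu⟩
    · rw [congrFun this x]; exact u0 x
    · rw [congrFun this x]; exact u1 x
  | succ n ih =>
    intro u um u0 u1 hu v
    obtain ⟨m, p0, p1, g⟩ := ih u um u0 u1 hu (fun i => v i.succ)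
    have step := good_step hα1 hα2 m p0 p1 g (v 0)
    have key : ∀ x, ∫ z : Fin (n + 1) → ℝ, u (x + ∑ i, z i • v i) * ∏ i, phi (z i) =
        ∫ r : ℝ, (∫ z : Fin n → ℝ, u (x + r • v 0 + ∑ i, z i • v i.succ) * ∏ i, phi (z i)) * phi r := by
      intro x
      rw [← ((volume_preserving_piFinSuccAbove (fun _ : Fin (n + 1) => ℝ) 0).symm).integral_comp']
      have hi : Integrable (fun z : Fin (n + 1) → ℝ => u (x + ∑ i, z i • v i) * ∏ i, phi (z i)) := by
        refine (Integrable.fintype_prod (μ := fun _ => volume) (f := fun _ => phi) (fun _ => phi_int)).bdd_mul (c := 1)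
          (um.comp (by fun_prop)).aestronglyMeasurable (Filter.Eventually.of_forall fun z => ?_)
        rw [Real.norm_eq_abs, abs_of_nonneg (u0 _)]; exact u1 _
      have hi2 := ((volume_preserving_piFinSuccAbove (fun _ : Fin (n + 1) => ℝ) 0).symm).integrable_comp_of_integrable hi
      refine (integral_prod _ hi2).trans ?_
      congr 1; ext r
      rw [← integral_mul_const]
      congr 1; ext z
      simp [MeasurableEquiv.piFinSuccAbove_symm_apply, Fin.sum_univ_succ, Fin.prod_univ_succ, add_assoc, Fin.insertNthEquiv]
      ring
    simp only [key]
    exact step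

lemma heat_repr {N : ℕ} {t : ℝ} (ht : 0 < t) : ∃ c : ℝ, 0 < c ∧ ∃ v : Fin N → EuclideanSpace ℝ (Fin N),
    ∀ (u : EuclideanSpace ℝ (Fin N) → ℝ) (x : EuclideanSpace ℝ (Fin N)),
      heatSol N u t x = c * ∫ z : Fin N → ℝ, u (x + ∑ i, z i • v i) * ∏ i, phi (z i) := by
  set R := √(2 * t) with hR
  have hRpos : 0 < R := by positivity
  have hR2 : R ^ 2 = 2 * t := Real.sq_sqrt (by positivity)
  set k := (4 * π * t) ^ (-(N : ℝ) / 2) * (√(2 * π)) ^ N with hk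
  have hkpos : 0 < k := by positivity
  have hg : ∀ z : Fin N → ℝ, gauss N (R • WithLp.toLp 2 z) t = k * ∏ i, phi (z i) := by
    intro z
    unfold gauss phi
    rw [Finset.prod_mul_distrib, Finset.prod_const, ← Real.exp_sum, norm_smul, mul_pow, EuclideanSpace.norm_sq_eq,
      Real.norm_eq_abs, sq_abs, hR2]
    have e : -(2 * t * ∑ i, ‖(WithLp.toLp 2 z : EuclideanSpace ℝ (Fin N)) i‖ ^ 2) / (4 * t) = ∑ i, -z i ^ 2 / 2 := by
      simp only [Real.norm_eq_abs, sq_abs]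
      rw [← Finset.sum_div, Finset.sum_neg_distrib]
      field_simp
      ring
    rw [e, hk, Finset.card_univ, Fintype.card_fin, inv_pow]
    have : (√(2 * π)) ^ N ≠ 0 := by positivity
    field_simp
  refine ⟨R ^ N * k, by positivity, fun i => -(R • EuclideanSpace.single i 1), fun u x => ?_⟩
  unfold heatSol
  have e1 : ∫ y, gauss N (x - y) t * u y = ∫ y, gauss N y t * u (x - y) := by
    rw [← integral_sub_left_eq_self (fun y => gauss N y t * u (x - y)) volume x]
    simp
  have e2 := Measure.integral_comp_smul (volume : Measure (EuclideanSpace ℝ (Fin N))) (fun y => gauss N y t * u (x - y)) R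
  rw [finrank_euclideanSpace_fin, abs_of_pos (by positivity), smul_eq_mul] at e2
  have e3 : ∫ y, gauss N y t * u (x - y) = R ^ N * ∫ y : EuclideanSpace ℝ (Fin N), gauss N (R • y) t * u (x - R • y) := by
    rw [e2, ← mul_assoc, mul_inv_cancel₀ (by positivity), one_mul]
  rw [e1, e3, mul_assoc, ← (PiLp.volume_preserving_toLp (Fin N)).integral_comp
    (MeasurableEquiv.toLp 2 (Fin N → ℝ)).measurableEmbedding, ← integral_const_mul k]
  congr 2; ext z
  rw [hg]
  have : x - R • WithLp.toLp 2 z = x + ∑ i, z i • (-(R • EuclideanSpace.single i (1:ℝ))) := by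
    ext j
    simp [Finset.sum_apply, Pi.single_apply, mul_comm]
    ring
  rw [this]; ring

lemma good_of_conc {N : ℕ} {α : ℝ} {u : EuclideanSpace ℝ (Fin N) → ℝ}
    (h : ERealConcaveOn (fun x => Lfun α (u x))) : Good α u := by
  intro x y μ hμ hμ' hx hy
  have := h x y μ hμ.le hμ'.le
  simp only [Lfun, if_pos hx, if_pos hy] at this
  by_cases hz : 0 < u ((1 - μ) • x + μ • y)
  · rw [if_pos hz] at this
    refine ⟨hz, ?_⟩
    norm_cast at this
    linarith
  · rw [if_neg hz] at this
    norm_cast at this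

lemma conc_of_good {N : ℕ} {α : ℝ} {u : EuclideanSpace ℝ (Fin N) → ℝ}
    (h : Good α u) : ERealConcaveOn (fun x => Lfun α (u x)) := by
  intro x y μ hμ hμ'
  rcases hμ.eq_or_lt with rfl | hμ
  · simp
  rcases hμ'.eq_or_lt with rfl | hμ'
  · simp
  have hm : 0 < 1 - μ := by linarith
  simp only [Lfun]
  by_cases hx : 0 < u x
  · by_cases hy : 0 < u y
    · obtain ⟨hz, h2⟩ := h x y μ hμ hμ' hx hy
      rw [if_pos hx, if_pos hy, if_pos hz]
      norm_cast
      linarith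
    · rw [if_neg hy, EReal.coe_mul_bot_of_pos hμ, EReal.add_bot]; exact bot_le
  · rw [if_neg hx, EReal.coe_mul_bot_of_pos hm, EReal.bot_add]; exact bot_le

/-- The heat flow on `ℝ^N` preserves `α`-logconcavity for `1 ≤ α ≤ 2`. -/
theorem heat_preserves_alpha_logconcavity
    (N : ℕ) (hN : 1 ≤ N) (α : ℝ) (hα₁ : 1 ≤ α) (hα₂ : α ≤ 2)
    (u₀ : EuclideanSpace ℝ (Fin N) → ℝ) (hmeas : Measurable u₀)
    (h0 : ∀ x, 0 ≤ u₀ x) (hbd : ∃ M : ℝ, ∀ x, u₀ x ≤ M)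
    (hconc : AlphaLogConcave α u₀) :
    ∀ t : ℝ, 0 < t → AlphaLogConcave α (heatSol N u₀ t) := by
  intro t ht
  obtain ⟨κ₀, hκ₀, hK⟩ := hconc
  obtain ⟨M, hM⟩ := hbd
  obtain ⟨c, hc, v, hrep⟩ := heat_repr (N := N) ht
  have hM1 : 0 < |M| + 1 := by positivity
  set κ₁ := min κ₀ (1 / (|M| + 1)) with hκ₁
  have hκ₁0 : 0 < κ₁ := lt_min hκ₀ (by positivity)
  refine ⟨κ₁ / c, by positivity, fun κ hκ hκ' => conc_of_good ?_⟩
  rw [le_div_iff₀ hc] at hκ'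
  have hkc : 0 < κ * c := by positivity
  have hg := good_of_conc (hK (κ * c) hkc (hκ'.trans (min_le_left _ _)))
  obtain ⟨-, -, -, hG⟩ := good_iter hα₁ hα₂ N (fun x => κ * c * u₀ x) (hmeas.const_mul _)
    (fun x => mul_nonneg hkc.le (h0 x)) (fun x => by
      have h1 : κ * c ≤ 1 / (|M| + 1) := hκ'.trans (min_le_right _ _)
      rw [le_div_iff₀ hM1] at h1
      have h2 : u₀ x ≤ |M| + 1 := by linarith [hM x, le_abs_self M]
      exact (mul_le_mul_of_nonneg_left h2 hkc.le).trans h1) hg v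
  have e : (fun x => κ * heatSol N u₀ t x) =
      fun x => ∫ z : Fin N → ℝ, κ * c * u₀ (x + ∑ i, z i • v i) * ∏ i, phi (z i) := by
    ext x
    rw [hrep, ← mul_assoc, ← integral_const_mul]
    simp only [mul_assoc]
  rw [e]
  exact hG
end

section
/- Let N ≥ 1 and let u₀ : ℝ^N → ℝ be a bounded nonnegative measurable function with compact support and ∫_{ℝ^N} u₀ > 0. Then for every α with 1 ≤ α < 2 there exists T_α > 0 such that for all t ≥ T_α: 0 < [e^{tΔ}u₀](x) < 1 for all x ∈ ℝ^N, and the function x ↦ L_α([e^{tΔ}u₀](x)) is concave on ℝ^N; in particular, e^{tΔ}u₀ is α-logconcave in ℝ^N for all t ≥ T_α. -/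
open MeasureTheory Real

section Aux
open ProbabilityTheory in
lemma aux_cgf {Ω : Type*} [MeasurableSpace Ω] (μ : Measure Ω) [IsFiniteMeasure μ] (hμ : μ ≠ 0)
    (X : Ω → ℝ) (hX : AEMeasurable X μ) (b : ℝ) (hb : ∀ᵐ ω ∂μ, X ω ∈ Set.Icc (-b) b) (s : ℝ) :
    HasDerivAt (cgf X μ) (deriv (cgf X μ) s) s ∧
    HasDerivAt (deriv (cgf X μ)) (deriv (deriv (cgf X μ)) s) s ∧
    |deriv (cgf X μ) s| ≤ b ∧ deriv (deriv (cgf X μ)) s ≤ b ^ 2 := by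
  have hi : ∀ s, Integrable (fun ω => exp (s * X ω)) μ := fun s =>
    integrable_exp_mul_of_mem_Icc hX hb
  have hs : s ∈ interior (integrableExpSet X μ) := by
    have : integrableExpSet X μ = Set.univ := by
      ext s; simpa [integrableExpSet] using hi s
    simp [this]
  haveI : NeZero μ := ⟨hμ⟩
  have han := analyticAt_cgf hs
  haveI : IsProbabilityMeasure (μ.tilted (s * X ·)) := isProbabilityMeasure_tilted (hi s)
  have hb' := (tilted_absolutelyContinuous μ (s * X ·)) hb
  refine ⟨han.differentiableAt.hasDerivAt, han.deriv.differentiableAt.hasDerivAt, ?_, ?_⟩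
  · rw [← integral_tilted_mul_self hs]
    have := norm_integral_le_of_norm_le_const (μ := μ.tilted (s * X ·)) (f := X) (C := b) (by
      filter_upwards [hb'] with ω h
      exact abs_le.2 h)
    simpa using this
  · have h2 := variance_le_sq_of_bounded hb' (hX.mono_ac (tilted_absolutelyContinuous μ (s * X ·)))
    rw [variance_tilted_mul hs, iteratedDeriv_succ, iteratedDeriv_one] at h2
    convert h2 using 2
    ring

lemma aux_rpow (f f' f'' : ℝ → ℝ) (α : ℝ) (hα : 1 ≤ α) (h1 : ∀ s, HasDerivAt f (f' s) s)
    (h2 : ∀ s, HasDerivAt f' (f'' s) s) (hpos : ∀ s, 0 < f s)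
    (h : ∀ s, (α - 1) * f' s ^ 2 ≤ α * (f s * f'' s)) :
    ConvexOn ℝ Set.univ (fun s => f s ^ (1 / α)) := by
  have d1 : ∀ s, HasDerivAt (fun s => f s ^ (1 / α)) (f' s * (1/α) * f s ^ (1/α - 1)) s :=
    fun s => (h1 s).rpow_const (Or.inl (hpos s).ne')
  have d2 : ∀ s, HasDerivAt (fun s => f' s * (1/α) * f s ^ (1/α - 1))
      (f'' s * (1/α) * f s ^ (1/α - 1) +
        f' s * (1/α) * (f' s * (1/α - 1) * f s ^ (1/α - 1 - 1))) s :=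
    fun s => ((h2 s).mul_const _).mul ((h1 s).rpow_const (Or.inl (hpos s).ne'))
  refine convexOn_of_hasDerivWithinAt2_nonneg convex_univ
    (fun s _ => (d1 s).continuousAt.continuousWithinAt)
    (fun s _ => (d1 s).hasDerivWithinAt) (fun s _ => (d2 s).hasDerivWithinAt) ?_
  intro s _
  have e : f s ^ (1/α - 1) = f s ^ (1/α - 1 - 1) * f s := by
    rw [← Real.rpow_add_one (hpos s).ne']; ring_nf
  rw [e]
  have hp : 0 < f s ^ (1/α - 1 - 1) := Real.rpow_pos_of_pos (hpos s) _
  have a0 : 0 < α := by linarith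
  have : f'' s * (1/α) * (f s ^ (1/α - 1 - 1) * f s) +
        f' s * (1/α) * (f' s * (1/α - 1) * f s ^ (1/α - 1 - 1))
      = f s ^ (1/α - 1 - 1) * (1/α)^2 * (α * (f s * f'' s) - (α - 1) * f' s ^ 2) := by
    field_simp
    ring
  rw [this]
  have := h s
  exact mul_nonneg (by positivity) (by linarith)

/-- the algebraic inequality -/
lemma aux_alg (α R t K r : ℝ) (hα : 1 ≤ α) (hα2 : α < 2) (ht : 1 ≤ t)
    (ht2 : (3 * α - 2) / 2 ≤ α * (1 - R ^ 2 / (2 * t)))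
    (hK : 2 * (2 * α - 2) ^ 2 * R ^ 2 / ((2 - α) / 2) + 2 * (2 * α - 2) * R ^ 2 ≤ K) :
    2 * (α - 1) * (r + R) ^ 2 ≤ α * (1 - R ^ 2 / (2 * t)) * ((r - R) ^ 2 + 4 * t * K) := by
  set d := (2 - α) / 2 with hd
  have d0 : 0 < d := by rw [hd]; linarith
  set b := 2 * α - 2 with hb
  have b0 : 0 ≤ b := by rw [hb]; linarith
  set q := 2 * b ^ 2 * R ^ 2 / d with hq
  have q0 : 0 ≤ q := by positivity
  have qd : q * d = 2 * b ^ 2 * R ^ 2 := by rw [hq]; field_simp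
  have K0 : 0 ≤ K := le_trans (by positivity) hK
  have A0 : 0 ≤ (r - R) ^ 2 + 4 * t * K := by positivity
  refine le_trans ?_ (mul_le_mul_of_nonneg_right ht2 A0)
  have hA : (3 * α - 2) / 2 = b + d := by rw [hb, hd]; ring
  have e1 : 2 * (α - 1) = b := by rw [hb]; ring
  rw [hA, e1]
  have hbd : 1 / 2 ≤ b + d := by rw [← hA]; linarith
  have h1 : K ≤ t * K := by nlinarith
  have h2 : 2 * (t * K) ≤ (b + d) * (4 * (t * K)) := by nlinarith [mul_nonneg (by linarith : 0 ≤ t) K0]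
  -- d p^2 - 4 b R p + 2 q ≥ 0
  have h3 : 0 ≤ d * (r - R) ^ 2 - 4 * b * R * (r - R) + 2 * q := by
    have : 0 ≤ d * (d * (r - R) ^ 2 - 4 * b * R * (r - R) + 2 * q) := by
      nlinarith [sq_nonneg (d * (r - R) - 2 * b * R)]
    exact nonneg_of_mul_nonneg_right this d0
  nlinarith

variable {N : ℕ}

lemma aux_w (u₀ : EuclideanSpace ℝ (Fin N) → ℝ) (h0 : ∀ x, 0 ≤ u₀ x)
    (hu : Integrable u₀) (hint : 0 < ∫ y, u₀ y) (t : ℝ) (ht : 0 < t)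
    (x : EuclideanSpace ℝ (Fin N)) :
    Integrable (fun y => exp (-‖x - y‖ ^ 2 / (4 * t)) * u₀ y) ∧
    0 < ∫ y, exp (-‖x - y‖ ^ 2 / (4 * t)) * u₀ y := by
  have hI : Integrable (fun y => exp (-‖x - y‖ ^ 2 / (4 * t)) * u₀ y) := by
    refine hu.bdd_mul (c := 1) ?_ ?_
    · exact (Continuous.aestronglyMeasurable (by fun_prop))
    · refine Filter.Eventually.of_forall fun y => ?_
      rw [Real.norm_eq_abs, abs_of_pos (exp_pos _), exp_le_one_iff]
      rw [neg_div]
      have : 0 ≤ ‖x - y‖ ^ 2 / (4 * t) := by positivity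
      linarith
  refine ⟨hI, ?_⟩
  rw [integral_pos_iff_support_of_nonneg (fun y => mul_nonneg (exp_pos _).le (h0 y)) hI]
  rw [integral_pos_iff_support_of_nonneg h0 hu] at hint
  convert hint using 2
  ext y
  simp [exp_ne_zero]

lemma aux_heat (u₀ : EuclideanSpace ℝ (Fin N) → ℝ) (t : ℝ) (x : EuclideanSpace ℝ (Fin N)) :
    heatSol N u₀ t x = (4 * Real.pi * t) ^ (-(N : ℝ) / 2) *
      ∫ y, exp (-‖x - y‖ ^ 2 / (4 * t)) * u₀ y := by
  rw [heatSol, ← integral_const_mul]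
  simp only [gauss, mul_assoc]

lemma aux_upper (u₀ : EuclideanSpace ℝ (Fin N) → ℝ) (h0 : ∀ x, 0 ≤ u₀ x)
    (hu : Integrable u₀) (hint : 0 < ∫ y, u₀ y) (R : ℝ) (hR : ∀ y, u₀ y ≠ 0 → ‖y‖ ≤ R)
    (t : ℝ) (ht : 0 < t) (x : EuclideanSpace ℝ (Fin N)) :
    ∫ y, exp (-‖x - y‖ ^ 2 / (4 * t)) * u₀ y ≤
      exp (-((‖x‖ - R) ^ 2 - R ^ 2) / (4 * t)) * ∫ y, u₀ y := by
  rw [← integral_const_mul]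
  refine integral_mono (aux_w u₀ h0 hu hint t ht x).1 (hu.const_mul _) fun y => ?_
  by_cases hy : u₀ y = 0
  · simp [hy]
  · refine mul_le_mul_of_nonneg_right (exp_le_exp.2 ?_) (h0 y)
    refine div_le_div_of_nonneg_right ?_ (by positivity)
    have h1 := hR y hy
    have h2 : ‖x - y‖ ^ 2 = ‖x‖ ^ 2 - 2 * inner ℝ x y + ‖y‖ ^ 2 := norm_sub_sq_real x y
    have h3 : inner ℝ x y ≤ ‖x‖ * ‖y‖ := real_inner_le_norm x y
    nlinarith [norm_nonneg x, norm_nonneg y, mul_le_mul_of_nonneg_left h1 (norm_nonneg x)]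

open ProbabilityTheory in
lemma aux_line (u₀ : EuclideanSpace ℝ (Fin N) → ℝ) (hm : Measurable u₀) (h0 : ∀ x, 0 ≤ u₀ x)
    (hu : Integrable u₀) (hint : 0 < ∫ y, u₀ y) (R : ℝ) (hR : ∀ y, u₀ y ≠ 0 → ‖y‖ ≤ R)
    (t : ℝ) (ht : 0 < t) (x e : EuclideanSpace ℝ (Fin N)) :
    ∃ k k' k'' : ℝ → ℝ, (∀ s, HasDerivAt k (k' s) s) ∧ (∀ s, HasDerivAt k' (k'' s) s) ∧
      (∀ s, |k' s| ≤ R * ‖e‖ / (2 * t)) ∧ (∀ s, k'' s ≤ (R * ‖e‖ / (2 * t)) ^ 2) ∧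
      ∀ s, Real.log (∫ y, exp (-‖x + s • e - y‖ ^ 2 / (4 * t)) * u₀ y) =
        -(s ^ 2 * ‖e‖ ^ 2 + 2 * s * inner ℝ x e) / (4 * t) + k s := by
  set w : EuclideanSpace ℝ (Fin N) → ℝ := fun y => exp (-‖x - y‖ ^ 2 / (4 * t)) * u₀ y with hw
  obtain ⟨wI, wpos⟩ := aux_w u₀ h0 hu hint t ht x
  have w0 : ∀ y, 0 ≤ w y := fun y => mul_nonneg (exp_pos _).le (h0 y)
  have wm : Measurable w := by
    refine Measurable.mul (Continuous.measurable (by fun_prop)) hm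
  set μ : Measure (EuclideanSpace ℝ (Fin N)) :=
    volume.withDensity (fun y => ENNReal.ofReal (w y)) with hμd
  have key : ∀ g : EuclideanSpace ℝ (Fin N) → ℝ, ∫ y, g y ∂μ = ∫ y, w y * g y := by
    intro g
    rw [hμd, integral_withDensity_eq_integral_toReal_smul₀ wm.ennreal_ofReal.aemeasurable
      (Filter.Eventually.of_forall fun _ => ENNReal.ofReal_lt_top)]
    simp only [ENNReal.toReal_ofReal (w0 _), smul_eq_mul]
  haveI : IsFiniteMeasure μ := isFiniteMeasure_withDensity_ofReal wI.2
  have hμ : μ ≠ 0 := by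
    intro h
    have := key (fun _ => 1)
    rw [h] at this
    simp only [integral_zero_measure, mul_one] at this
    exact wpos.ne this
  set X : EuclideanSpace ℝ (Fin N) → ℝ := fun y => inner ℝ y e / (2 * t) with hXd
  have hX : Measurable X := Continuous.measurable (by fun_prop)
  have hb : ∀ᵐ y ∂μ, X y ∈ Set.Icc (-(R * ‖e‖ / (2 * t))) (R * ‖e‖ / (2 * t)) := by
    rw [hμd, ae_withDensity_iff wm.ennreal_ofReal]
    refine Filter.Eventually.of_forall fun y hy => ?_
    have hy' : u₀ y ≠ 0 := by
      intro h
      exact hy (by simp [hw, h])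
    rw [Set.mem_Icc, ← abs_le, hXd]
    simp only
    rw [abs_div, abs_of_pos (by positivity : 0 < 2 * t)]
    refine div_le_div_of_nonneg_right ?_ (by positivity)
    exact (abs_real_inner_le_norm y e).trans
      (mul_le_mul_of_nonneg_right (hR y hy') (norm_nonneg e))
  have hc := aux_cgf μ hμ X hX.aemeasurable _ hb
  refine ⟨cgf X μ, deriv (cgf X μ), deriv (deriv (cgf X μ)), fun s => (hc s).1,
    fun s => (hc s).2.1, fun s => (hc s).2.2.1, fun s => (hc s).2.2.2, fun s => ?_⟩
  have hmp : 0 < mgf X μ s := mgf_pos' hμ (integrable_exp_mul_of_mem_Icc hX.aemeasurable hb)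
  have : ∫ y, exp (-‖x + s • e - y‖ ^ 2 / (4 * t)) * u₀ y =
      exp (-(s ^ 2 * ‖e‖ ^ 2 + 2 * s * inner ℝ x e) / (4 * t)) * mgf X μ s := by
    rw [mgf, key, ← integral_const_mul]
    congr 1
    ext y
    simp only [hw, hXd]
    rw [mul_comm _ (exp (s * _)), ← mul_assoc, ← mul_assoc, ← exp_add, ← exp_add]
    congr 2
    have e1 : ‖x + s • e - y‖ ^ 2 = ‖x - y‖ ^ 2 + 2 * (s * (inner ℝ x e - inner ℝ y e))
        + s ^ 2 * ‖e‖ ^ 2 := by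
      rw [show x + s • e - y = (x - y) + s • e by abel, norm_add_sq_real, inner_smul_right,
        inner_sub_left, norm_smul, mul_pow, Real.norm_eq_abs, sq_abs]
    rw [e1]
    field_simp
    ring
  rw [this, Real.log_mul (exp_pos _).ne' hmp.ne', Real.log_exp, cgf]

lemma aux_concave (u₀ : EuclideanSpace ℝ (Fin N) → ℝ) (hm : Measurable u₀) (h0 : ∀ x, 0 ≤ u₀ x)
    (hu : Integrable u₀) (hint : 0 < ∫ y, u₀ y) (R : ℝ) (hR0 : 0 ≤ R)
    (hR : ∀ y, u₀ y ≠ 0 → ‖y‖ ≤ R) (α : ℝ) (hα : 1 ≤ α) (hα2 : α < 2)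
    (t K : ℝ) (ht : 1 ≤ t) (ht2 : (3 * α - 2) / 2 ≤ α * (1 - R ^ 2 / (2 * t)))
    (hK : 2 * (2 * α - 2) ^ 2 * R ^ 2 / ((2 - α) / 2) + 2 * (2 * α - 2) * R ^ 2 ≤ K)
    (hK0 : 0 < K)
    (hlow : ∀ x, ((‖x‖ - R) ^ 2 + 4 * t * K) / (4 * t) ≤ -Real.log (heatSol N u₀ t x))
    (hup : ∀ x, 0 < heatSol N u₀ t x)
    (κ : ℝ) (hκ : 0 < κ) (hκ1 : κ ≤ 1) :
    ERealConcaveOn (fun x => Lfun α (κ * heatSol N u₀ t x)) := by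
  intro x y μ hμ0 hμ1
  have t0 : 0 < t := by linarith
  simp only [Lfun, mul_pos hκ (hup _), if_true]
  rw [← EReal.coe_mul, ← EReal.coe_mul, ← EReal.coe_add, EReal.coe_le_coe_iff]
  set e := y - x with he
  obtain ⟨k, k', k'', hk, hk', hb, hb', hlog⟩ := aux_line u₀ hm h0 hu hint R hR t t0 x e
  have C0 : 0 < (4 * Real.pi * t) ^ (-(N : ℝ) / 2) := Real.rpow_pos_of_pos (by positivity) _
  set c := -Real.log κ - Real.log ((4 * Real.pi * t) ^ (-(N : ℝ) / 2)) with hc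
  let f : ℝ → ℝ := fun s => c + (s ^ 2 * ‖e‖ ^ 2 + 2 * s * inner ℝ x e) / (4 * t) - k s
  let f' : ℝ → ℝ := fun s => (s * ‖e‖ ^ 2 + inner ℝ x e) / (2 * t) - k' s
  let f'' : ℝ → ℝ := fun s => ‖e‖ ^ 2 / (2 * t) - k'' s
  have fe : ∀ s, -Real.log (κ * heatSol N u₀ t (x + s • e)) = f s := by
    intro s
    rw [aux_heat, Real.log_mul hκ.ne' (mul_pos C0 (aux_w u₀ h0 hu hint t t0 _).2).ne',
      Real.log_mul C0.ne' (aux_w u₀ h0 hu hint t t0 _).2.ne', hlog]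
    simp only [f, hc]
    ring
  have d1 : ∀ s, HasDerivAt f (f' s) s := by
    intro s
    have h1 : HasDerivAt (fun s : ℝ => c + (s ^ 2 * ‖e‖ ^ 2 + 2 * s * inner ℝ x e) / (4 * t))
        (((2 * s) * ‖e‖ ^ 2 + 2 * inner ℝ x e) / (4 * t)) s := by
      have := (((((hasDerivAt_id s).pow 2).mul_const (‖e‖ ^ 2)).add
        (((hasDerivAt_id s).const_mul 2).mul_const (inner ℝ x e))).div_const (4 * t)).const_add c
      refine HasDerivAt.congr_deriv this ?_
      simp
    refine HasDerivAt.congr_deriv (h1.sub (hk s)) ?_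
    simp only [f']
    field_simp
    ring
  have d2 : ∀ s, HasDerivAt f' (f'' s) s := by
    intro s
    have h1 : HasDerivAt (fun s : ℝ => (s * ‖e‖ ^ 2 + inner ℝ x e) / (2 * t))
        (‖e‖ ^ 2 / (2 * t)) s := by
      have := ((((hasDerivAt_id s).mul_const (‖e‖ ^ 2)).add_const (inner ℝ x e)).div_const (2 * t))
      refine HasDerivAt.congr_deriv this ?_
      simp
    exact h1.sub (hk' s)
  have flow : ∀ s, ((‖x + s • e‖ - R) ^ 2 + 4 * t * K) / (4 * t) ≤ f s := by
    intro s
    rw [← fe, Real.log_mul hκ.ne' (hup _).ne']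
    have := hlow (x + s • e)
    have := Real.log_nonpos hκ.le hκ1
    linarith
  have fpos : ∀ s, 0 < f s := fun s => lt_of_lt_of_le (by positivity) (flow s)
  have hmain : ∀ s, (α - 1) * f' s ^ 2 ≤ α * (f s * f'' s) := by
    intro s
    set r := ‖x + s • e‖ with hr
    have r0 : 0 ≤ r := norm_nonneg _
    have hf' : |f' s| ≤ ‖e‖ * (r + R) / (2 * t) := by
      have h1 : s * ‖e‖ ^ 2 + inner ℝ x e = inner ℝ (x + s • e) e := by
        rw [inner_add_left, real_inner_smul_left, real_inner_self_eq_norm_sq]; ring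
      have h2 := abs_real_inner_le_norm (x + s • e) e
      calc |f' s| ≤ |(s * ‖e‖ ^ 2 + inner ℝ x e) / (2 * t)| + |k' s| := abs_sub _ _
        _ ≤ r * ‖e‖ / (2 * t) + R * ‖e‖ / (2 * t) := by
            refine add_le_add ?_ (hb s)
            rw [h1, abs_div, abs_of_pos (by positivity : 0 < 2 * t)]
            exact div_le_div_of_nonneg_right h2 (by positivity)
        _ = _ := by ring
    have hf'2 : f' s ^ 2 ≤ (‖e‖ * (r + R) / (2 * t)) ^ 2 := sq_le_sq' (abs_le.1 hf').1 (abs_le.1 hf').2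
    have hδ : 0 < 1 - R ^ 2 / (2 * t) := by
      by_contra hcon
      have : α * (1 - R ^ 2 / (2 * t)) ≤ 0 :=
        mul_nonpos_of_nonneg_of_nonpos (by linarith) (not_lt.1 hcon)
      linarith
    have hf'' : ‖e‖ ^ 2 / (2 * t) * (1 - R ^ 2 / (2 * t)) ≤ f'' s := by
      have : ‖e‖ ^ 2 / (2 * t) * (1 - R ^ 2 / (2 * t))
        = ‖e‖ ^ 2 / (2 * t) - (R * ‖e‖ / (2 * t)) ^ 2 := by ring
      rw [this]
      exact sub_le_sub_left (hb' s) _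
    have hprod : ((r - R) ^ 2 + 4 * t * K) / (4 * t) *
        (‖e‖ ^ 2 / (2 * t) * (1 - R ^ 2 / (2 * t))) ≤ f s * f'' s :=
      mul_le_mul (flow s) hf'' (mul_nonneg (by positivity) hδ.le) (fpos s).le
    have hal := aux_alg α R t K r hα hα2 ht ht2 hK
    calc (α - 1) * f' s ^ 2 ≤ (α - 1) * (‖e‖ * (r + R) / (2 * t)) ^ 2 :=
          mul_le_mul_of_nonneg_left hf'2 (by linarith)
      _ = ‖e‖ ^ 2 / (8 * t ^ 2) * (2 * (α - 1) * (r + R) ^ 2) := by field_simp; ring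
      _ ≤ ‖e‖ ^ 2 / (8 * t ^ 2) * (α * (1 - R ^ 2 / (2 * t)) * ((r - R) ^ 2 + 4 * t * K)) :=
          mul_le_mul_of_nonneg_left hal (by positivity)
      _ = α * (((r - R) ^ 2 + 4 * t * K) / (4 * t) *
        (‖e‖ ^ 2 / (2 * t) * (1 - R ^ 2 / (2 * t)))) := by ring
      _ ≤ α * (f s * f'' s) := mul_le_mul_of_nonneg_left hprod (by linarith)
  have hcv := aux_rpow f f' f'' α hα d1 d2 fpos hmain
  have := hcv.2 (Set.mem_univ 0) (Set.mem_univ 1) (by linarith : 0 ≤ 1 - μ) hμ0 (by ring)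
  simp only [smul_eq_mul, mul_zero, mul_one, zero_add] at this
  rw [← fe, ← fe, ← fe] at this
  have e0 : x + (0 : ℝ) • e = x := by simp
  have e1 : x + (1 : ℝ) • e = y := by simp [he]
  have e2 : x + μ • e = (1 - μ) • x + μ • y := by rw [he, smul_sub, sub_smul, one_smul]; abel
  rw [e0, e1, e2] at this
  linarith

end Aux

/-- For compactly supported nontrivial initial data, `e^{tΔ}u₀` eventually
becomes `α`-logconcave for every `1 ≤ α < 2`. -/
theorem eventually_alpha_logconcave
    (N : ℕ) (hN : 1 ≤ N) (u₀ : EuclideanSpace ℝ (Fin N) → ℝ)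
    (hmeas : Measurable u₀) (h0 : ∀ x, 0 ≤ u₀ x) (hbd : ∃ M : ℝ, ∀ x, u₀ x ≤ M)
    (hsupp : HasCompactSupport u₀) (hint : 0 < ∫ y, u₀ y) :
    ∀ α : ℝ, 1 ≤ α → α < 2 →
      ∃ T : ℝ, 0 < T ∧ ∀ t : ℝ, T ≤ t →
        (∀ x, 0 < heatSol N u₀ t x ∧ heatSol N u₀ t x < 1) ∧
        ERealConcaveOn (fun x => Lfun α (heatSol N u₀ t x)) ∧
        AlphaLogConcave α (heatSol N u₀ t) := by
  intro α hα hα2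
  have hu : Integrable u₀ := by
    by_contra h
    rw [integral_undef h] at hint
    exact lt_irrefl _ hint
  obtain ⟨R, hR0, hR⟩ : ∃ R : ℝ, 0 ≤ R ∧ ∀ y, u₀ y ≠ 0 → ‖y‖ ≤ R := by
    obtain ⟨R, hR⟩ := hsupp.isCompact.isBounded.exists_norm_le
    refine ⟨max R 0, le_max_right _ _, fun y hy => (hR y ?_).trans (le_max_left _ _)⟩
    exact subset_tsupport _ hy
  set m := ∫ y, u₀ y with hm
  set M := 2 * (2 * α - 2) ^ 2 * R ^ 2 / ((2 - α) / 2) + 2 * (2 * α - 2) * R ^ 2 with hM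
  have E1 : ∀ᶠ t : ℝ in Filter.atTop, (3 * α - 2) / 2 ≤ α * (1 - R ^ 2 / (2 * t)) := by
    have : Filter.Tendsto (fun t : ℝ => α * (1 - R ^ 2 / (2 * t))) Filter.atTop
        (nhds (α * (1 - 0))) := by
      refine Filter.Tendsto.const_mul _ (Filter.Tendsto.const_sub _ ?_)
      exact Filter.Tendsto.const_div_atTop
        (Filter.Tendsto.const_mul_atTop (by norm_num) Filter.tendsto_id) _
    have h := this.eventually (lt_mem_nhds (by linarith : (3 * α - 2) / 2 < α * (1 - 0)))
    exact h.mono fun t ht => ht.le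
  have E2 : ∀ᶠ t : ℝ in Filter.atTop, 2 * (max M 1 + Real.log m + R ^ 2) ≤ Real.log t :=
    Real.tendsto_log_atTop.eventually_ge_atTop _
  obtain ⟨T, hT⟩ := Filter.eventually_atTop.1 (E1.and (E2.and (Filter.eventually_ge_atTop 1)))
  refine ⟨max T 1, by positivity, fun t htT => ?_⟩
  obtain ⟨ht2, htl, ht⟩ := hT t ((le_max_left _ _).trans htT)
  have t0 : 0 < t := by linarith
  have C0 : 0 < (4 * Real.pi * t) ^ (-(N : ℝ) / 2) := Real.rpow_pos_of_pos (by positivity) _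
  have hup : ∀ x, 0 < heatSol N u₀ t x := fun x => by
    rw [aux_heat]; exact mul_pos C0 (aux_w u₀ h0 hu hint t t0 x).2
  have hCl : Real.log t / 2 ≤ -Real.log ((4 * Real.pi * t) ^ (-(N : ℝ) / 2)) := by
    rw [Real.log_rpow (by positivity)]
    have h1 : Real.log t ≤ Real.log (4 * Real.pi * t) := by
      apply Real.log_le_log t0
      nlinarith [Real.pi_gt_three]
    have h2 : 0 ≤ Real.log t := Real.log_nonneg ht
    have h3 : (1 : ℝ) ≤ N := by exact_mod_cast hN
    nlinarith
  have hlow : ∀ x, ((‖x‖ - R) ^ 2 + 4 * t * (max M 1)) / (4 * t)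
      ≤ -Real.log (heatSol N u₀ t x) := by
    intro x
    have hw := (aux_w u₀ h0 hu hint t t0 x).2
    have h1 := Real.log_le_log hw (aux_upper u₀ h0 hu hint R hR t t0 x)
    rw [Real.log_mul (exp_pos _).ne' hint.ne', Real.log_exp] at h1
    rw [aux_heat, Real.log_mul C0.ne' hw.ne']
    have h2 : ((‖x‖ - R) ^ 2 + 4 * t * (max M 1)) / (4 * t) = (‖x‖ - R) ^ 2 / (4 * t) + max M 1 := by
      field_simp
    have h3 : -((‖x‖ - R) ^ 2 - R ^ 2) / (4 * t) = -((‖x‖ - R) ^ 2 / (4 * t)) + R ^ 2 / (4 * t) := by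
      ring
    have h4 : R ^ 2 / (4 * t) ≤ R ^ 2 := div_le_self (by positivity) (by linarith)
    rw [h2]
    linarith
  have hcon := aux_concave u₀ hmeas h0 hu hint R hR0 hR α hα hα2 t (max M 1) ht ht2
    (le_max_left _ _) (by positivity) hlow hup
  refine ⟨fun x => ⟨hup x, ?_⟩, ?_, 1, one_pos, fun κ h1 h2 => hcon κ h1 h2⟩
  · have h := hlow x
    have : 0 < ((‖x‖ - R) ^ 2 + 4 * t * (max M 1)) / (4 * t) := by positivity
    by_contra hc
    have := Real.log_nonneg (not_lt.1 hc)
    linarith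
  · simpa using hcon 1 one_pos le_rfl
end

section
/- Let α ≥ 1, let Ω be a convex set in ℝ^N, and let u : Ω → ℝ satisfy 0 ≤ u ≤ 1 on Ω. If the function x ↦ L_α(u(x)) is concave on Ω (as an (ℝ ∪ {-∞})-valued function), then for every κ with 0 < κ ≤ 1 the function x ↦ L_α(κ u(x)) is concave on Ω. -/
open MeasureTheory Real

theorem mink_aux (α : ℝ) (hα : 1 ≤ α) (a b c k μ : ℝ) (ha : 0 ≤ a) (hb : 0 ≤ b) (hc : 0 ≤ c)
    (hk : 0 ≤ k) (hμ0 : 0 ≤ μ) (hμ1 : μ ≤ 1)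
    (h : c ^ (1 / α) ≤ (1 - μ) * a ^ (1 / α) + μ * b ^ (1 / α)) :
    (c + k) ^ (1 / α) ≤ (1 - μ) * (a + k) ^ (1 / α) + μ * (b + k) ^ (1 / α) := by
  have hα0 : 0 < α := by linarith
  have hν : 0 ≤ 1 - μ := by linarith
  have inv : ∀ t : ℝ, 0 ≤ t → (t ^ (1 / α)) ^ α = t := by
    intro t ht
    rw [← Real.rpow_mul ht, one_div_mul_cancel hα0.ne', Real.rpow_one]
  have inv' : ∀ t : ℝ, 0 ≤ t → (t ^ α) ^ (1 / α) = t := by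
    intro t ht
    rw [← Real.rpow_mul ht, mul_one_div_cancel hα0.ne', Real.rpow_one]
  have key := Real.Lp_add_le_of_nonneg (s := (Finset.univ : Finset (Fin 2))) (p := α)
    (f := ![(1 - μ) * a ^ (1 / α), (1 - μ) * k ^ (1 / α)])
    (g := ![μ * b ^ (1 / α), μ * k ^ (1 / α)]) hα
    (by intro i _; fin_cases i <;> simp <;> positivity)
    (by intro i _; fin_cases i <;> simp <;> positivity)
  simp only [Fin.sum_univ_two, Matrix.cons_val_zero, Matrix.cons_val_one] at key
  have sc : ∀ m t : ℝ, 0 ≤ m → 0 ≤ t →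
      ((m * t ^ (1 / α)) ^ α + (m * k ^ (1 / α)) ^ α) ^ (1 / α) = m * (t + k) ^ (1 / α) := by
    intro m t hm ht
    rw [Real.mul_rpow hm (by positivity), Real.mul_rpow hm (by positivity), inv t ht, inv k hk,
      ← mul_add, Real.mul_rpow (by positivity) (by positivity), inv' m hm]
  rw [sc _ _ hν ha, sc _ _ hμ0 hb] at key
  refine le_trans ?_ key
  have e : (1 - μ) * k ^ (1 / α) + μ * k ^ (1 / α) = k ^ (1 / α) := by ring
  rw [e, inv k hk]
  have h2 : c ≤ ((1 - μ) * a ^ (1 / α) + μ * b ^ (1 / α)) ^ α := by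
    calc c = (c ^ (1 / α)) ^ α := (inv c hc).symm
      _ ≤ _ := Real.rpow_le_rpow (by positivity) h hα0.le
  exact Real.rpow_le_rpow (by positivity) (by linarith) (by positivity)

/-- Lemma 2.1: For `α ≥ 1`, if `L_α(u)` is concave on a convex set `Ω`
with `0 ≤ u ≤ 1`, then `L_α(κu)` is concave on `Ω` for every `0 < κ ≤ 1`. -/
theorem Lalpha_concave_of_scale
    (N : ℕ) (α : ℝ) (hα : 1 ≤ α) (Ω : Set (EuclideanSpace ℝ (Fin N)))
    (hΩ : Convex ℝ Ω) (u : EuclideanSpace ℝ (Fin N) → ℝ)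
    (h0 : ∀ x ∈ Ω, 0 ≤ u x) (h1 : ∀ x ∈ Ω, u x ≤ 1)
    (hconc : ERealConcaveOnSet Ω (fun x => Lfun α (u x))) :
    ∀ κ : ℝ, 0 < κ → κ ≤ 1 → ERealConcaveOnSet Ω (fun x => Lfun α (κ * u x)) := by
  intro κ hκ hκ1 x hx y hy μ hμ0 hμ1
  rcases hμ0.eq_or_lt with rfl | hμ0'
  · simp
  rcases hμ1.eq_or_lt with rfl | hμ1'
  · simp
  have hz : (1 - μ) • x + μ • y ∈ Ω := hΩ hx hy (by linarith) hμ0 (by ring)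
  have hc := hconc x hx y hy μ hμ0 hμ1
  have hν : 0 < 1 - μ := by linarith
  generalize (1 - μ) • x + μ • y = z at hz hc ⊢
  have hux0 := h0 x hx
  have huy0 := h0 y hy
  have huz0 := h0 z hz
  have hux1 := h1 x hx
  have huy1 := h1 y hy
  have huz1 := h1 z hz
  simp only [Lfun] at hc ⊢
  rcases hux0.eq_or_lt with hx0 | hx0
  · rw [← hx0, mul_zero, if_neg (lt_irrefl _), EReal.coe_mul_bot_of_pos hν]
    simp
  rcases huy0.eq_or_lt with hy0 | hy0
  · rw [← hy0, mul_zero, if_neg (lt_irrefl _), EReal.coe_mul_bot_of_pos hμ0']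
    simp
  rw [if_pos hx0, if_pos hy0, ← EReal.coe_mul, ← EReal.coe_mul, ← EReal.coe_add] at hc
  rcases huz0.eq_or_lt with hz0 | hz0
  · rw [← hz0, if_neg (lt_irrefl _)] at hc
    exact absurd (le_bot_iff.mp hc) (EReal.coe_ne_bot _)
  rw [if_pos hz0, EReal.coe_le_coe_iff] at hc
  rw [if_pos (mul_pos hκ hx0), if_pos (mul_pos hκ hy0), if_pos (mul_pos hκ hz0),
    ← EReal.coe_mul, ← EReal.coe_mul, ← EReal.coe_add, EReal.coe_le_coe_iff]
  have hl : ∀ t : ℝ, 0 < t → -Real.log (κ * t) = -Real.log t + -Real.log κ := by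
    intro t ht
    rw [Real.log_mul hκ.ne' ht.ne']; ring
  rw [hl _ hx0, hl _ hy0, hl _ hz0]
  have := mink_aux α hα (-Real.log (u x)) (-Real.log (u y)) (-Real.log (u z)) (-Real.log κ) μ
    (by linarith [Real.log_nonpos hux0 hux1]) (by linarith [Real.log_nonpos huy0 huy1])
    (by linarith [Real.log_nonpos huz0 huz1]) (by linarith [Real.log_nonpos hκ.le hκ1])
    hμ0 hμ1 (by linarith)
  linarith
end

section
/- Let Ω be a convex set in ℝ^N and u a bounded nonnegative function on Ω. If u is α-logconcave in Ω for some α > 0, then u is p-concave in Ω for every p < 0, i.e., for every p < 0 and all x,y ∈ ℝ^N with U(x)U(y) > 0 and μ ∈ [0,1], one has U((1-μ)x+μy) ≥ ((1-μ)U(x)^p + μU(y)^p)^{1/p}, where U is the zero extension of u. -/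
open MeasureTheory Real

theorem Lfun_aux (α a b c μ k : ℝ) (ha : 0 < a) (hb : 0 < b) (hk : 0 < k)
    (h : ((1 - μ : ℝ) : EReal) * Lfun α (k * a) + (μ : EReal) * Lfun α (k * b) ≤
      Lfun α (k * c)) :
    0 < c ∧ (-Real.log (k * c)) ^ (1 / α) ≤
      (1 - μ) * (-Real.log (k * a)) ^ (1 / α) + μ * (-Real.log (k * b)) ^ (1 / α) := by
  have h1 : 0 < k * a := mul_pos hk ha
  have h2 : 0 < k * b := mul_pos hk hb
  unfold Lfun at h
  rw [if_pos h1, if_pos h2, ← EReal.coe_mul, ← EReal.coe_mul, ← EReal.coe_add] at h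
  by_cases h3 : 0 < k * c
  · rw [if_pos h3, EReal.coe_le_coe_iff] at h
    exact ⟨(mul_pos_iff_of_pos_left hk).1 h3, by linarith⟩
  · rw [if_neg h3] at h
    exact absurd (le_bot_iff.1 h) (EReal.coe_ne_bot _)

theorem deriv_aux (q l : ℝ) : HasDerivAt (fun e : ℝ => (1 - e * l) ^ q) (-(q * l)) 0 := by
  have h1 : HasDerivAt (fun e : ℝ => 1 - e * l) (-l) 0 := by
    simpa using ((hasDerivAt_id (0 : ℝ)).mul_const l).const_sub 1
  have h2 := h1.rpow_const (p := q) (Or.inl (by simp))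
  convert h2 using 1
  simp
  ring

theorem log_aux (q la lb lc μ : ℝ) (hq : 0 < q)
    (h : ∀ᶠ e : ℝ in nhdsWithin 0 (Set.Ioi 0), (1 - e * lc) ^ q ≤
      (1 - μ) * (1 - e * la) ^ q + μ * (1 - e * lb) ^ q) :
    (1 - μ) * la + μ * lb ≤ lc := by
  have hd := (((deriv_aux q la).const_mul (1 - μ)).add ((deriv_aux q lb).const_mul μ)).sub
    (deriv_aux q lc)
  have ht := (hasDerivWithinAt_iff_tendsto_slope' (s := Set.Ioi (0 : ℝ)) (by simp)).1
    (hd.hasDerivWithinAt (s := Set.Ioi 0))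
  have h0 := ge_of_tendsto (b := 0) ht (by
    filter_upwards [h, self_mem_nhdsWithin] with e he he0
    have he0 : 0 < e := he0
    simp only [slope_def_field, Pi.add_apply, Pi.sub_apply]
    apply div_nonneg
    · simp
      linarith
    · linarith)
  have : q * ((1 - μ) * la + μ * lb) ≤ q * lc := by linarith
  exact le_of_mul_le_mul_left this hq

theorem ev_aux (l : ℝ) : ∀ᶠ e : ℝ in nhdsWithin 0 (Set.Ioi 0), 0 ≤ 1 - e * l := by
  have : ContinuousAt (fun e : ℝ => 1 - e * l) 0 := by fun_prop
  have h := this.eventually (lt_mem_nhds (a := (0:ℝ)) (by simp))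
  filter_upwards [h.filter_mono nhdsWithin_le_nhds] with e he using he.le

theorem exp_aux (q e a : ℝ) (he : 0 < e) (ha : 0 < a) (h : 0 ≤ 1 - e * Real.log a) :
    (-Real.log (Real.exp (-e⁻¹) * a)) ^ q = (e⁻¹) ^ q * (1 - e * Real.log a) ^ q := by
  rw [← Real.mul_rpow (by positivity) h, Real.log_mul (Real.exp_ne_zero _) ha.ne', Real.log_exp]
  congr 1
  field_simp
  ring

theorem geom_aux (α a b c μ k0 : ℝ) (hα : 0 < α) (ha : 0 < a) (hb : 0 < b) (hk0 : 0 < k0)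
    (h : ∀ k, 0 < k → k ≤ k0 →
      ((1 - μ : ℝ) : EReal) * Lfun α (k * a) + (μ : EReal) * Lfun α (k * b) ≤ Lfun α (k * c)) :
    0 < c ∧ (1 - μ) * Real.log a + μ * Real.log b ≤ Real.log c := by
  have hc := (Lfun_aux α a b c μ k0 ha hb hk0 (h k0 hk0 le_rfl)).1
  refine ⟨hc, log_aux (1 / α) _ _ _ μ (by positivity) ?_⟩
  have hk : ∀ᶠ e : ℝ in nhdsWithin 0 (Set.Ioi 0), Real.exp (-e⁻¹) < k0 :=
    (Real.tendsto_exp_neg_atTop_nhds_zero.comp tendsto_inv_nhdsGT_zero).eventually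
      (gt_mem_nhds hk0)
  filter_upwards [hk, ev_aux (Real.log a), ev_aux (Real.log b), ev_aux (Real.log c),
    self_mem_nhdsWithin] with e hk h1 h2 h3 he
  have he : 0 < e := he
  have := (Lfun_aux α a b c μ _ ha hb (Real.exp_pos _) (h _ (Real.exp_pos _) hk.le)).2
  rw [exp_aux _ _ _ he ha h1, exp_aux _ _ _ he hb h2, exp_aux _ _ _ he hc h3] at this
  have hp : 0 < (e⁻¹) ^ (1 / α) := by positivity
  refine le_of_mul_le_mul_left ?_ hp
  linarith

theorem final_aux (a b c μ p : ℝ) (hp : p < 0) (ha : 0 < a) (hb : 0 < b) (hc : 0 < c)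
    (h0 : 0 ≤ μ) (h1 : μ ≤ 1)
    (h : (1 - μ) * Real.log a + μ * Real.log b ≤ Real.log c) :
    ((1 - μ) * a ^ p + μ * b ^ p) ^ (1 / p) ≤ c := by
  have hg := Real.geom_mean_le_arith_mean2_weighted (sub_nonneg.2 h1) h0
    (Real.rpow_nonneg ha.le p) (Real.rpow_nonneg hb.le p) (by ring)
  have e1 : (a ^ p) ^ (1 - μ) * (b ^ p) ^ μ
      = Real.exp (p * ((1 - μ) * Real.log a + μ * Real.log b)) := by
    rw [← Real.rpow_mul ha.le, ← Real.rpow_mul hb.le, Real.rpow_def_of_pos ha,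
      Real.rpow_def_of_pos hb, ← Real.exp_add]
    congr 1
    ring
  have e2 : c ^ p ≤ (1 - μ) * a ^ p + μ * b ^ p := by
    refine le_trans ?_ hg
    rw [e1, Real.rpow_def_of_pos hc, Real.exp_le_exp]
    nlinarith
  have e3 := Real.rpow_le_rpow_of_nonpos (Real.rpow_pos_of_pos hc p) e2
    (one_div_neg.2 hp).le
  rwa [← Real.rpow_mul hc.le, mul_one_div_cancel hp.ne, Real.rpow_one] at e3

/-- Lemma 2.2 (ii): If `u` is `α`-logconcave in a convex set `Ω` for some
`α > 0`, then `u` is `p`-concave in `Ω` for every `p < 0`. -/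
theorem alpha_logconcave_implies_pconcave
    (N : ℕ) (Ω : Set (EuclideanSpace ℝ (Fin N))) (hΩ : Convex ℝ Ω)
    (u : EuclideanSpace ℝ (Fin N) → ℝ)
    (h0 : ∀ x ∈ Ω, 0 ≤ u x) (hbd : ∃ M : ℝ, ∀ x ∈ Ω, u x ≤ M)
    (α : ℝ) (hα : 0 < α) (hconc : AlphaLogConcave α (zeroExt Ω u)) :
    ∀ p : ℝ, p < 0 → ∀ x y : EuclideanSpace ℝ (Fin N), ∀ μ : ℝ, 0 ≤ μ → μ ≤ 1 →
      0 < zeroExt Ω u x * zeroExt Ω u y →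
      ((1 - μ) * zeroExt Ω u x ^ p + μ * zeroExt Ω u y ^ p) ^ (1 / p) ≤
        zeroExt Ω u ((1 - μ) • x + μ • y) := by
  intro p hp x y μ hμ0 hμ1 hxy
  have hn : ∀ x, 0 ≤ zeroExt Ω u x := fun x => Set.indicator_nonneg h0 x
  have ha : 0 < zeroExt Ω u x := pos_of_mul_pos_left hxy (hn y)
  have hb : 0 < zeroExt Ω u y := pos_of_mul_pos_right hxy (hn x)
  obtain ⟨k0, hk0, hk⟩ := hconc
  obtain ⟨hc, hl⟩ := geom_aux α _ _ (zeroExt Ω u ((1 - μ) • x + μ • y)) μ k0 hα ha hb hk0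
    (fun k h1 h2 => hk k h1 h2 x y μ hμ0 hμ1)
  exact final_aux _ _ _ μ p hp ha hb hc hμ0 hμ1 hl
end

section
/- Let N ≥ 1 and let F : [0,1] → ℝ ∪ {-∞} be admissible. Assume there exists t > 0 such that the Gauss kernel G(·,t) is F-concave in ℝ^N. Then every bounded nonnegative function u on ℝ^N that is 2-logconcave in ℝ^N is also F-concave in ℝ^N; that is, C[L₂] ⊆ C[F]. -/
open MeasureTheory Real

/-- Lemma 2.3, first part: If the Gauss kernel `G(·,t)` is `F`-concave in
`ℝ^N` for some `t > 0`, then every 2-logconcave function in `ℝ^N` is `F`-concave. -/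
theorem two_logconcave_implies_Fconcave
    (N : ℕ) (hN : 1 ≤ N) (F : ℝ → EReal) (hF : Admissible F)
    (hG : ∃ t : ℝ, 0 < t ∧ FConcave F (fun x => gauss N x t)) :
    ∀ u : EuclideanSpace ℝ (Fin N) → ℝ, FConcave (Lfun 2) u → FConcave F u := by
  intro u hu
  obtain ⟨t, ht, κ₁, hκ₁, hG⟩ := hG
  obtain ⟨κ₀, hκ₀, hu⟩ := hu
  obtain ⟨hmono, -, hF0, -⟩ := hF
  obtain ⟨hG1, hG2⟩ := hG κ₁ hκ₁ le_rfl
  set C : ℝ := (4 * Real.pi * t) ^ (-(N : ℝ) / 2) with hC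
  have hCpos : 0 < C := Real.rpow_pos_of_pos (by positivity) _
  set a : ℝ := κ₁ * C with ha
  have hapos : 0 < a := mul_pos hκ₁ hCpos
  have ha1 : a ≤ 1 := by
    have := (hG1 0).2
    simpa [gauss] using this
  let e : EuclideanSpace ℝ (Fin N) := EuclideanSpace.single ⟨0, hN⟩ 1
  have he : ‖e‖ = 1 := by simp [e]
  have hgs : ∀ r : ℝ, κ₁ * gauss N ((2 * √t * r) • e) t = a * Real.exp (-r ^ 2) := by
    intro r
    have h1 : -‖(2 * √t * r) • e‖ ^ 2 / (4 * t) = -r ^ 2 := by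
      rw [norm_smul, he, mul_one, Real.norm_eq_abs, sq_abs, mul_pow, mul_pow, Real.sq_sqrt ht.le]
      field_simp
      ring
    rw [gauss, h1, ha, hC, ← mul_assoc κ₁]
  refine ⟨κ₀ * a, by positivity, fun κ hκ hκle => ?_⟩
  have hl : κ / a ≤ κ₀ := by rwa [div_le_iff₀ hapos]
  obtain ⟨hb, hc⟩ := hu (κ / a) (by positivity) hl
  set l : ℝ := κ / a with hldef
  have hlpos : 0 < l := by positivity
  have hκl : κ = a * l := by rw [hldef]; field_simp
  have hκu : ∀ x, κ * u x = a * (l * u x) := fun x => by rw [hκl, mul_assoc]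
  refine ⟨fun x => ?_, fun x y μ h0 h1 => ?_⟩
  · rw [hκu]
    have := hb x
    exact ⟨mul_nonneg hapos.le this.1, mul_le_one₀ ha1 this.1 this.2⟩
  rcases h0.eq_or_lt with rfl | h0
  · simp
  rcases h1.eq_or_lt with rfl | h1
  · simp
  rcases (hb x).1.eq_or_lt with hx | hx
  · rw [hκu x, ← hx, mul_zero, hF0, EReal.coe_mul_bot_of_pos (by linarith), EReal.bot_add]
    exact bot_le
  rcases (hb y).1.eq_or_lt with hy | hy
  · rw [hκu y, ← hy, mul_zero, hF0, EReal.coe_mul_bot_of_pos h0, EReal.add_bot]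
    exact bot_le
  have hcz := hc x y μ h0.le h1.le
  set z := (1 - μ) • x + μ • y with hz
  have hzpos : 0 < l * u z := by
    by_contra hn
    simp only [Lfun, if_pos hx, if_pos hy, if_neg hn] at hcz
    rw [← EReal.coe_mul, ← EReal.coe_mul, ← EReal.coe_add] at hcz
    exact absurd hcz (not_le.2 (EReal.bot_lt_coe _))
  simp only [Lfun, if_pos hx, if_pos hy, if_pos hzpos] at hcz
  rw [← EReal.coe_mul, ← EReal.coe_mul, ← EReal.coe_add, EReal.coe_le_coe_iff,
    ← Real.sqrt_eq_rpow, ← Real.sqrt_eq_rpow, ← Real.sqrt_eq_rpow] at hcz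
  have hrep : ∀ w, 0 < l * u w → κ * u w = a * Real.exp (-(√(-Real.log (l * u w))) ^ 2) := by
    intro w hw
    have : Real.log (l * u w) ≤ 0 := Real.log_nonpos hw.le (hb w).2
    rw [Real.sq_sqrt (by linarith), neg_neg, Real.exp_log hw, hκu]
  set p := √(-Real.log (l * u x))
  set q := √(-Real.log (l * u y))
  set r := √(-Real.log (l * u z)) with hr
  have hr0 : 0 ≤ r := Real.sqrt_nonneg _
  have hrle : r ≤ (1 - μ) * p + μ * q := by linarith
  have key := hG2 ((2 * √t * p) • e) ((2 * √t * q) • e) μ h0.le h1.le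
  have hcomb : (1 - μ) • ((2 * √t * p) • e) + μ • ((2 * √t * q) • e)
      = (2 * √t * ((1 - μ) * p + μ * q)) • e := by
    rw [smul_smul, smul_smul, ← add_smul]
    congr 1
    ring
  simp only [hcomb, hgs] at key
  rw [hrep x hx, hrep y hy, hrep z hzpos]
  refine key.trans ?_
  have hmem : ∀ s : ℝ, a * Real.exp (-s ^ 2) ∈ Set.Ioc (0 : ℝ) 1 := fun s =>
    ⟨by positivity, mul_le_one₀ ha1 (Real.exp_pos _).le
      (Real.exp_le_one_iff.2 (by nlinarith [sq_nonneg s]))⟩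
  refine hmono.monotoneOn (hmem _) (hmem _) ?_
  have : r ^ 2 ≤ ((1 - μ) * p + μ * q) ^ 2 := pow_le_pow_left₀ hr0 hrle 2
  gcongr
end
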